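/- arXiv:1503.05863 — 2 statements merged into one kernel-verified Lean document; each statement's English description precedes it below -/
import Mathlib

section
/- Let d ≥ 1, 2 ≤ p < ∞, and k = 2d(1/2 − 1/p). There exists a constant C > 0 such that for every 0 < ℏ ≤ 1 and every Schwartz function f on ℝ^d: ‖V_g(D_{ℏ^{−1/2}} f)‖_{L^p(ℝ^{2d})} ≤ C·ℏ^{d(1/2−1/p)/2}·‖f‖_{L^p(ℝ^d)} and ‖(1−ℏΔ)^{−k/2} f‖_{L^p(ℝ^d)} ≤ C·ℏ^{d(1/p−1/2)/2}·‖V_g(D_{ℏ^{−1/2}} f)‖_{L^p(ℝ^{2d})}. -/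
open MeasureTheory Complex Real
open scoped ENNReal RealInnerProductSpace

noncomputable section

abbrev E (d : ℕ) : Type := EuclideanSpace ℝ (Fin d)

/-- Phase space `ℝ^{2d} = ℝ^d × ℝ^d`. -/
abbrev P (d : ℕ) : Type := E d × E d

/-- The complex conjugate of the wave packet `π(z)g`, Gaussian window `g(y)=exp(-|y|²/2)`. -/
def pkbar (d : ℕ) (z : P d) (y : E d) : ℂ :=
  Complex.exp (-Complex.I * (⟪y, z.2⟫ : ℂ)) * Real.exp (-‖y - z.1‖ ^ 2 / 2)

/-- The short-time Fourier transform with Gaussian window. -/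
def stft (d : ℕ) (u : E d → ℂ) (z : P d) : ℂ := ∫ y, u y * pkbar d z y

/-- The Fourier transform `ℱu(ξ) = ∫ exp(-i x·ξ) u(x) dx`. -/
def FT (d : ℕ) (u : E d → ℂ) (ξ : E d) : ℂ :=
  ∫ x, Complex.exp (-Complex.I * (⟪x, ξ⟫ : ℂ)) * u x

/-- The semiclassical Bessel potential `(1-ℏΔ)^{k/2} u = ℱ⁻¹((1+ℏ|ξ|²)^{k/2} ℱu)`. -/
def besselh (d : ℕ) (h k : ℝ) (u : E d → ℂ) (x : E d) : ℂ :=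
  (((2 * π) ^ d : ℝ) : ℂ)⁻¹ *
    ∫ ξ, Complex.exp (Complex.I * (⟪x, ξ⟫ : ℂ)) *
      (((1 + h * ‖ξ‖ ^ 2) ^ (k / 2) : ℝ) : ℂ) * FT d u ξ

/-- The dilation `D_{ℏ^{-1/2}} u (x) = ℏ^{d/4}·u(ℏ^{1/2} x)`. -/
def dil (d : ℕ) (h : ℝ) (u : E d → ℂ) (x : E d) : ℂ :=
  (h ^ ((d : ℝ) / 4) : ℝ) * u ((h ^ ((1 : ℝ) / 2) : ℝ) • x)

open scoped NNReal FourierTransform ComplexConjugate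

/-
The dilation `D_{ℏ^{-1/2}}` conjugates `1 - ℏΔ` to `1 - Δ` and rescales the `L^p` norm, so
everything reduces to `ℏ = 1`.

First embedding: for fixed `x`, `V_g u (x, ·)` is the Fourier transform of `u g(· - x)`. Plancherel
and the trivial `L^1 → L^∞` bound, followed by Hölder against the finite measure `g(y - x) dy`,
bound its `L^p` norm by the integral of `|u|^p` against `g(· - x)`, which is then integrated in `x`.

Second embedding: by duality one pairs `(1 - Δ)^{-k/2} u` with `φ ∈ L^r`, where `1/p + 1/r = 1`, and
writes the Bessel potential as an average of `exp (tΔ)` over the Gamma distribution. Inserting a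
product of two Gaussian windows centred at `x` and integrating over `x` reproduces the heat kernel,
so the heat pairing is dominated by `∫ |V_{g'} φ| |V_g u| exp (-s|ξ|²)`. Averaging in `t` turns the
last factor into `(1 + |ξ|²)^{-k/2}`, and by Hölder it remains to bound `V_{g'} φ` with this weight
in `L^r`. On each fibre that is Paley's inequality `‖|ξ|^{d(1-2/r)} ℱφ‖_r ≤ C ‖φ‖_r`, `1 < r < 2`:
Marcinkiewicz interpolation for `φ ↦ |ξ|^d ℱφ` with respect to the measure `|ξ|^{-2d} dξ`. For
`p = 2` Plancherel and Moyal's identity replace it.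
-/

section Plancherel

variable {V F : Type*} [NormedAddCommGroup V] [InnerProductSpace ℝ V] [FiniteDimensional ℝ V]
  [MeasurableSpace V] [BorelSpace V] [NormedAddCommGroup F] [InnerProductSpace ℂ F]

theorem continuous_fourier {f : V → F} (hf : Integrable f) : Continuous (𝓕 f) :=
  VectorFourier.fourierIntegral_continuous Real.continuous_fourierChar
    (innerSL ℝ).continuous₂ hf

variable [CompleteSpace F]

theorem coeFn_fourier_toLp {f : V → F} (hf : Integrable f) (hf2 : MemLp f 2) :
    (𝓕 (hf2.toLp f) : Lp F 2 (volume : Measure V)) =ᵐ[volume] 𝓕 f := by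
  refine ae_eq_of_integral_contDiff_smul_eq ((Lp.memLp _).locallyIntegrable one_le_two)
    (continuous_fourier hf).locallyIntegrable fun g hg hgc => ?_
  let φ : SchwartzMap V ℂ := HasCompactSupport.toSchwartzMap (f := Complex.ofRealCLM ∘ g)
    (hgc.comp_left rfl) (by fun_prop)
  have hφ : ∀ x, φ x = g x := fun x => rfl
  have hLp : ∫ x, 𝓕 φ x • hf2.toLp f x =
      ∫ x, φ x • (𝓕 (hf2.toLp f) : Lp F 2 (volume : Measure V)) x := by
    have h := DFunLike.congr_fun (Lp.fourier_toTemperedDistribution_eq (hf2.toLp f)) φ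
    simpa only [TemperedDistribution.fourier_apply,
      Lp.toTemperedDistribution_apply (μ := (volume : Measure V))] using h
  calc ∫ x, g x • (𝓕 (hf2.toLp f) : Lp F 2 (volume : Measure V)) x
      = ∫ x, 𝓕 φ x • hf2.toLp f x := by simp [hLp, hφ]
    _ = ∫ x, 𝓕 φ x • f x :=
      integral_congr_ae (hf2.coeFn_toLp.mono fun x hx => by simp only [hx])
    _ = ∫ x, φ x • 𝓕 f x := by
      have h := VectorFourier.integral_fourierIntegral_smul_eq_flip (L := innerₗ V)
        Real.continuous_fourierChar continuous_inner (φ.integrable (μ := volume)) hf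
      rw [flip_innerₗ] at h
      rw [SchwartzMap.fourier_coe]
      exact h
    _ = ∫ x, g x • 𝓕 f x := by simp [hφ]

theorem eLpNorm_fourier_two_eq {f : V → F} (hf : Integrable f) (hf2 : MemLp f 2) :
    eLpNorm (𝓕 f) 2 = eLpNorm f 2 := by
  rw [← eLpNorm_congr_ae (coeFn_fourier_toLp hf hf2), ← eLpNorm_congr_ae hf2.coeFn_toLp,
    ← Lp.enorm_def, ← Lp.enorm_def, ← ofReal_norm, ← ofReal_norm, Lp.norm_fourier_eq]

end Plancherel

theorem lintegral_comp_smul {V : Type*} [NormedAddCommGroup V] [NormedSpace ℝ V]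
    [FiniteDimensional ℝ V] [MeasurableSpace V] [BorelSpace V] (μ : Measure V)
    [μ.IsAddHaarMeasure] (G : V → ℝ≥0∞) {c : ℝ} (hc : c ≠ 0) :
    ∫⁻ x, G (c • x) ∂μ = ENNReal.ofReal |(c ^ Module.finrank ℝ V)⁻¹| * ∫⁻ x, G x ∂μ := by
  rw [← smul_eq_mul, ← lintegral_smul_measure, ← Measure.map_addHaar_smul μ hc]
  exact (lintegral_map_equiv G (Homeomorph.smulOfNeZero c hc).toMeasurableEquiv).symm

section FT

variable {d : ℕ} {u v : E d → ℂ}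

theorem FT_eq_fourierIntegral (u : E d → ℂ) :
    FT d u = VectorFourier.fourierIntegral Real.probChar volume (innerₗ (E d)) u := by
  ext ξ
  simp only [FT, VectorFourier.fourierIntegral_probChar, smul_eq_mul, innerₗ_apply_apply]
  congr! 4
  ring

theorem FT_eq_fourier (u : E d → ℂ) (ξ : E d) : FT d u ξ = 𝓕 u ((2 * π)⁻¹ • ξ) := by
  simp only [FT, Real.fourier_eq', smul_eq_mul, real_inner_smul_right]
  congr! 4
  push_cast
  field_simp

theorem continuous_FT (hu : Integrable u) : Continuous (FT d u) := by
  rw [FT_eq_fourierIntegral]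
  exact VectorFourier.fourierIntegral_continuous Real.continuous_probChar
    (innerSL ℝ).continuous₂ hu

theorem enorm_FT_le (u : E d → ℂ) (ξ : E d) : ‖FT d u ξ‖ₑ ≤ ∫⁻ x, ‖u x‖ₑ := by
  refine (enorm_integral_le_lintegral_enorm _).trans_eq (lintegral_congr fun x => ?_)
  rw [enorm_mul, ← ofReal_norm (Complex.exp _), Complex.norm_exp]
  simp

theorem integral_FT_mul (hu : Integrable u) (hv : Integrable v) :
    ∫ ξ, FT d u ξ * v ξ = ∫ x, u x * FT d v x := by
  have h := VectorFourier.integral_fourierIntegral_smul_eq_flip (L := innerₗ (E d))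
    Real.continuous_probChar continuous_inner hu hv
  rw [flip_innerₗ] at h
  simpa only [FT_eq_fourierIntegral, smul_eq_mul] using h

theorem lintegral_enorm_FT_sq_eq (hu : Integrable u) (hu2 : MemLp u 2) :
    ∫⁻ ξ, ‖FT d u ξ‖ₑ ^ (2 : ℝ) = ENNReal.ofReal (2 * π) ^ d * ∫⁻ x, ‖u x‖ₑ ^ (2 : ℝ) := by
  have h := eLpNorm_fourier_two_eq hu hu2
  simp only [eLpNorm_eq_lintegral_rpow_enorm_toReal two_ne_zero ENNReal.ofNat_ne_top,
    ENNReal.toReal_ofNat] at h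
  simp only [FT_eq_fourier]
  rw [lintegral_comp_smul volume (fun ξ => ‖𝓕 u ξ‖ₑ ^ (2 : ℝ)) (by positivity),
    ENNReal.rpow_left_injective (by norm_num) h, finrank_euclideanSpace_fin, inv_pow, inv_inv,
    abs_of_pos (by positivity), ENNReal.ofReal_pow (by positivity)]

theorem lintegral_enorm_FT_sq_le (hu : Integrable u) :
    ∫⁻ ξ, ‖FT d u ξ‖ₑ ^ (2 : ℝ) ≤ ENNReal.ofReal (2 * π) ^ d * ∫⁻ x, ‖u x‖ₑ ^ (2 : ℝ) := by
  by_cases htop : ∫⁻ x, ‖u x‖ₑ ^ (2 : ℝ) = ∞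
  · rw [htop, ENNReal.mul_top (by positivity)]
    exact le_top
  · refine (lintegral_enorm_FT_sq_eq hu ⟨hu.aestronglyMeasurable, ?_⟩).le
    rw [eLpNorm_lt_top_iff_lintegral_rpow_enorm_lt_top two_ne_zero ENNReal.ofNat_ne_top]
    simpa using lt_top_iff_ne_top.2 htop

end FT

section Gaussian

variable {V : Type*} [NormedAddCommGroup V] {b c : ℝ}

/-- The Gaussian `exp (-b‖y‖²)`. -/
def gaussian (b : ℝ) (y : V) : ℝ := Real.exp (-b * ‖y‖ ^ 2)

theorem continuous_gaussian (b : ℝ) : Continuous (gaussian b : V → ℝ) := by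
  unfold gaussian
  fun_prop

theorem gaussian_nonneg (b : ℝ) (y : V) : 0 ≤ gaussian b y := (Real.exp_pos _).le

theorem gaussian_le_one (hb : 0 ≤ b) (y : V) : gaussian b y ≤ 1 :=
  Real.exp_le_one_iff.2 (by nlinarith [sq_nonneg ‖y‖])

theorem gaussian_le_gaussian (hbc : b ≤ c) (y : V) : gaussian c y ≤ gaussian b y := by
  unfold gaussian
  gcongr

theorem gaussian_neg (b : ℝ) (y : V) : gaussian b (-y) = gaussian b y := by
  simp only [gaussian, norm_neg]

theorem gaussian_rpow (b s : ℝ) (y : V) : gaussian b y ^ s = gaussian (b * s) y := by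
  rw [gaussian, gaussian, ← Real.exp_mul]
  ring_nf

theorem gaussian_mul_gaussian (b c : ℝ) (y : V) :
    gaussian b y * gaussian c y = gaussian (b + c) y := by
  rw [gaussian, gaussian, gaussian, ← Real.exp_add]
  ring_nf

theorem enorm_ofReal_gaussian (b : ℝ) (y : V) :
    ‖(gaussian b y : ℂ)‖ₑ = ENNReal.ofReal (gaussian b y) := by
  rw [← ofReal_norm, Complex.norm_of_nonneg (gaussian_nonneg b y)]

variable [InnerProductSpace ℝ V]

theorem gaussian_sub_mul_gaussian_sub (hbc : b + c ≠ 0) (x y z : V) :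
    gaussian b (y - x) * gaussian c (z - x) =
      gaussian (b * c / (b + c)) (y - z) * gaussian (b + c) (x - (b + c)⁻¹ • (b • y + c • z)) := by
  have hx : x - (b + c)⁻¹ • (b • y + c • z) = (b + c)⁻¹ • (-(b • (y - x) + c • (z - x))) := by
    rw [eq_inv_smul_iff₀ hbc]
    simp only [smul_sub, smul_inv_smul₀ hbc, add_smul]
    abel
  have hyz : y - z = (y - x) - (z - x) := by abel
  rw [hx, hyz]
  simp only [gaussian, ← Real.exp_add, norm_smul, mul_pow, norm_neg, Real.norm_eq_abs, sq_abs,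
    norm_sub_sq_real, norm_add_sq_real, real_inner_smul_left, real_inner_smul_right]
  congr 1
  field_simp
  ring

variable [FiniteDimensional ℝ V] [MeasurableSpace V] [BorelSpace V]

theorem integrable_gaussian (hb : 0 < b) : Integrable (gaussian b : V → ℝ) := by
  refine (GaussianFourier.integrable_cexp_neg_mul_sq_norm_add (V := V) (b := b) (by simpa)
    0 0).norm.congr (ae_of_all _ fun y => ?_)
  simp [gaussian, Complex.norm_exp, ← Complex.ofReal_pow]

theorem integral_gaussian_eq (hb : 0 < b) :
    ∫ y : V, gaussian b y = (π / b) ^ ((Module.finrank ℝ V : ℝ) / 2) :=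
  GaussianFourier.integral_rexp_neg_mul_sq_norm hb

theorem lintegral_gaussian_sub (hb : 0 < b) (x : V) :
    ∫⁻ y : V, ENNReal.ofReal (gaussian b (y - x)) =
      ENNReal.ofReal ((π / b) ^ ((Module.finrank ℝ V : ℝ) / 2)) := by
  rw [lintegral_sub_right_eq_self (fun y => ENNReal.ofReal (gaussian b y)) x,
    ← ofReal_integral_eq_lintegral_ofReal (integrable_gaussian hb)
      (ae_of_all _ (gaussian_nonneg b)), integral_gaussian_eq hb]

theorem lintegral_lintegral_mul_gaussian (hb : 0 < b) {F : V → ℝ≥0∞}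
    (hF : AEMeasurable F) :
    ∫⁻ x : V, ∫⁻ y : V, ENNReal.ofReal (gaussian b (y - x)) * F y =
      ENNReal.ofReal ((π / b) ^ ((Module.finrank ℝ V : ℝ) / 2)) * ∫⁻ y, F y := by
  have hg : Continuous (gaussian b : V → ℝ) := continuous_gaussian b
  have hmeas : Measurable fun z : V × V => ENNReal.ofReal (gaussian b (z.2 - z.1)) :=
    (hg.comp (continuous_snd.sub continuous_fst)).measurable.ennreal_ofReal
  have hmeas_sub : ∀ y, Measurable fun x : V => ENNReal.ofReal (gaussian b (y - x)) := fun y =>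
    (hg.comp (continuous_const.sub continuous_id)).measurable.ennreal_ofReal
  rw [lintegral_lintegral_swap (hmeas.aemeasurable.mul hF.comp_snd), ← lintegral_const_mul'' _ hF]
  refine lintegral_congr fun y => ?_
  rw [lintegral_mul_const _ (hmeas_sub y), ← lintegral_gaussian_sub hb y]
  simp only [← gaussian_neg b (y - _), neg_sub]

theorem integrable_gaussian_sub_mul_gaussian_sub (hbc : 0 < b + c) (y z : V) :
    Integrable fun x => gaussian b (y - x) * gaussian c (z - x) := by
  simp only [gaussian_sub_mul_gaussian_sub hbc.ne']
  exact ((integrable_gaussian hbc).comp_sub_right _).const_mul _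

theorem integral_gaussian_sub_mul_gaussian_sub (hbc : 0 < b + c) (y z : V) :
    ∫ x, gaussian b (y - x) * gaussian c (z - x) =
      (π / (b + c)) ^ ((Module.finrank ℝ V : ℝ) / 2) * gaussian (b * c / (b + c)) (y - z) := by
  simp only [gaussian_sub_mul_gaussian_sub hbc.ne']
  rw [integral_const_mul, integral_sub_right_eq_self (gaussian (b + c)), integral_gaussian_eq hbc,
    mul_comm]

theorem integrable_mul_gaussian (hb : 0 ≤ b) {φ : V → ℂ} (hφ : Integrable φ) (x : V) :
    Integrable fun y => φ y * (gaussian b (y - x) : ℂ) := by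
  refine hφ.mul_bdd (c := 1) ?_ (ae_of_all _ fun y => ?_)
  · exact (Complex.continuous_ofReal.comp
      ((continuous_gaussian b).comp (continuous_id.sub continuous_const))).aestronglyMeasurable
  · simpa [abs_of_nonneg (gaussian_nonneg b _)] using gaussian_le_one hb (y - x)

end Gaussian

section GaussSTFT

variable {d : ℕ} {b p : ℝ} {φ : E d → ℂ}

/-- The short-time Fourier transform with the Gaussian window `exp (-b‖y‖²)`; the transform `stft`
of the theorem has `b = 1 / 2`. -/
def gaussSTFT (d : ℕ) (b : ℝ) (φ : E d → ℂ) (z : P d) : ℂ :=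
  FT d (fun y => φ y * (gaussian b (y - z.1) : ℂ)) z.2

theorem stft_eq_gaussSTFT (u : E d → ℂ) : stft d u = gaussSTFT d (1 / 2) u := by
  ext z
  refine integral_congr_ae (ae_of_all _ fun y => ?_)
  simp only [pkbar, gaussian]
  rw [show -‖y - z.1‖ ^ 2 / 2 = -(1 / 2) * ‖y - z.1‖ ^ 2 by ring]
  ring

theorem continuous_gaussSTFT (hb : 0 ≤ b) (hφ : Integrable φ) : Continuous (gaussSTFT d b φ) := by
  refine continuous_of_dominated (bound := fun y => ‖φ y‖) (fun z => ?_)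
    (fun z => ae_of_all _ fun y => ?_) hφ.norm (ae_of_all _ fun y => ?_)
  · exact (Continuous.aestronglyMeasurable (by fun_prop)).mul
      (integrable_mul_gaussian hb hφ z.1).aestronglyMeasurable
  · have hexp : ‖Complex.exp (-Complex.I * (⟪y, z.2⟫ : ℂ))‖ = 1 := by simp [Complex.norm_exp]
    rw [norm_mul, hexp, one_mul, norm_mul, Complex.norm_of_nonneg (gaussian_nonneg b _)]
    exact mul_le_of_le_one_right (norm_nonneg _) (gaussian_le_one hb _)
  · unfold gaussian
    fun_prop

theorem lintegral_enorm_FT_rpow_le (hp : 2 ≤ p) (hφ : Integrable φ) :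
    ∫⁻ ξ, ‖FT d φ ξ‖ₑ ^ p ≤
      ENNReal.ofReal (2 * π) ^ d * ((∫⁻ y, ‖φ y‖ₑ) ^ (p - 2) * ∫⁻ y, ‖φ y‖ₑ ^ (2 : ℝ)) := by
  calc ∫⁻ ξ, ‖FT d φ ξ‖ₑ ^ p
      ≤ ∫⁻ ξ, (∫⁻ y, ‖φ y‖ₑ) ^ (p - 2) * ‖FT d φ ξ‖ₑ ^ (2 : ℝ) := by
        refine lintegral_mono fun ξ => ?_
        rw [← sub_add_cancel p 2, ENNReal.rpow_add_of_nonneg _ _ (sub_nonneg.2 hp) zero_le_two,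
          sub_add_cancel]
        gcongr
        exact enorm_FT_le φ ξ
    _ = (∫⁻ y, ‖φ y‖ₑ) ^ (p - 2) * ∫⁻ ξ, ‖FT d φ ξ‖ₑ ^ (2 : ℝ) :=
        lintegral_const_mul _ (by have := (continuous_FT hφ).measurable; fun_prop)
    _ ≤ _ := by
        rw [mul_left_comm]
        gcongr
        exact lintegral_enorm_FT_sq_le hφ

theorem lintegral_enorm_rpow_mul_sq_le {α : Type*} [MeasurableSpace α] {ν : Measure α}
    {f : α → ℂ} (hp : 2 ≤ p) (hf : AEStronglyMeasurable f ν) :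
    (∫⁻ y, ‖f y‖ₑ ∂ν) ^ (p - 2) * ∫⁻ y, ‖f y‖ₑ ^ (2 : ℝ) ∂ν ≤
      ν Set.univ ^ (p - 2) * ∫⁻ y, ‖f y‖ₑ ^ p ∂ν := by
  have hp0 : 0 < p := by linarith
  have hrpow : ∀ {q : ℝ}, 0 < q → ∫⁻ y, ‖f y‖ₑ ^ q ∂ν = eLpNorm' f q ν ^ q := fun hq => by
    rw [eLpNorm', ← ENNReal.rpow_mul, one_div_mul_cancel hq.ne', ENNReal.rpow_one]
  have hone : ∫⁻ y, ‖f y‖ₑ ∂ν = eLpNorm' f 1 ν := by simp [eLpNorm']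
  have hexp : 0 ≤ (1 / 1 - 1 / p) * (p - 2) := by
    have : 1 / p ≤ 1 := by rw [div_le_one hp0]; linarith
    nlinarith
  have hexp' : 0 ≤ (1 / 2 - 1 / p) * 2 := by
    have : 1 / p ≤ 1 / 2 := one_div_le_one_div_of_le two_pos hp
    linarith
  calc (∫⁻ y, ‖f y‖ₑ ∂ν) ^ (p - 2) * ∫⁻ y, ‖f y‖ₑ ^ (2 : ℝ) ∂ν
      ≤ (eLpNorm' f p ν * ν Set.univ ^ (1 / 1 - 1 / p)) ^ (p - 2) *
          (eLpNorm' f p ν * ν Set.univ ^ (1 / 2 - 1 / p)) ^ (2 : ℝ) := by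
        rw [hone, hrpow two_pos]
        gcongr
        · exact eLpNorm'_le_eLpNorm'_mul_rpow_measure_univ one_pos (by linarith) hf
        · exact eLpNorm'_le_eLpNorm'_mul_rpow_measure_univ two_pos hp hf
    _ = ν Set.univ ^ ((1 / 1 - 1 / p) * (p - 2) + (1 / 2 - 1 / p) * 2) *
          eLpNorm' f p ν ^ (p - 2 + 2) := by
        rw [ENNReal.mul_rpow_of_nonneg _ _ (sub_nonneg.2 hp),
          ENNReal.mul_rpow_of_nonneg _ _ zero_le_two, ← ENNReal.rpow_mul, ← ENNReal.rpow_mul,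
          ENNReal.rpow_add_of_nonneg _ _ hexp hexp',
          ENNReal.rpow_add_of_nonneg _ _ (sub_nonneg.2 hp) zero_le_two]
        ring
    _ = ν Set.univ ^ (p - 2) * ∫⁻ y, ‖f y‖ₑ ^ p ∂ν := by
        rw [hrpow hp0, sub_add_cancel]
        congr 2
        field_simp
        ring

theorem lintegral_gaussSTFT_fiber_rpow_le (hb : 0 < b) (hp : 2 ≤ p) (hφ : Integrable φ)
    (x : E d) :
    ∫⁻ ξ, ‖gaussSTFT d b φ (x, ξ)‖ₑ ^ p ≤
      ENNReal.ofReal (2 * π) ^ d * ENNReal.ofReal ((π / b) ^ ((d : ℝ) / 2)) ^ (p - 2) *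
        ∫⁻ y, ENNReal.ofReal (gaussian b (y - x)) * ‖φ y‖ₑ ^ p := by
  set g : E d → ℝ≥0∞ := fun y => ENNReal.ofReal (gaussian b (y - x))
  have hg : Measurable g :=
    ((continuous_gaussian b).comp (continuous_id.sub continuous_const)).measurable.ennreal_ofReal
  have hg1 : ∀ y, g y ≤ 1 := fun y => ENNReal.ofReal_le_one.2 (gaussian_le_one hb.le _)
  have hν : ∀ q : ℝ, ∫⁻ y, ‖φ y‖ₑ ^ q ∂volume.withDensity g = ∫⁻ y, g y * ‖φ y‖ₑ ^ q := fun q =>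
    lintegral_withDensity_eq_lintegral_mul₀ hg.aemeasurable
      (hφ.aestronglyMeasurable.enorm.pow_const q)
  have hmass : volume.withDensity g Set.univ = ENNReal.ofReal ((π / b) ^ ((d : ℝ) / 2)) := by
    rw [withDensity_apply _ .univ, setLIntegral_univ, lintegral_gaussian_sub hb,
      finrank_euclideanSpace_fin]
  refine (lintegral_enorm_FT_rpow_le hp (integrable_mul_gaussian hb.le hφ x)).trans ?_
  rw [mul_assoc]
  gcongr ENNReal.ofReal (2 * π) ^ d * ?_
  calc _ ≤ (∫⁻ y, ‖φ y‖ₑ ∂volume.withDensity g) ^ (p - 2) *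
        ∫⁻ y, ‖φ y‖ₑ ^ (2 : ℝ) ∂volume.withDensity g := by
        have hν1 := hν 1
        simp only [ENNReal.rpow_one] at hν1
        rw [hν1, hν 2]
        gcongr with y y
        · rw [enorm_mul, enorm_ofReal_gaussian, mul_comm]
        · rw [enorm_mul, enorm_ofReal_gaussian, ENNReal.mul_rpow_of_nonneg _ _ zero_le_two,
            mul_comm]
          gcongr
          exact (ENNReal.rpow_le_rpow_of_exponent_ge (hg1 y) one_le_two).trans_eq
            (ENNReal.rpow_one _)
    _ ≤ _ := by
        rw [← hmass, ← hν p]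
        exact lintegral_enorm_rpow_mul_sq_le hp
          (hφ.aestronglyMeasurable.mono_ac (withDensity_absolutelyContinuous _ _))

theorem exists_eLpNorm'_gaussSTFT_le (hb : 0 < b) (hp : 2 ≤ p) :
    ∃ C : ℝ≥0, ∀ φ : E d → ℂ, Integrable φ →
      eLpNorm' (gaussSTFT d b φ) p volume ≤ C * eLpNorm' φ p volume := by
  obtain ⟨C, hC⟩ : ∃ C : ℝ≥0, (C : ℝ≥0∞) = ENNReal.ofReal (2 * π) ^ d *
      ENNReal.ofReal ((π / b) ^ ((d : ℝ) / 2)) ^ (p - 2) *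
        ENNReal.ofReal ((π / b) ^ ((d : ℝ) / 2)) :=
    ENNReal.canLift.prf _ (by finiteness)
  have hp0 : 0 ≤ 1 / p := by positivity
  refine ⟨C ^ (1 / p), fun φ hφ => ?_⟩
  rw [eLpNorm', eLpNorm', ENNReal.coe_rpow_of_nonneg _ hp0, ← ENNReal.mul_rpow_of_nonneg _ _ hp0]
  refine ENNReal.rpow_le_rpow ?_ hp0
  calc ∫⁻ z, ‖gaussSTFT d b φ z‖ₑ ^ p
      = ∫⁻ x, ∫⁻ ξ, ‖gaussSTFT d b φ (x, ξ)‖ₑ ^ p :=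
        lintegral_prod _ ((continuous_gaussSTFT hb.le hφ).enorm.measurable.pow_const p).aemeasurable
    _ ≤ ∫⁻ x, ENNReal.ofReal (2 * π) ^ d * ENNReal.ofReal ((π / b) ^ ((d : ℝ) / 2)) ^ (p - 2) *
          ∫⁻ y, ENNReal.ofReal (gaussian b (y - x)) * ‖φ y‖ₑ ^ p :=
        lintegral_mono (lintegral_gaussSTFT_fiber_rpow_le hb hp hφ)
    _ = C * ∫⁻ y, ‖φ y‖ₑ ^ p := by
        rw [lintegral_const_mul' _ _ (by finiteness), lintegral_lintegral_mul_gaussian hb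
          (hφ.aestronglyMeasurable.enorm.pow_const p), finrank_euclideanSpace_fin, hC]
        simp only [mul_assoc]

theorem lintegral_gaussSTFT_sq_eq (hb : 0 < b) (hφ : Integrable φ) (hφ2 : MemLp φ 2) :
    ∫⁻ z, ‖gaussSTFT d b φ z‖ₑ ^ (2 : ℝ) =
      ENNReal.ofReal (2 * π) ^ d * ENNReal.ofReal ((π / (2 * b)) ^ ((d : ℝ) / 2)) *
        ∫⁻ y, ‖φ y‖ₑ ^ (2 : ℝ) := by
  have hfiber : ∀ x, ∫⁻ ξ, ‖gaussSTFT d b φ (x, ξ)‖ₑ ^ (2 : ℝ) = ENNReal.ofReal (2 * π) ^ d *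
      ∫⁻ y, ENNReal.ofReal (gaussian (2 * b) (y - x)) * ‖φ y‖ₑ ^ (2 : ℝ) := fun x => by
    have hmem : MemLp (fun y => φ y * (gaussian b (y - x) : ℂ)) 2 := by
      refine hφ2.mono (integrable_mul_gaussian hb.le hφ x).aestronglyMeasurable
        (ae_of_all _ fun y => ?_)
      rw [norm_mul, Complex.norm_of_nonneg (gaussian_nonneg b _)]
      exact mul_le_of_le_one_right (norm_nonneg _) (gaussian_le_one hb.le _)
    refine (lintegral_enorm_FT_sq_eq (integrable_mul_gaussian hb.le hφ x) hmem).trans ?_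
    congr! 3 with y
    rw [enorm_mul, enorm_ofReal_gaussian, ENNReal.mul_rpow_of_nonneg _ _ zero_le_two, mul_comm,
      ENNReal.ofReal_rpow_of_nonneg (gaussian_nonneg b _) zero_le_two, gaussian_rpow, mul_comm b]
  calc ∫⁻ z, ‖gaussSTFT d b φ z‖ₑ ^ (2 : ℝ)
      = ∫⁻ x, ∫⁻ ξ, ‖gaussSTFT d b φ (x, ξ)‖ₑ ^ (2 : ℝ) :=
        lintegral_prod _ ((continuous_gaussSTFT hb.le hφ).enorm.measurable.pow_const _).aemeasurable
    _ = ENNReal.ofReal (2 * π) ^ d * ENNReal.ofReal ((π / (2 * b)) ^ ((d : ℝ) / 2)) *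
        ∫⁻ y, ‖φ y‖ₑ ^ (2 : ℝ) := by
        simp only [hfiber]
        rw [lintegral_const_mul' _ _ (by finiteness), lintegral_lintegral_mul_gaussian
          (by positivity) (hφ.aestronglyMeasurable.enorm.pow_const _), finrank_euclideanSpace_fin,
          mul_assoc]

end GaussSTFT

section InvNormMeasure

open Module

variable {V : Type*} [NormedAddCommGroup V] [InnerProductSpace ℝ V] [FiniteDimensional ℝ V]
  [MeasurableSpace V] [BorelSpace V]

/-- The measure `‖ξ‖ ^ (-2n) dξ` on a space of dimension `n`, for which the function `‖ξ‖ ^ n` is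
in weak `L¹`. -/
def invNormMeasure (V : Type*) [NormedAddCommGroup V] [InnerProductSpace ℝ V]
    [FiniteDimensional ℝ V] [MeasurableSpace V] [BorelSpace V] : Measure V :=
  volume.withDensity fun ξ => ENNReal.ofReal (‖ξ‖ ^ (-(2 * finrank ℝ V : ℝ)))

theorem lintegral_invNormMeasure {f : V → ℝ≥0∞} (hf : Measurable f) :
    ∫⁻ ξ, f ξ ∂invNormMeasure V =
      ∫⁻ ξ, ENNReal.ofReal (‖ξ‖ ^ (-(2 * finrank ℝ V : ℝ))) * f ξ :=
  lintegral_withDensity_eq_lintegral_mul _ (by fun_prop) hf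

theorem eqOn_pow_pred_smul_indicator_rpow {n : ℕ} (hn : 1 ≤ n) (R q : ℝ) :
    Set.EqOn (fun y : ℝ => y ^ (n - 1) • (Set.Ioi R).indicator (fun y => y ^ q) y)
      ((Set.Ioi R).indicator fun y => y ^ (q + n - 1)) (Set.Ioi 0) := fun y (hy : 0 < y) => by
  simp only [Set.indicator, smul_eq_mul, mul_ite, mul_zero]
  congr 1
  rw [← Real.rpow_natCast, ← Real.rpow_add hy, Nat.cast_sub hn]
  congr 1
  push_cast
  ring

variable [Nontrivial V] {R q : ℝ}

theorem integrableOn_norm_rpow_of_lt (hR : 0 < R) (hq : q < -finrank ℝ V) :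
    IntegrableOn (fun ξ : V => ‖ξ‖ ^ q) {ξ | R < ‖ξ‖} := by
  rw [← integrable_indicator_iff (measurableSet_lt measurable_const measurable_norm)]
  change Integrable fun ξ : V => (Set.Ioi R).indicator (fun y => y ^ q) ‖ξ‖
  rw [integrable_fun_norm_addHaar volume (f := (Set.Ioi R).indicator fun y => y ^ q),
    integrableOn_congr_fun (eqOn_pow_pred_smul_indicator_rpow finrank_pos R q) measurableSet_Ioi]
  exact ((integrable_indicator_iff measurableSet_Ioi).2
    (integrableOn_Ioi_rpow_of_lt (by linarith) hR)).integrableOn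

theorem setIntegral_norm_rpow_of_lt (hR : 0 < R) (hq : q < -finrank ℝ V) :
    ∫ ξ in {ξ : V | R < ‖ξ‖}, ‖ξ‖ ^ q =
      finrank ℝ V * volume.real (Metric.ball (0 : V) 1) *
        (-R ^ (q + finrank ℝ V) / (q + finrank ℝ V)) := by
  rw [← integral_indicator (measurableSet_lt measurable_const measurable_norm)]
  change ∫ ξ : V, (Set.Ioi R).indicator (fun y => y ^ q) ‖ξ‖ = _
  rw [integral_fun_norm_addHaar volume ((Set.Ioi R).indicator fun y => y ^ q),
    setIntegral_congr_fun measurableSet_Ioi (eqOn_pow_pred_smul_indicator_rpow finrank_pos R q),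
    setIntegral_indicator measurableSet_Ioi, Set.Ioi_inter_Ioi, max_eq_right hR.le,
    integral_Ioi_rpow_of_lt (by linarith) hR, sub_add_cancel, nsmul_eq_mul, smul_eq_mul, mul_assoc]

theorem invNormMeasure_lt_norm (hR : 0 < R) :
    invNormMeasure V {ξ | R < ‖ξ‖} =
      ENNReal.ofReal (R ^ finrank ℝ V)⁻¹ * volume (Metric.ball (0 : V) 1) := by
  have hn : (0 : ℝ) < finrank ℝ V := by exact_mod_cast finrank_pos
  have hq : (-(2 * finrank ℝ V) : ℝ) < -finrank ℝ V := by linarith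
  have hint := integrableOn_norm_rpow_of_lt (V := V) hR hq
  rw [invNormMeasure, withDensity_apply _ (measurableSet_lt measurable_const measurable_norm),
    ← ofReal_integral_eq_lintegral_ofReal hint
      (ae_of_all _ fun ξ => Real.rpow_nonneg (norm_nonneg ξ) _),
    setIntegral_norm_rpow_of_lt hR hq,
    ← ofReal_measureReal (μ := volume) (s := Metric.ball (0 : V) 1),
    ← ENNReal.ofReal_mul (by positivity), ← Real.rpow_natCast, ← Real.rpow_neg hR.le]
  ring_nf
  field_simp

theorem invNormMeasure_lt_norm_pow {a : ℝ} (ha : 0 < a) :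
    invNormMeasure V {ξ | a < ‖ξ‖ ^ finrank ℝ V} =
      ENNReal.ofReal a⁻¹ * volume (Metric.ball (0 : V) 1) := by
  have hn : finrank ℝ V ≠ 0 := finrank_pos.ne'
  have hpow : (a ^ (finrank ℝ V : ℝ)⁻¹) ^ finrank ℝ V = a := Real.rpow_inv_natCast_pow ha.le hn
  rw [← congrArg (fun a => ENNReal.ofReal a⁻¹) hpow, ← invNormMeasure_lt_norm (by positivity)]
  congr 1 with ξ
  rw [Set.mem_ofPred_eq, Set.mem_ofPred_eq,
    ← pow_lt_pow_iff_left₀ (by positivity) (norm_nonneg ξ) hn, hpow]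

end InvNormMeasure

section Interpolation

theorem lintegral_rpow_le_of_meas_lt_le {X Y : Type*} [MeasurableSpace X] [MeasurableSpace Y]
    {ν : Measure X} {μ : Measure Y} [SFinite μ] {F : X → ℝ} {H : Y → ℝ} {r : ℝ} (hr : 0 < r)
    (hF : AEMeasurable F ν) (hF0 : ∀ x, 0 ≤ F x) (hH : AEMeasurable H μ) {w : ℝ → ℝ → ℝ≥0∞}
    (hw : Measurable (Function.uncurry w))
    (hFw : ∀ s, 0 < s → ν {x | s < F x} ≤ ∫⁻ y, w s (H y) ∂μ) {C : ℝ≥0∞}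
    (hwC : ∀ y, ∫⁻ s in Set.Ioi (0 : ℝ), w s (H y) * ENNReal.ofReal (s ^ (r - 1)) ≤
      C * ENNReal.ofReal (H y) ^ r) :
    ∫⁻ x, ENNReal.ofReal (F x ^ r) ∂ν ≤
      ENNReal.ofReal r * ∫⁻ y, C * ENNReal.ofReal (H y) ^ r ∂μ := by
  have hmeas : AEMeasurable (fun q : ℝ × Y => w q.1 (H q.2) * ENNReal.ofReal (q.1 ^ (r - 1)))
      ((volume.restrict (Set.Ioi 0)).prod μ) :=
    (hw.comp_aemeasurable (measurable_fst.aemeasurable.prodMk hH.comp_snd)).mul (by fun_prop)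
  rw [lintegral_rpow_eq_lintegral_meas_lt_mul ν (ae_of_all _ hF0) hF hr]
  gcongr ENNReal.ofReal r * ?_
  calc ∫⁻ s in Set.Ioi (0 : ℝ), ν {x | s < F x} * ENNReal.ofReal (s ^ (r - 1))
      ≤ ∫⁻ s in Set.Ioi (0 : ℝ), ∫⁻ y, w s (H y) * ENNReal.ofReal (s ^ (r - 1)) ∂μ :=
        setLIntegral_mono' measurableSet_Ioi fun s hs => by
          rw [lintegral_mul_const' _ _ ENNReal.ofReal_ne_top]
          gcongr
          exact hFw s hs
    _ = ∫⁻ y, (∫⁻ s in Set.Ioi (0 : ℝ), w s (H y) * ENNReal.ofReal (s ^ (r - 1))) ∂μ :=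
        lintegral_lintegral_swap hmeas
    _ ≤ ∫⁻ y, C * ENNReal.ofReal (H y) ^ r ∂μ := lintegral_mono hwC

/-- The bound for the distribution function at height `s` coming from a function with value `η`,
when its part above `s` satisfies a weak `(1, 1)` and its part below `s` a weak `(2, 2)` estimate,
with constants `K` and `L`. -/
def weakTypeBound (K L : ℝ≥0∞) (s η : ℝ) : ℝ≥0∞ :=
  if s < η then K * ENNReal.ofReal (η / s) else L * ENNReal.ofReal ((η / s) ^ 2)

theorem measurable_weakTypeBound (K L : ℝ≥0∞) :
    Measurable (Function.uncurry (weakTypeBound K L)) :=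
  Measurable.ite (measurableSet_lt measurable_fst measurable_snd) (by fun_prop) (by fun_prop)

theorem setLIntegral_Ioo_rpow {c q : ℝ} (hc : 0 < c) (hq : -1 < q) :
    ∫⁻ s in Set.Ioo (0 : ℝ) c, ENNReal.ofReal (s ^ q) = ENNReal.ofReal (c ^ (q + 1) / (q + 1)) := by
  have hint : IntegrableOn (fun s : ℝ => s ^ q) (Set.Ioc 0 c) :=
    (intervalIntegrable_iff_integrableOn_Ioc_of_le hc.le).1
      (intervalIntegral.intervalIntegrable_rpow' hq)
  rw [setLIntegral_congr Ioo_ae_eq_Ioc, ← ofReal_integral_eq_lintegral_ofReal hint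
    (ae_restrict_of_forall_mem measurableSet_Ioc fun s hs => Real.rpow_nonneg hs.1.le _),
    ← intervalIntegral.integral_of_le hc.le, integral_rpow (Or.inl hq),
    Real.zero_rpow (by linarith), sub_zero]

theorem setLIntegral_Ici_rpow {c q : ℝ} (hc : 0 < c) (hq : q < -1) :
    ∫⁻ s in Set.Ici c, ENNReal.ofReal (s ^ q) = ENNReal.ofReal (-c ^ (q + 1) / (q + 1)) := by
  rw [setLIntegral_congr Ioi_ae_eq_Ici.symm, ← ofReal_integral_eq_lintegral_ofReal
    (integrableOn_Ioi_rpow_of_lt hq hc) (ae_restrict_of_forall_mem measurableSet_Ioi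
      fun s hs => Real.rpow_nonneg (hc.trans hs).le _), integral_Ioi_rpow_of_lt hq hc]

theorem lintegral_weakTypeBound_mul_rpow_le {K L : ℝ≥0∞} (hK : K ≠ ∞) (hL : L ≠ ∞) {r η : ℝ}
    (hr1 : 1 < r) (hr2 : r < 2) (hη : 0 ≤ η) :
    ∫⁻ s in Set.Ioi (0 : ℝ), weakTypeBound K L s η * ENNReal.ofReal (s ^ (r - 1)) ≤
      (K * ENNReal.ofReal (1 / (r - 1)) + L * ENNReal.ofReal (1 / (2 - r))) *
        ENNReal.ofReal η ^ r := by
  rcases hη.eq_or_lt with rfl | hη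
  · refine (setLIntegral_eq_zero measurableSet_Ioi fun s hs => ?_).trans_le zero_le
    simp [weakTypeBound, (Set.mem_Ioi.1 hs).not_gt]
  have hlow : ∫⁻ s in Set.Ioo 0 η, weakTypeBound K L s η * ENNReal.ofReal (s ^ (r - 1)) =
      K * ENNReal.ofReal (1 / (r - 1)) * ENNReal.ofReal η ^ r := by
    have heq : ∀ s ∈ Set.Ioo 0 η, weakTypeBound K L s η * ENNReal.ofReal (s ^ (r - 1)) =
        K * ENNReal.ofReal η * ENNReal.ofReal (s ^ (r - 2)) := fun s hs => by
      have hs0 : 0 < s := hs.1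
      rw [weakTypeBound, if_pos hs.2, mul_assoc, mul_assoc, ← ENNReal.ofReal_mul (by positivity),
        ← ENNReal.ofReal_mul hη.le, show r - 1 = r - 2 + 1 by ring, Real.rpow_add_one hs0.ne']
      field_simp
    rw [setLIntegral_congr_fun measurableSet_Ioo heq, lintegral_const_mul' _ _ (by finiteness),
      setLIntegral_Ioo_rpow hη (by linarith), mul_assoc, mul_assoc, ← ENNReal.ofReal_mul hη.le,
      ENNReal.ofReal_rpow_of_pos hη, ← ENNReal.ofReal_mul (one_div_nonneg.2 (by linarith)),
      show r - 2 + 1 = r - 1 by ring, Real.rpow_sub_one hη.ne']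
    field_simp
  have hhigh : ∫⁻ s in Set.Ici η, weakTypeBound K L s η * ENNReal.ofReal (s ^ (r - 1)) =
      L * ENNReal.ofReal (1 / (2 - r)) * ENNReal.ofReal η ^ r := by
    have heq : ∀ s ∈ Set.Ici η, weakTypeBound K L s η * ENNReal.ofReal (s ^ (r - 1)) =
        L * ENNReal.ofReal (η ^ 2) * ENNReal.ofReal (s ^ (r - 3)) := fun s hs => by
      have hs0 : 0 < s := hη.trans_le hs
      rw [weakTypeBound, if_neg (not_lt.2 hs), mul_assoc, mul_assoc,
        ← ENNReal.ofReal_mul (by positivity), ← ENNReal.ofReal_mul (by positivity),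
        show r - 1 = r - 3 + (2 : ℕ) by push_cast; ring, Real.rpow_add_natCast hs0.ne']
      field_simp
    rw [setLIntegral_congr_fun measurableSet_Ici heq, lintegral_const_mul' _ _ (by finiteness),
      setLIntegral_Ici_rpow hη (by linarith), mul_assoc, mul_assoc,
      ← ENNReal.ofReal_mul (by positivity), ENNReal.ofReal_rpow_of_pos hη,
      ← ENNReal.ofReal_mul (one_div_nonneg.2 (by linarith)), show r - 3 + 1 = r - (2 : ℕ) by
        push_cast; ring, Real.rpow_sub_natCast hη.ne', show r - (2 : ℕ) = -(2 - r) by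
        push_cast; ring, neg_div_neg_eq]
    field_simp
  rw [← Set.Ioo_union_Ici_eq_Ioi hη, add_mul, ← hlow, ← hhigh]
  exact lintegral_union_le _ _ _

end Interpolation

section Paley

variable {d : ℕ} {u : E d → ℂ} {s r : ℝ}

theorem FT_add {v : E d → ℂ} (hu : Integrable u) (hv : Integrable v) :
    FT d (u + v) = FT d u + FT d v := by
  simp only [FT_eq_fourierIntegral]
  exact VectorFourier.fourierIntegral_add Real.continuous_probChar continuous_inner hu hv

theorem invNormMeasure_lt_norm_pow_mul_norm_FT_le [Nontrivial (E d)] (hs : 0 < s)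
    (hu : Integrable u) :
    invNormMeasure (E d) {ξ | s < ‖ξ‖ ^ d * ‖FT d u ξ‖} ≤
      volume (Metric.ball (0 : E d) 1) * ENNReal.ofReal (1 / s) * ∫⁻ y, ‖u y‖ₑ := by
  set A : ℝ := ∫ y, ‖u y‖ with hA
  have hFT : ∀ ξ, ‖FT d u ξ‖ ≤ A := fun ξ => by
    rw [← ENNReal.ofReal_le_ofReal_iff (integral_nonneg fun y => norm_nonneg (u y)), ofReal_norm,
      ofReal_integral_norm_eq_lintegral_enorm hu]
    exact enorm_FT_le u ξ
  rw [← ofReal_integral_norm_eq_lintegral_enorm hu, ← hA]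
  rcases (integral_nonneg fun y => norm_nonneg (u y) : 0 ≤ A).eq_or_lt with hA0 | hA0
  · have hempty : {ξ | s < ‖ξ‖ ^ d * ‖FT d u ξ‖} = ∅ := by
      refine Set.eq_empty_of_forall_notMem fun ξ hξ => hs.not_gt (hξ.trans_eq ?_)
      rw [le_antisymm ((hFT ξ).trans hA0.symm.le) (norm_nonneg _), mul_zero]
    simp [hempty]
  · have hsub : {ξ | s < ‖ξ‖ ^ d * ‖FT d u ξ‖} ⊆ {ξ : E d | s / A < ‖ξ‖ ^ d} := fun ξ hξ => by
      rw [Set.mem_ofPred_eq, div_lt_iff₀ hA0]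
      exact lt_of_lt_of_le hξ (by gcongr; exact hFT ξ)
    have hball := invNormMeasure_lt_norm_pow (V := E d) (div_pos hs hA0)
    rw [finrank_euclideanSpace_fin] at hball
    refine (measure_mono hsub).trans_eq (hball.trans ?_)
    rw [mul_comm, mul_assoc, ← ENNReal.ofReal_mul (by positivity), inv_div, one_div_mul_eq_div]

theorem invNormMeasure_lt_norm_pow_mul_norm_FT_le_sq (hs : 0 < s) (hu : Integrable u) :
    invNormMeasure (E d) {ξ | s < ‖ξ‖ ^ d * ‖FT d u ξ‖} ≤
      ENNReal.ofReal (2 * π) ^ d * ENNReal.ofReal (1 / s ^ 2) * ∫⁻ y, ‖u y‖ₑ ^ (2 : ℝ) := by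
  have hFT : Measurable (FT d u) := (continuous_FT hu).measurable
  set F : E d → ℝ≥0∞ := fun ξ => ENNReal.ofReal ((‖ξ‖ ^ d * ‖FT d u ξ‖) ^ 2)
  have hFm : Measurable F := by fun_prop
  have hint : ∫⁻ ξ, F ξ ∂invNormMeasure (E d) ≤
      ENNReal.ofReal (2 * π) ^ d * ∫⁻ y, ‖u y‖ₑ ^ (2 : ℝ) := by
    rw [lintegral_invNormMeasure hFm, finrank_euclideanSpace_fin]
    refine (lintegral_mono fun ξ => ?_).trans (lintegral_enorm_FT_sq_le hu)
    rw [← ofReal_norm, ENNReal.ofReal_rpow_of_nonneg (norm_nonneg _) zero_le_two,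
      ← ENNReal.ofReal_mul (by positivity), mul_pow, ← mul_assoc, Real.rpow_two]
    refine ENNReal.ofReal_le_ofReal (mul_le_of_le_one_left (sq_nonneg _) ?_)
    rw [Real.rpow_neg (norm_nonneg _), ← pow_mul, mul_comm d, ← Real.rpow_natCast]
    push_cast
    exact inv_mul_le_one
  calc invNormMeasure (E d) {ξ | s < ‖ξ‖ ^ d * ‖FT d u ξ‖}
      ≤ invNormMeasure (E d) {ξ | ENNReal.ofReal (s ^ 2) ≤ F ξ} :=
        measure_mono fun ξ (hξ : s < _) => ENNReal.ofReal_le_ofReal (by gcongr)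
    _ ≤ (∫⁻ ξ, F ξ ∂invNormMeasure (E d)) / ENNReal.ofReal (s ^ 2) :=
        meas_ge_le_lintegral_div hFm.aemeasurable (by simpa using hs.ne') ENNReal.ofReal_ne_top
    _ ≤ _ := by
        rw [one_div, ENNReal.ofReal_inv_of_pos (by positivity), mul_right_comm, ← div_eq_mul_inv]
        gcongr

theorem weakTypeBound_two_mul_four_mul (hs : 0 < s) (K L : ℝ≥0∞) {α : Type*} (f : α → ℂ) (y : α) :
    weakTypeBound (2 * K) (4 * L) s ‖f y‖ =
      K * ENNReal.ofReal (1 / (s / 2)) * ‖{y | s < ‖f y‖}.indicator f y‖ₑ +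
        L * ENNReal.ofReal (1 / (s / 2) ^ 2) * ‖{y | s < ‖f y‖}ᶜ.indicator f y‖ₑ ^ (2 : ℝ) := by
  by_cases hy : s < ‖f y‖
  · rw [weakTypeBound, if_pos hy, Set.indicator_of_mem (show y ∈ {y | s < ‖f y‖} from hy),
      Set.indicator_of_notMem (not_not_intro (show y ∈ {y | s < ‖f y‖} from hy)),
      ← ofReal_norm (f y), enorm_zero, ENNReal.zero_rpow_of_pos two_pos, mul_zero, add_zero,
      mul_assoc, mul_assoc, ← ENNReal.ofReal_mul (by positivity),
      show 1 / (s / 2) * ‖f y‖ = 2 * (‖f y‖ / s) by field_simp,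
      ENNReal.ofReal_mul zero_le_two, ENNReal.ofReal_ofNat]
    ring
  · rw [weakTypeBound, if_neg hy, Set.indicator_of_notMem (show y ∉ {y | s < ‖f y‖} from hy),
      Set.indicator_of_mem (show y ∈ {y | s < ‖f y‖}ᶜ from hy), ← ofReal_norm (f y), enorm_zero,
      mul_zero, zero_add, mul_assoc, mul_assoc,
      ENNReal.ofReal_rpow_of_nonneg (norm_nonneg _) zero_le_two,
      ← ENNReal.ofReal_mul (by positivity), Real.rpow_two,
      show 1 / (s / 2) ^ 2 * ‖f y‖ ^ 2 = 4 * (‖f y‖ / s) ^ 2 by field_simp; ring,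
      ENNReal.ofReal_mul zero_le_four, ENNReal.ofReal_ofNat]
    ring

theorem invNormMeasure_lt_le_lintegral_weakTypeBound [Nontrivial (E d)] (hs : 0 < s)
    (hu : Integrable u) :
    invNormMeasure (E d) {ξ | s < ‖ξ‖ ^ d * ‖FT d u ξ‖} ≤
      ∫⁻ y, weakTypeBound (2 * volume (Metric.ball (0 : E d) 1))
        (4 * ENNReal.ofReal (2 * π) ^ d) s ‖u y‖ := by
  set A : Set (E d) := {y | s < ‖u y‖}
  have hAm : NullMeasurableSet A :=
    nullMeasurableSet_lt aemeasurable_const hu.aestronglyMeasurable.norm.aemeasurable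
  have hu₁ : Integrable (A.indicator u) := hu.indicator₀ hAm
  have hu₂ : Integrable (Aᶜ.indicator u) := hu.indicator₀ hAm.compl
  have hsub : {ξ | s < ‖ξ‖ ^ d * ‖FT d u ξ‖} ⊆
      {ξ | s / 2 < ‖ξ‖ ^ d * ‖FT d (A.indicator u) ξ‖} ∪
        {ξ | s / 2 < ‖ξ‖ ^ d * ‖FT d (Aᶜ.indicator u) ξ‖} := fun ξ (hξ : s < _) => by
    by_contra hcon
    simp only [Set.mem_union, Set.mem_ofPred_eq, not_or, not_lt] at hcon
    have hadd : FT d u ξ = FT d (A.indicator u) ξ + FT d (Aᶜ.indicator u) ξ := by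
      rw [← Pi.add_apply, ← FT_add hu₁ hu₂, Set.indicator_self_add_compl]
    have htri : ‖ξ‖ ^ d * ‖FT d u ξ‖ ≤
        ‖ξ‖ ^ d * ‖FT d (A.indicator u) ξ‖ + ‖ξ‖ ^ d * ‖FT d (Aᶜ.indicator u) ξ‖ := by
      rw [← mul_add, hadd]
      gcongr
      exact norm_add_le _ _
    linarith
  have hs2 : 0 < s / 2 := half_pos hs
  refine (measure_mono hsub).trans <| (measure_union_le _ _).trans <|
    (add_le_add (invNormMeasure_lt_norm_pow_mul_norm_FT_le hs2 hu₁)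
      (invNormMeasure_lt_norm_pow_mul_norm_FT_le_sq hs2 hu₂)).trans_eq ?_
  rw [← lintegral_const_mul'' _ hu₁.aestronglyMeasurable.enorm,
    ← lintegral_const_mul'' _ (hu₂.aestronglyMeasurable.enorm.pow_const _),
    ← lintegral_add_left' (hu₁.aestronglyMeasurable.enorm.const_mul _)]
  exact lintegral_congr fun y => (weakTypeBound_two_mul_four_mul hs _ _ u y).symm

theorem lintegral_enorm_FT_rpow_mul_eq_invNormMeasure (hd : 1 ≤ d) (hr1 : 0 < r) (hr2 : r < 2)
    (hu : Integrable u) :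
    ∫⁻ ξ, ‖FT d u ξ‖ₑ ^ r * ENNReal.ofReal (‖ξ‖ ^ (d * (r - 2))) =
      ∫⁻ ξ, ENNReal.ofReal ((‖ξ‖ ^ d * ‖FT d u ξ‖) ^ r) ∂invNormMeasure (E d) := by
  have hd' : (1 : ℝ) ≤ d := by exact_mod_cast hd
  have hFT : Measurable (FT d u) := (continuous_FT hu).measurable
  rw [lintegral_invNormMeasure (by fun_prop), finrank_euclideanSpace_fin]
  refine lintegral_congr fun ξ => ?_
  rw [← ofReal_norm, ENNReal.ofReal_rpow_of_nonneg (norm_nonneg _) hr1.le,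
    ← ENNReal.ofReal_mul (by positivity), ← ENNReal.ofReal_mul (by positivity)]
  congr 1
  rcases (norm_nonneg ξ).eq_or_lt with h0 | h0
  · rw [← h0, Real.zero_rpow (by nlinarith), Real.zero_rpow (by linarith), mul_zero, zero_mul]
  · rw [Real.mul_rpow (by positivity) (norm_nonneg _), ← mul_assoc, ← Real.rpow_natCast,
      ← Real.rpow_mul h0.le, ← Real.rpow_add h0, mul_comm]
    ring_nf

theorem exists_lintegral_enorm_FT_rpow_mul_le (hd : 1 ≤ d) (hr1 : 1 < r) (hr2 : r < 2) :
    ∃ C : ℝ≥0, ∀ u : E d → ℂ, Integrable u →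
      ∫⁻ ξ, ‖FT d u ξ‖ₑ ^ r * ENNReal.ofReal (‖ξ‖ ^ (d * (r - 2))) ≤ C * ∫⁻ y, ‖u y‖ₑ ^ r := by
  have : Nonempty (Fin d) := ⟨⟨0, hd⟩⟩
  set K : ℝ≥0∞ := 2 * volume (Metric.ball (0 : E d) 1)
  have hK : K ≠ ∞ := ENNReal.mul_ne_top ENNReal.ofNat_ne_top measure_ball_lt_top.ne
  set L : ℝ≥0∞ := 4 * ENNReal.ofReal (2 * π) ^ d
  have hL : L ≠ ∞ := by finiteness
  obtain ⟨C, hC⟩ : ∃ C : ℝ≥0, (C : ℝ≥0∞) =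
      K * ENNReal.ofReal (1 / (r - 1)) + L * ENNReal.ofReal (1 / (2 - r)) :=
    ENNReal.canLift.prf _ (by finiteness)
  refine ⟨r.toNNReal * C, fun u hu => ?_⟩
  have hr0 : 0 < r := by linarith
  have hFT : Measurable (FT d u) := (continuous_FT hu).measurable
  rw [lintegral_enorm_FT_rpow_mul_eq_invNormMeasure hd hr0 hr2 hu]
  refine (lintegral_rpow_le_of_meas_lt_le hr0 (by fun_prop) (fun ξ => by positivity)
    hu.aestronglyMeasurable.norm.aemeasurable (measurable_weakTypeBound K L)
    (fun s hs => invNormMeasure_lt_le_lintegral_weakTypeBound hs hu) (C := C)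
    fun y => ?_).trans_eq ?_
  · rw [hC]
    exact lintegral_weakTypeBound_mul_rpow_le hK hL hr1 hr2 (norm_nonneg _)
  · simp only [ofReal_norm]
    rw [lintegral_const_mul' _ _ ENNReal.coe_ne_top, ← mul_assoc, ENNReal.coe_mul]
    rfl

end Paley

section HeatPairing

variable {d : ℕ} {b s t : ℝ} {φ u : E d → ℂ}

theorem FT_conj_comp_neg (φ : E d → ℂ) (ξ : E d) :
    FT d (fun x => conj (φ (-x))) ξ = conj (FT d φ ξ) := by
  rw [FT, FT, ← integral_conj,
    ← integral_neg_eq_self fun x => conj (Complex.exp (-Complex.I * (⟪x, ξ⟫ : ℂ)) * φ x)]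
  simp only [map_mul, ← Complex.exp_conj, Complex.conj_I, Complex.conj_ofReal,
    inner_neg_left, Complex.ofReal_neg, neg_neg, mul_neg, neg_mul]

theorem integral_conj_FT_mul (hφ : Integrable φ) {w : E d → ℂ} (hw : Integrable w) :
    ∫ ξ, conj (FT d φ ξ) * w ξ = ∫ x, conj (φ x) * FT d w (-x) := by
  have hconj : Integrable fun x => conj (φ (-x)) :=
    (Complex.conjLIE.toContinuousLinearEquiv.integrable_comp_iff).2 hφ.comp_neg
  simp only [← FT_conj_comp_neg]
  rw [integral_FT_mul hconj hw, ← integral_neg_eq_self]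
  simp only [neg_neg]

theorem FT_exp_mul_gaussian (hs : 0 < s) (x y : E d) :
    FT d (fun ξ => Complex.exp (Complex.I * (⟪x, ξ⟫ : ℂ)) * (gaussian s ξ : ℂ)) y =
      ((π / s) ^ ((d : ℝ) / 2) : ℝ) * (gaussian (1 / (4 * s)) (y - x) : ℂ) := by
  have hexp : ∀ ξ : E d, Complex.exp (-Complex.I * (⟪ξ, y⟫ : ℂ)) *
      (Complex.exp (Complex.I * (⟪x, ξ⟫ : ℂ)) * (gaussian s ξ : ℂ)) =
        Complex.exp (-(s : ℂ) * ‖ξ‖ ^ 2 + -Complex.I * (⟪y - x, ξ⟫ : ℂ)) := fun ξ => by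
    rw [gaussian, Complex.ofReal_exp, ← Complex.exp_add, ← Complex.exp_add, inner_sub_left,
      real_inner_comm]
    push_cast
    ring_nf
  simp only [FT, hexp]
  rw [GaussianFourier.integral_cexp_neg_mul_sq_norm_add (by simpa), finrank_euclideanSpace_fin,
    gaussian, Complex.ofReal_cpow (by positivity)]
  push_cast
  rw [neg_sq, Complex.I_sq]
  ring_nf

/-- The pairing of `exp (tΔ) u` with `φ`, up to the factor `(2π) ^ d`, written on the Fourier
side. -/
def heatPairing (d : ℕ) (t : ℝ) (φ u : E d → ℂ) : ℂ :=
  ∫ ξ, conj (FT d φ ξ) * (FT d u ξ * (gaussian t ξ : ℂ))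

theorem FT_FT_mul_gaussian_neg (hs : 0 < s) (hu : Integrable u) (x : E d) :
    FT d (fun ξ => FT d u ξ * (gaussian s ξ : ℂ)) (-x) =
      ((π / s) ^ ((d : ℝ) / 2) : ℝ) * ∫ y, u y * (gaussian (1 / (4 * s)) (x - y) : ℂ) := by
  have hint : Integrable fun ξ : E d =>
      Complex.exp (Complex.I * (⟪x, ξ⟫ : ℂ)) * (gaussian s ξ : ℂ) := by
    refine (integrable_gaussian hs).ofReal.bdd_mul (c := 1)
      (Continuous.aestronglyMeasurable (by fun_prop)) (ae_of_all _ fun ξ => ?_)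
    simp [Complex.norm_exp]
  have h := integral_FT_mul hu hint
  simp only [FT_exp_mul_gaussian hs] at h
  calc FT d (fun ξ => FT d u ξ * (gaussian s ξ : ℂ)) (-x)
      = ∫ ξ, FT d u ξ * (Complex.exp (Complex.I * (⟪x, ξ⟫ : ℂ)) * (gaussian s ξ : ℂ)) := by
        refine integral_congr_ae (ae_of_all _ fun ξ => ?_)
        simp only [inner_neg_right, real_inner_comm, Complex.ofReal_neg, neg_mul_neg]
        ring
    _ = _ := by
        rw [h, ← integral_const_mul]
        refine integral_congr_ae (ae_of_all _ fun y => ?_)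
        simp only [← gaussian_neg _ (y - x), neg_sub]
        ring

theorem integrable_FT_mul_gaussian (ht : 0 < t) (hu : Integrable u) :
    Integrable fun ξ => FT d u ξ * (gaussian t ξ : ℂ) := by
  refine (integrable_gaussian ht).ofReal.bdd_mul (c := (∫⁻ x, ‖u x‖ₑ).toReal)
    (continuous_FT hu).aestronglyMeasurable (ae_of_all _ fun ξ => ?_)
  rw [← toReal_enorm]
  exact ENNReal.toReal_mono hu.hasFiniteIntegral.ne (enorm_FT_le u ξ)

theorem integrable_conj_mul (hφ : Integrable φ) (hu : Integrable u) :
    Integrable fun w : P d => conj (φ w.1) * u w.2 :=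
  ((Complex.conjLIE.toContinuousLinearEquiv.integrable_comp_iff).2 hφ).mul_prod hu

theorem integrable_conj_mul_mul_gaussian_sub (hb : 0 ≤ b) (hφ : Integrable φ)
    (hu : Integrable u) :
    Integrable fun w : P d => conj (φ w.1) * u w.2 * (gaussian b (w.1 - w.2) : ℂ) := by
  refine (integrable_conj_mul hφ hu).mul_bdd (c := 1) ?_ (ae_of_all _ fun w => ?_)
  · exact (Complex.continuous_ofReal.comp
      ((continuous_gaussian b).comp (continuous_fst.sub continuous_snd))).aestronglyMeasurable
  · rw [Complex.norm_of_nonneg (gaussian_nonneg _ _)]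
    exact gaussian_le_one hb _

theorem heatPairing_eq_integral_prod (hs : 0 < s) (hφ : Integrable φ) (hu : Integrable u) :
    heatPairing d s φ u = ((π / s) ^ ((d : ℝ) / 2) : ℝ) *
      ∫ w : P d, conj (φ w.1) * u w.2 * (gaussian (1 / (4 * s)) (w.1 - w.2) : ℂ) := by
  have hprod := integral_prod _ (integrable_conj_mul_mul_gaussian_sub
    (b := 1 / (4 * s)) (by positivity) hφ hu)
  rw [heatPairing, integral_conj_FT_mul hφ (integrable_FT_mul_gaussian hs hu)]
  simp only [FT_FT_mul_gaussian_neg hs hu]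
  rw [Measure.volume_eq_prod, hprod, ← integral_const_mul]
  simp only [mul_assoc, integral_const_mul]
  simp only [mul_left_comm]
  rw [integral_const_mul]

end HeatPairing

section Localization

variable {d : ℕ} {b c s t : ℝ} {φ u : E d → ℂ}

theorem integrable_prod_mul_gaussian_mul_gaussian (hbc : 0 < b + c) (hbc' : 0 ≤ b * c)
    {F : P d → ℂ} (hF : Integrable F) :
    Integrable fun q : E d × P d =>
      F q.2 * ((gaussian b (q.2.1 - q.1) * gaussian c (q.2.2 - q.1) : ℝ) : ℂ) := by
  have hcont : Continuous fun q : E d × P d =>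
      ((gaussian b (q.2.1 - q.1) * gaussian c (q.2.2 - q.1) : ℝ) : ℂ) := by
    unfold gaussian
    fun_prop
  have hmeas : AEStronglyMeasurable (fun q : E d × P d =>
      F q.2 * ((gaussian b (q.2.1 - q.1) * gaussian c (q.2.2 - q.1) : ℝ) : ℂ))
      (volume.prod volume) :=
    hF.aestronglyMeasurable.comp_snd.mul hcont.aestronglyMeasurable
  rw [Measure.volume_eq_prod, integrable_prod_iff' hmeas]
  refine ⟨ae_of_all _ fun w =>
    (integrable_gaussian_sub_mul_gaussian_sub hbc w.1 w.2).ofReal (𝕜 := ℂ) |>.const_mul (F w), ?_⟩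
  have hnorm : ∀ w : P d, ∫ x, ‖F w * ((gaussian b (w.1 - x) * gaussian c (w.2 - x) : ℝ) : ℂ)‖ =
      ‖F w‖ * ((π / (b + c)) ^ ((d : ℝ) / 2) *
        gaussian (b * c / (b + c)) (w.1 - w.2)) := fun w => by
    simp only [norm_mul, Complex.norm_of_nonneg (mul_nonneg (gaussian_nonneg b _)
      (gaussian_nonneg c _))]
    rw [integral_const_mul, integral_gaussian_sub_mul_gaussian_sub hbc, finrank_euclideanSpace_fin]
  simp only [hnorm]
  refine hF.norm.mul_bdd (c := (π / (b + c)) ^ ((d : ℝ) / 2)) ?_ (ae_of_all _ fun w => ?_)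
  · unfold gaussian
    exact Continuous.aestronglyMeasurable (by fun_prop)
  · rw [Real.norm_of_nonneg (mul_nonneg (by positivity) (gaussian_nonneg _ _))]
    exact mul_le_of_le_one_right (by positivity) (gaussian_le_one (by positivity) _)

-- The heat kernel at time `t` is a multiple of `gaussian (1 / (4 * t))`; integrating the two
-- windows over their centre `x` multiplies the kernel at time `s` by `gaussian (b * c / (b + c))`.
theorem integral_heatPairing_mul_gaussian (hb : 0 < b) (hc : 0 < c) (hs : 0 < s) (ht : 0 < t)
    (hst : 1 / (4 * t) = b * c / (b + c) + 1 / (4 * s)) (hφ : Integrable φ) (hu : Integrable u) :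
    ∫ x, heatPairing d s (fun y => φ y * (gaussian b (y - x) : ℂ))
        (fun y => u y * (gaussian c (y - x) : ℂ)) =
      ((π * t / (s * (b + c))) ^ ((d : ℝ) / 2) : ℝ) * heatPairing d t φ u := by
  set F : P d → ℂ := fun w => conj (φ w.1) * u w.2 * (gaussian (1 / (4 * s)) (w.1 - w.2) : ℂ)
    with hF
  have hFi : Integrable F := integrable_conj_mul_mul_gaussian_sub (by positivity) hφ hu
  have hinner : ∀ w : P d, ∫ x, F w * ((gaussian b (w.1 - x) * gaussian c (w.2 - x) : ℝ) : ℂ) =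
      ((π / (b + c)) ^ ((d : ℝ) / 2) : ℝ) *
        (conj (φ w.1) * u w.2 * (gaussian (1 / (4 * t)) (w.1 - w.2) : ℂ)) := fun w => by
    rw [integral_const_mul, integral_complex_ofReal,
      integral_gaussian_sub_mul_gaussian_sub (add_pos hb hc), finrank_euclideanSpace_fin, hst,
      ← gaussian_mul_gaussian, hF]
    push_cast
    ring
  have hconst : (π / s) ^ ((d : ℝ) / 2) * (π / (b + c)) ^ ((d : ℝ) / 2) =
      (π * t / (s * (b + c))) ^ ((d : ℝ) / 2) * (π / t) ^ ((d : ℝ) / 2) := by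
    rw [← Real.mul_rpow (by positivity) (by positivity),
      ← Real.mul_rpow (by positivity) (by positivity)]
    congr 1
    field_simp
  calc ∫ x, heatPairing d s (fun y => φ y * (gaussian b (y - x) : ℂ))
        (fun y => u y * (gaussian c (y - x) : ℂ))
      = ∫ x, ((π / s) ^ ((d : ℝ) / 2) : ℝ) *
          ∫ w : P d, F w * ((gaussian b (w.1 - x) * gaussian c (w.2 - x) : ℝ) : ℂ) := by
        refine integral_congr_ae (ae_of_all _ fun x => ?_)
        simp only [heatPairing_eq_integral_prod hs (integrable_mul_gaussian hb.le hφ x)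
          (integrable_mul_gaussian hc.le hu x), hF, map_mul, Complex.conj_ofReal,
          Complex.ofReal_mul]
        congr! 3
        ring
    _ = ((π / s) ^ ((d : ℝ) / 2) : ℝ) *
          ∫ w : P d, ∫ x, F w * ((gaussian b (w.1 - x) * gaussian c (w.2 - x) : ℝ) : ℂ) := by
        rw [integral_const_mul, integral_integral_swap
          (integrable_prod_mul_gaussian_mul_gaussian (add_pos hb hc) (by positivity) hFi)]
    _ = _ := by
        simp only [hinner]
        rw [integral_const_mul, heatPairing_eq_integral_prod ht hφ hu, ← mul_assoc, ← mul_assoc,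
          ← Complex.ofReal_mul, ← Complex.ofReal_mul, hconst]

theorem enorm_heatPairing_le (φ u : E d → ℂ) (t : ℝ) :
    ‖heatPairing d t φ u‖ₑ ≤
      ∫⁻ ξ, ‖FT d φ ξ‖ₑ * ‖FT d u ξ‖ₑ * ENNReal.ofReal (gaussian t ξ) := by
  refine (enorm_integral_le_lintegral_enorm _).trans_eq (lintegral_congr fun ξ => ?_)
  rw [enorm_mul, enorm_mul, enorm_ofReal_gaussian, mul_assoc, ← ofReal_norm (conj _),
    RCLike.norm_conj, ofReal_norm]

theorem enorm_heatPairing_le_lintegral_gaussSTFT (hb : 0 < b) (hc : 0 < c) (hs : 0 < s)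
    (ht : 0 < t) (hst : 1 / (4 * t) = b * c / (b + c) + 1 / (4 * s)) (hst' : s * (b + c) ≤ π * t)
    (hφ : Integrable φ) (hu : Integrable u) :
    ‖heatPairing d t φ u‖ₑ ≤ ∫⁻ z : P d, ‖gaussSTFT d b φ z‖ₑ * ‖gaussSTFT d c u z‖ₑ *
      ENNReal.ofReal (gaussian s z.2) := by
  have hone : 1 ≤ (π * t / (s * (b + c))) ^ ((d : ℝ) / 2) :=
    Real.one_le_rpow ((one_le_div (by positivity)).2 hst') (by positivity)
  have hmeas : Measurable fun z : P d => ‖gaussSTFT d b φ z‖ₑ * ‖gaussSTFT d c u z‖ₑ *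
      ENNReal.ofReal (gaussian s z.2) := by
    have hφm := (continuous_gaussSTFT hb.le hφ).measurable
    have hum := (continuous_gaussSTFT hc.le hu).measurable
    have hg := (continuous_gaussian (V := E d) s).measurable
    fun_prop
  calc ‖heatPairing d t φ u‖ₑ
      ≤ ‖((π * t / (s * (b + c))) ^ ((d : ℝ) / 2) : ℝ) * heatPairing d t φ u‖ₑ := by
        rw [enorm_mul, ← ofReal_norm ((_ : ℝ) : ℂ), Complex.norm_of_nonneg (by positivity)]
        exact le_mul_of_one_le_left zero_le (ENNReal.one_le_ofReal.2 hone)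
    _ ≤ ∫⁻ x, ‖heatPairing d s (fun y => φ y * (gaussian b (y - x) : ℂ))
          (fun y => u y * (gaussian c (y - x) : ℂ))‖ₑ := by
        rw [← integral_heatPairing_mul_gaussian hb hc hs ht hst hφ hu]
        exact enorm_integral_le_lintegral_enorm _
    _ ≤ ∫⁻ x, ∫⁻ ξ, ‖gaussSTFT d b φ (x, ξ)‖ₑ * ‖gaussSTFT d c u (x, ξ)‖ₑ *
          ENNReal.ofReal (gaussian s ξ) :=
        lintegral_mono fun x => enorm_heatPairing_le _ _ _
    _ = _ := (lintegral_prod _ hmeas.aemeasurable).symm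

end Localization

section Bessel

variable {d : ℕ} {a k t : ℝ} {φ u : E d → ℂ}

/-- The density of the Gamma distribution of shape `a`, used to subordinate the Bessel potential
to the heat semigroup. -/
def gammaWeight (a t : ℝ) : ℝ := t ^ (a - 1) * Real.exp (-t) / Real.Gamma a

theorem gammaWeight_nonneg (ha : 0 < a) (ht : 0 < t) : 0 ≤ gammaWeight a t := by
  have := Real.Gamma_pos_of_pos ha
  unfold gammaWeight
  positivity

theorem integrableOn_gammaWeight (ha : 0 < a) : IntegrableOn (gammaWeight a) (Set.Ioi 0) := by
  refine ((Real.GammaIntegral_convergent ha).div_const (Real.Gamma a)).congr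
    (ae_of_all _ fun t => ?_)
  simp only [gammaWeight, mul_comm]

/-- The symbol `(1 + |ξ|²) ^ (-a)` of the Bessel potential `(1 - Δ) ^ (-a)`. -/
def besselWeight (a : ℝ) (ξ : E d) : ℝ := (1 + ‖ξ‖ ^ 2) ^ (-a)

theorem continuous_besselWeight (a : ℝ) : Continuous (besselWeight a : E d → ℝ) :=
  Continuous.rpow_const (by fun_prop) fun ξ => Or.inl (by positivity)

theorem besselWeight_nonneg (a : ℝ) (ξ : E d) : 0 ≤ besselWeight a ξ :=
  Real.rpow_nonneg (by positivity) _

theorem besselWeight_le_one (ha : 0 ≤ a) (ξ : E d) : besselWeight a ξ ≤ 1 :=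
  Real.rpow_le_one_of_one_le_of_nonpos (le_add_of_nonneg_right (by positivity)) (by linarith)

theorem integrableOn_gammaWeight_mul_gaussian (ha : 0 < a) (ξ : E d) :
    IntegrableOn (fun t => gammaWeight a t * gaussian t ξ) (Set.Ioi 0) := by
  refine (integrableOn_gammaWeight ha).mul_bdd (c := 1) ?_ ?_
  · unfold gaussian
    exact Continuous.aestronglyMeasurable (by fun_prop)
  · filter_upwards [ae_restrict_mem measurableSet_Ioi] with t ht
    rw [Real.norm_of_nonneg (gaussian_nonneg _ _)]
    exact gaussian_le_one (le_of_lt ht) ξ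

theorem integral_gammaWeight_mul_gaussian (ha : 0 < a) (ξ : E d) :
    ∫ t in Set.Ioi (0 : ℝ), gammaWeight a t * gaussian t ξ = besselWeight a ξ := by
  have hpos : 0 < 1 + ‖ξ‖ ^ 2 := by positivity
  have hintegrand : ∀ t : ℝ, gammaWeight a t * gaussian t ξ =
      (Real.Gamma a)⁻¹ * (t ^ (a - 1) * Real.exp (-((1 + ‖ξ‖ ^ 2) * t))) := fun t => by
    rw [gammaWeight, gaussian,
      show -((1 + ‖ξ‖ ^ 2) * t) = -t + -t * ‖ξ‖ ^ 2 by ring, Real.exp_add]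
    ring
  simp only [hintegrand]
  rw [integral_const_mul, Real.integral_rpow_mul_exp_neg_mul_Ioi ha hpos, one_div,
    Real.inv_rpow hpos.le, ← Real.rpow_neg hpos.le, mul_comm,
    mul_inv_cancel_right₀ (Real.Gamma_pos_of_pos ha).ne', besselWeight]

theorem lintegral_gammaWeight_mul_gaussian (ha : 0 < a) (ξ : E d) :
    ∫⁻ t in Set.Ioi (0 : ℝ), ENNReal.ofReal (gammaWeight a t * gaussian t ξ) =
      ENNReal.ofReal (besselWeight a ξ) := by
  rw [← integral_gammaWeight_mul_gaussian ha,
    ofReal_integral_eq_lintegral_ofReal (integrableOn_gammaWeight_mul_gaussian ha ξ)]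
  exact ae_restrict_of_forall_mem measurableSet_Ioi fun t ht =>
    mul_nonneg (gammaWeight_nonneg ha ht) (gaussian_nonneg _ _)

theorem exp_neg_le_mul_one_add_rpow {x : ℝ} (ha : 0 ≤ a) (hx : 0 ≤ x) :
    Real.exp (-x) ≤ (1 + a) ^ a * (1 + x) ^ (-a) := by
  have hbase : 1 + x ≤ (1 + a) * Real.exp (x / (1 + a)) :=
    calc 1 + x ≤ (1 + a) * (x / (1 + a) + 1) := by
          rw [mul_add_one, mul_div_cancel₀ _ (by positivity)]
          linarith
      _ ≤ _ := by
          gcongr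
          exact Real.add_one_le_exp _
  have hexp : x / (1 + a) * a ≤ x := by
    rw [div_mul_eq_mul_div, div_le_iff₀ (by linarith)]
    nlinarith
  rw [Real.rpow_neg (by linarith), Real.exp_neg, ← div_eq_mul_inv, le_div_iff₀ (by positivity),
    inv_mul_le_iff₀ (Real.exp_pos _), mul_comm (Real.exp x)]
  calc (1 + x) ^ a ≤ ((1 + a) * Real.exp (x / (1 + a))) ^ a := by gcongr
    _ = (1 + a) ^ a * Real.exp (x / (1 + a) * a) := by
        rw [Real.mul_rpow (by linarith) (Real.exp_pos _).le, ← Real.exp_mul]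
    _ ≤ (1 + a) ^ a * Real.exp x := by gcongr

theorem gaussian_one_le_mul_besselWeight (ha : 0 ≤ a) (ξ : E d) :
    gaussian 1 ξ ≤ (1 + a) ^ a * besselWeight a ξ := by
  rw [gaussian, neg_one_mul]
  exact exp_neg_le_mul_one_add_rpow ha (by positivity)

theorem integral_gammaWeight_mul_heatPairing (ha : 0 < a) (hφ : Integrable φ)
    (hFT : Integrable (FT d u)) :
    ∫ t in Set.Ioi (0 : ℝ), (gammaWeight a t : ℂ) * heatPairing d t φ u =
      ∫ ξ, conj (FT d φ ξ) * (FT d u ξ * (besselWeight a ξ : ℂ)) := by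
  have hpair : Integrable fun ξ => conj (FT d φ ξ) * FT d u ξ := by
    refine hFT.bdd_mul (c := (∫⁻ x, ‖φ x‖ₑ).toReal)
      (Complex.continuous_conj.comp (continuous_FT hφ)).aestronglyMeasurable
      (ae_of_all _ fun ξ => ?_)
    rw [RCLike.norm_conj, ← toReal_enorm]
    exact ENNReal.toReal_mono hφ.hasFiniteIntegral.ne (enorm_FT_le φ ξ)
  have hprod : Integrable (Function.uncurry fun (t : ℝ) (ξ : E d) =>
      (gammaWeight a t : ℂ) * (conj (FT d φ ξ) * FT d u ξ) * (gaussian t ξ : ℂ))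
      ((volume.restrict (Set.Ioi 0)).prod volume) := by
    refine ((integrableOn_gammaWeight ha).ofReal.mul_prod hpair).mul_bdd (c := 1) ?_ ?_
    · unfold gaussian
      exact Continuous.aestronglyMeasurable (by fun_prop)
    · filter_upwards [Measure.quasiMeasurePreserving_fst.ae
        (ae_restrict_mem measurableSet_Ioi)] with q hq
      rw [Complex.norm_of_nonneg (gaussian_nonneg _ _)]
      exact gaussian_le_one (le_of_lt hq) _
  calc ∫ t in Set.Ioi (0 : ℝ), (gammaWeight a t : ℂ) * heatPairing d t φ u
      = ∫ t in Set.Ioi (0 : ℝ), ∫ ξ,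
          (gammaWeight a t : ℂ) * (conj (FT d φ ξ) * FT d u ξ) * (gaussian t ξ : ℂ) := by
        simp only [heatPairing, ← integral_const_mul, mul_assoc]
    _ = ∫ ξ, conj (FT d φ ξ) * FT d u ξ *
          ∫ t in Set.Ioi (0 : ℝ), ((gammaWeight a t * gaussian t ξ : ℝ) : ℂ) := by
        rw [integral_integral_swap hprod]
        simp only [← integral_const_mul]
        congr! 4
        push_cast
        ring
    _ = _ := by
        simp only [integral_complex_ofReal, integral_gammaWeight_mul_gaussian ha, mul_assoc]

theorem besselh_one_neg_eq_FT (k : ℝ) (u : E d → ℂ) (x : E d) :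
    besselh d 1 (-k) u x = (((2 * π) ^ d : ℝ) : ℂ)⁻¹ *
      FT d (fun ξ => FT d u ξ * (besselWeight (k / 2) ξ : ℂ)) (-x) := by
  rw [besselh, FT]
  congr! 3 with ξ
  rw [besselWeight, one_mul, neg_div, inner_neg_right, real_inner_comm]
  push_cast
  ring_nf

theorem integrable_FT_mul_besselWeight (ha : 0 ≤ a) (hFT : Integrable (FT d u)) :
    Integrable fun ξ => FT d u ξ * (besselWeight a ξ : ℂ) := by
  refine hFT.mul_bdd (c := 1) (Complex.continuous_ofReal.comp
    (continuous_besselWeight a)).aestronglyMeasurable (ae_of_all _ fun ξ => ?_)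
  rw [Complex.norm_of_nonneg (besselWeight_nonneg a ξ)]
  exact besselWeight_le_one ha ξ

theorem continuous_besselh_one_neg (hk : 0 ≤ k) (hFT : Integrable (FT d u)) :
    Continuous (besselh d 1 (-k) u) := by
  rw [funext (besselh_one_neg_eq_FT k u)]
  exact continuous_const.mul ((continuous_FT
    (integrable_FT_mul_besselWeight (by positivity) hFT)).comp continuous_neg)

theorem integral_conj_mul_besselh_one_neg (hk : 0 ≤ k) (hφ : Integrable φ)
    (hFT : Integrable (FT d u)) :
    ∫ x, conj (φ x) * besselh d 1 (-k) u x = (((2 * π) ^ d : ℝ) : ℂ)⁻¹ *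
      ∫ ξ, conj (FT d φ ξ) * (FT d u ξ * (besselWeight (k / 2) ξ : ℂ)) := by
  rw [integral_conj_FT_mul hφ (integrable_FT_mul_besselWeight (by positivity) hFT),
    ← integral_const_mul]
  simp only [besselh_one_neg_eq_FT, mul_left_comm]

theorem enorm_integral_conj_mul_besselh_one_neg_le (hk : 0 < k) (hφ : Integrable φ)
    (hFT : Integrable (FT d u)) :
    ‖∫ x, conj (φ x) * besselh d 1 (-k) u x‖ₑ ≤ ENNReal.ofReal ((2 * π) ^ d)⁻¹ *
      ∫⁻ t in Set.Ioi (0 : ℝ), ENNReal.ofReal (gammaWeight (k / 2) t) * ‖heatPairing d t φ u‖ₑ := by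
  have ha : 0 < k / 2 := by positivity
  rw [integral_conj_mul_besselh_one_neg hk.le hφ hFT,
    ← integral_gammaWeight_mul_heatPairing ha hφ hFT, enorm_mul, ← Complex.ofReal_inv,
    ← ofReal_norm ((_ : ℝ) : ℂ), Complex.norm_of_nonneg (by positivity)]
  gcongr
  refine (enorm_integral_le_lintegral_enorm _).trans_eq
    (setLIntegral_congr_fun measurableSet_Ioi fun t ht => ?_)
  rw [enorm_mul, ← ofReal_norm ((_ : ℝ) : ℂ),
    Complex.norm_of_nonneg (gammaWeight_nonneg ha ht)]

end Bessel

section BesselPairing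

variable {d : ℕ} {a k p r t : ℝ} {φ u : E d → ℂ}

theorem besselWeight_rpow_le_norm_rpow (hr0 : 0 < r) (hr2 : r ≤ 2)
    (ha : d * (2 / r - 1) / 2 ≤ a) {ξ : E d} (hξ : ξ ≠ 0) :
    besselWeight a ξ ^ r ≤ ‖ξ‖ ^ (d * (r - 2)) := by
  have hnorm : 0 < ‖ξ‖ := norm_pos_iff.2 hξ
  have hexp : -a * r ≤ d * (r - 2) / 2 := by
    have := mul_le_mul_of_nonneg_right ha hr0.le
    have heq : d * (2 / r - 1) / 2 * r = d * (2 - r) / 2 := by field_simp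
    linarith
  calc besselWeight a ξ ^ r = (1 + ‖ξ‖ ^ 2) ^ (-a * r) :=
        (Real.rpow_mul (by positivity) _ _).symm
    _ ≤ (1 + ‖ξ‖ ^ 2) ^ (d * (r - 2) / 2) :=
        Real.rpow_le_rpow_of_exponent_le (le_add_of_nonneg_right (by positivity)) hexp
    _ ≤ (‖ξ‖ ^ 2) ^ (d * (r - 2) / 2) :=
        Real.rpow_le_rpow_of_nonpos (by positivity) (by linarith) (by
          have : d * (r - 2) ≤ 0 := mul_nonpos_of_nonneg_of_nonpos d.cast_nonneg (by linarith)
          linarith)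
    _ = ‖ξ‖ ^ (d * (r - 2)) := by
        rw [← Real.rpow_two, ← Real.rpow_mul hnorm.le, mul_div_cancel₀ _ two_ne_zero]

theorem exists_lintegral_enorm_FT_mul_besselWeight_rpow_le (hd : 1 ≤ d) (hr1 : 1 < r) (hr2 : r < 2)
    (ha : d * (2 / r - 1) / 2 ≤ a) :
    ∃ C : ℝ≥0, ∀ u : E d → ℂ, Integrable u →
      ∫⁻ ξ, (‖FT d u ξ‖ₑ * ENNReal.ofReal (besselWeight a ξ)) ^ r ≤ C * ∫⁻ y, ‖u y‖ₑ ^ r := by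
  obtain ⟨C, hC⟩ := exists_lintegral_enorm_FT_rpow_mul_le hd hr1 hr2
  have : Nonempty (Fin d) := ⟨⟨0, hd⟩⟩
  have hr0 : 0 < r := by linarith
  refine ⟨C, fun u hu => (lintegral_mono_ae ?_).trans (hC u hu)⟩
  filter_upwards [compl_mem_ae_iff.2 (measure_singleton (0 : E d))] with ξ hξ
  rw [ENNReal.mul_rpow_of_nonneg _ _ hr0.le,
    ENNReal.ofReal_rpow_of_nonneg (besselWeight_nonneg a ξ) hr0.le]
  gcongr
  exact besselWeight_rpow_le_norm_rpow hr0 hr2.le ha hξ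

theorem exists_lintegral_gaussSTFT_mul_besselWeight_rpow_le (hd : 1 ≤ d) (hr1 : 1 < r)
    (hr2 : r < 2) (ha : d * (2 / r - 1) / 2 ≤ a) :
    ∃ C : ℝ≥0, ∀ b : ℝ, 0 < b → ∀ φ : E d → ℂ, Integrable φ →
      ∫⁻ z : P d, (‖gaussSTFT d b φ z‖ₑ * ENNReal.ofReal (besselWeight a z.2)) ^ r ≤
        C * ENNReal.ofReal ((π / (b * r)) ^ ((d : ℝ) / 2)) * ∫⁻ y, ‖φ y‖ₑ ^ r := by
  obtain ⟨C, hC⟩ := exists_lintegral_enorm_FT_mul_besselWeight_rpow_le hd hr1 hr2 ha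
  refine ⟨C, fun b hb φ hφ => ?_⟩
  have hr0 : 0 < r := by linarith
  have hmeas : Measurable fun z : P d =>
      (‖gaussSTFT d b φ z‖ₑ * ENNReal.ofReal (besselWeight a z.2)) ^ r := by
    have hφm := (continuous_gaussSTFT hb.le hφ).measurable
    have hw := (continuous_besselWeight (d := d) a).measurable
    fun_prop
  calc ∫⁻ z : P d, (‖gaussSTFT d b φ z‖ₑ * ENNReal.ofReal (besselWeight a z.2)) ^ r
      = ∫⁻ x, ∫⁻ ξ, (‖gaussSTFT d b φ (x, ξ)‖ₑ * ENNReal.ofReal (besselWeight a ξ)) ^ r :=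
        lintegral_prod _ hmeas.aemeasurable
    _ ≤ ∫⁻ x, C * ∫⁻ y, ENNReal.ofReal (gaussian (b * r) (y - x)) * ‖φ y‖ₑ ^ r := by
        refine lintegral_mono fun x => (hC _ (integrable_mul_gaussian hb.le hφ x)).trans_eq ?_
        congr! 3 with y
        rw [enorm_mul, enorm_ofReal_gaussian, ENNReal.mul_rpow_of_nonneg _ _ hr0.le, mul_comm,
          ENNReal.ofReal_rpow_of_nonneg (gaussian_nonneg b _) hr0.le, gaussian_rpow]
    _ = _ := by
        rw [lintegral_const_mul' _ _ ENNReal.coe_ne_top, lintegral_lintegral_mul_gaussian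
          (by positivity) (hφ.aestronglyMeasurable.enorm.pow_const r), finrank_euclideanSpace_fin,
          mul_assoc]

theorem exists_lintegral_gaussSTFT_mul_gaussSTFT_mul_besselWeight_le (hd : 1 ≤ d)
    (hpr : p.HolderConjugate r) (hr2 : r < 2) (ha : d * (2 / r - 1) / 2 ≤ a) :
    ∃ C : ℝ≥0, ∀ b c : ℝ, 0 < b → 0 < c → ∀ φ u : E d → ℂ, Integrable φ → Integrable u →
      ∫⁻ z : P d, ‖gaussSTFT d b φ z‖ₑ * ‖gaussSTFT d c u z‖ₑ *
          ENNReal.ofReal (besselWeight a z.2) ≤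
        C * ENNReal.ofReal (b ^ (-(d / (2 * r)) : ℝ)) *
          (eLpNorm' (gaussSTFT d c u) p volume * eLpNorm' φ r volume) := by
  have hr1 : 1 < r := hpr.symm.lt
  have hr : 0 ≤ 1 / r := by positivity
  obtain ⟨C, hC⟩ := exists_lintegral_gaussSTFT_mul_besselWeight_rpow_le hd hr1 hr2 ha
  obtain ⟨K, hK⟩ : ∃ K : ℝ≥0, (K : ℝ≥0∞) =
      (C : ℝ≥0∞) ^ (1 / r) * ENNReal.ofReal ((π / r) ^ (d / (2 * r) : ℝ)) :=
    ENNReal.canLift.prf _ (by finiteness)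
  refine ⟨K, fun b c hb hc φ u hφ hu => ?_⟩
  have hφm := (continuous_gaussSTFT hb.le hφ).measurable
  have hum := (continuous_gaussSTFT hc.le hu).measurable
  have hw := (continuous_besselWeight (d := d) a).measurable
  have hconst : (ENNReal.ofReal ((π / (b * r)) ^ ((d : ℝ) / 2))) ^ (1 / r) =
      ENNReal.ofReal ((π / r) ^ (d / (2 * r) : ℝ)) *
        ENNReal.ofReal (b ^ (-(d / (2 * r)) : ℝ)) := by
    rw [ENNReal.ofReal_rpow_of_nonneg (by positivity) hr, ← Real.rpow_mul (by positivity),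
      ← ENNReal.ofReal_mul (by positivity), show (d : ℝ) / 2 * (1 / r) = d / (2 * r) by field_simp,
      mul_comm b, ← div_div, Real.div_rpow (by positivity) hb.le, Real.rpow_neg hb.le,
      div_eq_mul_inv]
  calc ∫⁻ z : P d, ‖gaussSTFT d b φ z‖ₑ * ‖gaussSTFT d c u z‖ₑ *
          ENNReal.ofReal (besselWeight a z.2)
      = ∫⁻ z : P d, ‖gaussSTFT d c u z‖ₑ *
          (‖gaussSTFT d b φ z‖ₑ * ENNReal.ofReal (besselWeight a z.2)) := by
        simp only [mul_assoc, mul_left_comm]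
    _ ≤ eLpNorm' (gaussSTFT d c u) p volume * (∫⁻ z : P d,
          (‖gaussSTFT d b φ z‖ₑ * ENNReal.ofReal (besselWeight a z.2)) ^ r) ^ (1 / r) :=
        ENNReal.lintegral_mul_le_Lp_mul_Lq volume hpr (by fun_prop) (by fun_prop)
    _ ≤ eLpNorm' (gaussSTFT d c u) p volume *
          (C * ENNReal.ofReal ((π / (b * r)) ^ ((d : ℝ) / 2)) * ∫⁻ y, ‖φ y‖ₑ ^ r) ^ (1 / r) := by
        gcongr
        exact hC b hb φ hφ
    _ = _ := by
        rw [ENNReal.mul_rpow_of_nonneg _ _ hr, ENNReal.mul_rpow_of_nonneg _ _ hr, hconst, hK,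
          eLpNorm', eLpNorm']
        ring

theorem enorm_heatPairing_le_of_le_half (ht : 0 < t) (ht' : t ≤ 1 / 2) (hφ : Integrable φ)
    (hu : Integrable u) :
    ‖heatPairing d t φ u‖ₑ ≤ ∫⁻ z : P d, ‖gaussSTFT d (1 / 2) φ z‖ₑ *
      ‖gaussSTFT d (1 / 2) u z‖ₑ * ENNReal.ofReal (gaussian t z.2) := by
  have h1t : 0 < 1 - t := by linarith
  have hle : t ≤ t / (1 - t) := by
    rw [le_div_iff₀ h1t]
    nlinarith
  have hle' : t / (1 - t) ≤ π * t := by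
    rw [div_le_iff₀ h1t]
    nlinarith [Real.pi_gt_three, mul_le_mul_of_nonneg_left ht' ht.le]
  refine (enorm_heatPairing_le_lintegral_gaussSTFT (b := 1 / 2) (c := 1 / 2) (s := t / (1 - t))
    (by positivity) (by positivity) (by positivity) ht (by field_simp; ring) (by linarith)
    hφ hu).trans ?_
  gcongr with z
  exact gaussian_le_gaussian hle _

-- Windows of fixed width cannot reproduce the heat kernel at large times, so the window on `φ` is
-- widened with `t`; the loss is a power of `t`, which the exponential in `gammaWeight` absorbs.
theorem enorm_heatPairing_le_of_half_lt (ht : 1 / 2 < t) (hφ : Integrable φ)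
    (hu : Integrable u) :
    ‖heatPairing d t φ u‖ₑ ≤ ∫⁻ z : P d, ‖gaussSTFT d (1 / (8 * t - 2)) φ z‖ₑ *
      ‖gaussSTFT d (1 / 2) u z‖ₑ * ENNReal.ofReal (gaussian 1 z.2) := by
  have h8 : 0 < 8 * t - 2 := by linarith
  have hsum : 1 / (8 * t - 2) + 1 / 2 = 4 * t / (8 * t - 2) := by
    field_simp
    ring
  have hpar : 1 / (4 * t) =
      1 / (8 * t - 2) * (1 / 2) / (1 / (8 * t - 2) + 1 / 2) + 1 / (4 * (2 * t)) := by
    rw [hsum]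
    field_simp
    rw [mul_comm t, div_self h8.ne']
    norm_num
  have hle : 2 * t * (1 / (8 * t - 2) + 1 / 2) ≤ π * t := by
    rw [hsum, mul_div_assoc', div_le_iff₀ h8]
    nlinarith [mul_lt_mul_of_pos_right Real.pi_gt_three (mul_pos (one_half_pos.trans ht) h8)]
  refine (enorm_heatPairing_le_lintegral_gaussSTFT (by positivity) (by norm_num) (by linarith)
    (by linarith) hpar hle hφ hu).trans ?_
  gcongr with z
  exact gaussian_le_gaussian (by linarith) _

theorem setLIntegral_Ioc_gammaWeight_mul_heatPairing_le (ha : 0 < a) (hφ : Integrable φ)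
    (hu : Integrable u) :
    ∫⁻ t in Set.Ioc (0 : ℝ) (1 / 2), ENNReal.ofReal (gammaWeight a t) * ‖heatPairing d t φ u‖ₑ ≤
      ∫⁻ z : P d, ‖gaussSTFT d (1 / 2) φ z‖ₑ * ‖gaussSTFT d (1 / 2) u z‖ₑ *
        ENNReal.ofReal (besselWeight a z.2) := by
  set F : P d → ℝ≥0∞ := fun z => ‖gaussSTFT d (1 / 2) φ z‖ₑ * ‖gaussSTFT d (1 / 2) u z‖ₑ
  have hF : Measurable F := (continuous_gaussSTFT one_half_pos.le hφ).measurable.enorm.mul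
    (continuous_gaussSTFT one_half_pos.le hu).measurable.enorm
  have hmeas : Measurable fun q : ℝ × P d =>
      F q.2 * ENNReal.ofReal (gammaWeight a q.1 * gaussian q.1 q.2.2) := by
    unfold gammaWeight gaussian
    fun_prop
  calc ∫⁻ t in Set.Ioc (0 : ℝ) (1 / 2), ENNReal.ofReal (gammaWeight a t) * ‖heatPairing d t φ u‖ₑ
      ≤ ∫⁻ t in Set.Ioc (0 : ℝ) (1 / 2), ∫⁻ z : P d,
          F z * ENNReal.ofReal (gammaWeight a t * gaussian t z.2) := by
        refine setLIntegral_mono' measurableSet_Ioc fun t ht => ?_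
        simp only [ENNReal.ofReal_mul (gammaWeight_nonneg ha ht.1),
          mul_left_comm (F _) (ENNReal.ofReal (gammaWeight a t))]
        rw [lintegral_const_mul' _ _ (by finiteness)]
        gcongr
        exact enorm_heatPairing_le_of_le_half ht.1 ht.2 hφ hu
    _ ≤ ∫⁻ t in Set.Ioi (0 : ℝ), ∫⁻ z : P d,
          F z * ENNReal.ofReal (gammaWeight a t * gaussian t z.2) :=
        lintegral_mono_set Set.Ioc_subset_Ioi_self
    _ = ∫⁻ z : P d, ∫⁻ t in Set.Ioi (0 : ℝ),
          F z * ENNReal.ofReal (gammaWeight a t * gaussian t z.2) :=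
        lintegral_lintegral_swap hmeas.aemeasurable
    _ = _ := by
        refine lintegral_congr fun z => ?_
        rw [lintegral_const_mul' _ _ (by finiteness), lintegral_gammaWeight_mul_gaussian ha]

theorem setLIntegral_Ioi_gammaWeight_mul_rpow_ne_top {β : ℝ} (ha : 0 < a) (hβ : 0 ≤ β) :
    ∫⁻ t in Set.Ioi (1 / 2 : ℝ), ENNReal.ofReal (gammaWeight a t) *
      ENNReal.ofReal ((1 / (8 * t - 2)) ^ (-β)) ≠ ∞ := by
  have hint : IntegrableOn (fun t => 8 ^ β / Real.Gamma a * (Real.exp (-t) * t ^ (a + β - 1)))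
      (Set.Ioi (1 / 2)) :=
    IntegrableOn.mono_set
      ((Real.GammaIntegral_convergent (add_pos_of_pos_of_nonneg ha hβ)).const_mul _)
      (Set.Ioi_subset_Ioi one_half_pos.le)
  refine ne_top_of_le_ne_top hint.lintegral_lt_top.ne
    (setLIntegral_mono' measurableSet_Ioi fun t (ht : 1 / 2 < t) => ?_)
  have ht0 : 0 < t := by linarith
  have h8 : 0 < 8 * t - 2 := by linarith
  rw [← ENNReal.ofReal_mul (gammaWeight_nonneg ha ht0)]
  refine ENNReal.ofReal_le_ofReal ?_
  calc gammaWeight a t * (1 / (8 * t - 2)) ^ (-β) = gammaWeight a t * (8 * t - 2) ^ β := by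
        rw [one_div, Real.inv_rpow h8.le, Real.rpow_neg h8.le, inv_inv]
    _ ≤ gammaWeight a t * (8 * t) ^ β := by
        gcongr
        · exact gammaWeight_nonneg ha ht0
        · linarith
    _ = 8 ^ β / Real.Gamma a * (Real.exp (-t) * t ^ (a + β - 1)) := by
        rw [show a + β - 1 = a - 1 + β by ring, Real.rpow_add ht0,
          Real.mul_rpow (by norm_num) ht0.le, gammaWeight]
        ring

theorem exists_setLIntegral_Ioi_gammaWeight_mul_heatPairing_le (hd : 1 ≤ d)
    (hpr : p.HolderConjugate r) (hr2 : r < 2) (ha : d * (2 / r - 1) / 2 ≤ a) (ha0 : 0 < a) :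
    ∃ C : ℝ≥0, ∀ φ u : E d → ℂ, Integrable φ → Integrable u →
      ∫⁻ t in Set.Ioi (1 / 2 : ℝ), ENNReal.ofReal (gammaWeight a t) * ‖heatPairing d t φ u‖ₑ ≤
        C * (eLpNorm' (gaussSTFT d (1 / 2) u) p volume * eLpNorm' φ r volume) := by
  obtain ⟨C, hC⟩ := exists_lintegral_gaussSTFT_mul_gaussSTFT_mul_besselWeight_le hd hpr hr2 ha
  have hβ : 0 ≤ d / (2 * r) := by have := hpr.symm.pos; positivity
  set I := ∫⁻ t in Set.Ioi (1 / 2 : ℝ), ENNReal.ofReal (gammaWeight a t) *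
    ENNReal.ofReal ((1 / (8 * t - 2)) ^ (-(d / (2 * r))))
  have hI : I ≠ ∞ := setLIntegral_Ioi_gammaWeight_mul_rpow_ne_top ha0 hβ
  obtain ⟨K, hK⟩ : ∃ K : ℝ≥0, (K : ℝ≥0∞) = I * (ENNReal.ofReal ((1 + a) ^ a) * C) :=
    ENNReal.canLift.prf _ (by finiteness)
  refine ⟨K, fun φ u hφ hu => ?_⟩
  set N := eLpNorm' (gaussSTFT d (1 / 2) u) p volume * eLpNorm' φ r volume
  rw [hK, mul_assoc]
  refine (setLIntegral_mono' measurableSet_Ioi fun t (ht : 1 / 2 < t) => ?_).trans_eq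
    (lintegral_mul_const'' _ ?_)
  · have h8 : 0 < 8 * t - 2 := by linarith
    rw [mul_assoc (ENNReal.ofReal (gammaWeight a t))]
    gcongr ENNReal.ofReal (gammaWeight a t) * ?_
    calc ‖heatPairing d t φ u‖ₑ
        ≤ ∫⁻ z : P d, ENNReal.ofReal ((1 + a) ^ a) * (‖gaussSTFT d (1 / (8 * t - 2)) φ z‖ₑ *
            ‖gaussSTFT d (1 / 2) u z‖ₑ * ENNReal.ofReal (besselWeight a z.2)) := by
          refine (enorm_heatPairing_le_of_half_lt ht hφ hu).trans (lintegral_mono fun z => ?_)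
          rw [mul_left_comm, ← ENNReal.ofReal_mul (by positivity)]
          gcongr
          exact gaussian_one_le_mul_besselWeight ha0.le _
      _ ≤ ENNReal.ofReal ((1 + a) ^ a) *
            (C * ENNReal.ofReal ((1 / (8 * t - 2)) ^ (-(d / (2 * r)))) * N) := by
          rw [lintegral_const_mul' _ _ (by finiteness)]
          gcongr
          exact hC _ _ (by positivity) one_half_pos φ u hφ hu
      _ = _ := by ring
  · unfold gammaWeight
    fun_prop

theorem exists_enorm_integral_conj_mul_besselh_one_neg_le (hd : 1 ≤ d)
    (hpr : p.HolderConjugate r) (hr2 : r < 2) (hk : d * (2 / r - 1) ≤ k) :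
    ∃ C : ℝ≥0, ∀ φ u : E d → ℂ, Integrable φ → Integrable u → Integrable (FT d u) →
      ‖∫ x, conj (φ x) * besselh d 1 (-k) u x‖ₑ ≤
        C * eLpNorm' (stft d u) p volume * eLpNorm' φ r volume := by
  have hr0 : 0 < r := hpr.symm.pos
  have hk0 : 0 < k := by
    have : (0 : ℝ) < d := by exact_mod_cast hd
    have : 0 < 2 / r - 1 := sub_pos.2 ((one_lt_div hr0).2 hr2)
    exact (by positivity : 0 < d * (2 / r - 1)).trans_le hk
  have ha : d * (2 / r - 1) / 2 ≤ k / 2 := by linarith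
  obtain ⟨C₁, h₁⟩ := exists_lintegral_gaussSTFT_mul_gaussSTFT_mul_besselWeight_le hd hpr hr2 ha
  obtain ⟨C₂, h₂⟩ := exists_setLIntegral_Ioi_gammaWeight_mul_heatPairing_le hd hpr hr2 ha
    (by positivity)
  obtain ⟨C, hC⟩ : ∃ C : ℝ≥0, (C : ℝ≥0∞) = ENNReal.ofReal ((2 * π) ^ d)⁻¹ *
      (C₁ * ENNReal.ofReal ((1 / 2) ^ (-(d / (2 * r)) : ℝ)) + C₂) :=
    ENNReal.canLift.prf _ (by finiteness)
  refine ⟨C, fun φ u hφ hu hFT => ?_⟩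
  rw [stft_eq_gaussSTFT, mul_assoc, hC, mul_assoc, add_mul]
  refine (enorm_integral_conj_mul_besselh_one_neg_le hk0 hφ hFT).trans ?_
  gcongr ENNReal.ofReal _ * ?_
  rw [← Set.Ioc_union_Ioi_eq_Ioi one_half_pos.le]
  refine (lintegral_union_le _ _ _).trans (add_le_add ?_ (h₂ φ u hφ hu))
  exact (setLIntegral_Ioc_gammaWeight_mul_heatPairing_le (by positivity) hφ hu).trans
    (h₁ _ _ one_half_pos one_half_pos φ u hφ hu)

end BesselPairing

section Energy

theorem memLp_of_integrable_of_bound {α F : Type*} [MeasurableSpace α] [NormedAddCommGroup F]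
    {μ : Measure α} {f : α → F} {C p : ℝ} (hf : Integrable f μ) (hC : ∀ x, ‖f x‖ ≤ C)
    (hp : 1 ≤ p) : MemLp f (ENNReal.ofReal p) μ := by
  rw [← integrable_norm_rpow_iff hf.aestronglyMeasurable (by simpa using zero_lt_one.trans_le hp)
    ENNReal.ofReal_ne_top, ENNReal.toReal_ofReal (zero_le_one.trans hp)]
  refine (hf.norm.const_mul (C ^ (p - 1))).mono'
    (hf.norm.aemeasurable.pow_const p).aestronglyMeasurable (ae_of_all _ fun x => ?_)
  have hsplit : ‖f x‖ ^ p = ‖f x‖ ^ (p - 1) * ‖f x‖ := by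
    rw [← Real.rpow_add_one' (norm_nonneg _) (by linarith), sub_add_cancel]
  rw [Real.norm_of_nonneg (by positivity), hsplit]
  gcongr
  exact hC x

variable {d : ℕ} {p k : ℝ} {φ u : E d → ℂ}

theorem memLp_of_integrable_FT (hc : Continuous u) (hu : Integrable u)
    (hFT : Integrable (FT d u)) (hp : 1 ≤ p) : MemLp u (ENNReal.ofReal p) := by
  have hfourier : Integrable (𝓕 u) := by
    rw [funext (FT_eq_fourier u)] at hFT
    exact (integrable_comp_smul_iff volume _ (by positivity)).1 hFT
  refine memLp_of_integrable_of_bound (C := ∫ ξ, ‖𝓕 u ξ‖) hu (fun x => ?_) hp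
  calc ‖u x‖ = ‖𝓕⁻ (𝓕 u) x‖ := by rw [hc.fourierInv_fourier_eq hu hfourier]
    _ ≤ ∫ ξ, ‖Complex.exp (↑(2 * π * ⟪ξ, x⟫) * Complex.I) • 𝓕 u ξ‖ := by
      rw [Real.fourierInv_eq']
      exact norm_integral_le_integral_norm _
    _ = ∫ ξ, ‖𝓕 u ξ‖ := by simp only [norm_smul, Complex.norm_exp_ofReal_mul_I, one_mul]

theorem enorm_integral_conj_mul_besselh_one_neg_le_lintegral_FT (hk : 0 ≤ k) (hφ : Integrable φ)
    (hFT : Integrable (FT d u)) :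
    ‖∫ x, conj (φ x) * besselh d 1 (-k) u x‖ₑ ≤
      ENNReal.ofReal ((2 * π) ^ d)⁻¹ * ∫⁻ ξ, ‖FT d φ ξ‖ₑ * ‖FT d u ξ‖ₑ := by
  rw [integral_conj_mul_besselh_one_neg hk hφ hFT, enorm_mul, ← Complex.ofReal_inv,
    ← ofReal_norm ((_ : ℝ) : ℂ), Complex.norm_of_nonneg (by positivity)]
  gcongr
  refine (enorm_integral_le_lintegral_enorm _).trans (lintegral_mono fun ξ => ?_)
  rw [enorm_mul, enorm_mul, RCLike.enorm_conj, ← ofReal_norm ((_ : ℝ) : ℂ),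
    Complex.norm_of_nonneg (besselWeight_nonneg _ ξ)]
  gcongr
  exact mul_le_of_le_one_right' (ENNReal.ofReal_le_one.2 (besselWeight_le_one (by positivity) ξ))

theorem exists_enorm_integral_conj_mul_besselh_one_neg_le_two (d : ℕ) (hk : 0 ≤ k) :
    ∃ C : ℝ≥0, ∀ φ u : E d → ℂ, Integrable φ → Integrable u → MemLp u 2 →
      Integrable (FT d u) →
      ‖∫ x, conj (φ x) * besselh d 1 (-k) u x‖ₑ ≤
        C * eLpNorm' (stft d u) 2 volume * eLpNorm' φ 2 volume := by
  set B := ENNReal.ofReal (2 * π) ^ d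
  set A := ENNReal.ofReal ((π / (2 * (1 / 2))) ^ ((d : ℝ) / 2))
  have hA : A ≠ 0 := (ENNReal.ofReal_pos.2 (by positivity)).ne'
  obtain ⟨C, hC⟩ : ∃ C : ℝ≥0, (C : ℝ≥0∞) =
      ENNReal.ofReal ((2 * π) ^ d)⁻¹ * B ^ (1 / 2 : ℝ) * A⁻¹ ^ (1 / 2 : ℝ) :=
    ENNReal.canLift.prf _ (by finiteness)
  refine ⟨C, fun φ u hφ hu hu2 hFT => ?_⟩
  have hFTu : ∫⁻ ξ, ‖FT d u ξ‖ₑ ^ (2 : ℝ) = A⁻¹ * ∫⁻ z, ‖stft d u z‖ₑ ^ (2 : ℝ) := by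
    rw [stft_eq_gaussSTFT, lintegral_gaussSTFT_sq_eq one_half_pos hu hu2,
      lintegral_enorm_FT_sq_eq hu hu2, mul_right_comm, mul_comm A⁻¹,
      ENNReal.mul_inv_cancel_right hA (by finiteness)]
  calc ‖∫ x, conj (φ x) * besselh d 1 (-k) u x‖ₑ
      ≤ ENNReal.ofReal ((2 * π) ^ d)⁻¹ * ∫⁻ ξ, ‖FT d φ ξ‖ₑ * ‖FT d u ξ‖ₑ :=
        enorm_integral_conj_mul_besselh_one_neg_le_lintegral_FT hk hφ hFT
    _ ≤ ENNReal.ofReal ((2 * π) ^ d)⁻¹ * ((∫⁻ ξ, ‖FT d φ ξ‖ₑ ^ (2 : ℝ)) ^ (1 / 2 : ℝ) *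
          (∫⁻ ξ, ‖FT d u ξ‖ₑ ^ (2 : ℝ)) ^ (1 / 2 : ℝ)) := by
        gcongr
        exact ENNReal.lintegral_mul_le_Lp_mul_Lq volume .two_two
          (continuous_FT hφ).enorm.aemeasurable (continuous_FT hu).enorm.aemeasurable
    _ ≤ ENNReal.ofReal ((2 * π) ^ d)⁻¹ * ((B * ∫⁻ x, ‖φ x‖ₑ ^ (2 : ℝ)) ^ (1 / 2 : ℝ) *
          (A⁻¹ * ∫⁻ z, ‖stft d u z‖ₑ ^ (2 : ℝ)) ^ (1 / 2 : ℝ)) := by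
        rw [hFTu]
        gcongr
        exact lintegral_enorm_FT_sq_le hφ
    _ = C * eLpNorm' (stft d u) 2 volume * eLpNorm' φ 2 volume := by
        rw [hC, eLpNorm'_eq_lintegral_enorm, eLpNorm'_eq_lintegral_enorm,
          ENNReal.mul_rpow_of_nonneg _ _ one_half_pos.le,
          ENNReal.mul_rpow_of_nonneg _ _ one_half_pos.le]
        ring

end Energy

section Duality

variable {α : Type*} [MeasurableSpace α] {μ : Measure α} {p r : ℝ} {G : α → ℂ} {K : ℝ≥0∞}

theorem conj_mul_rpow_sub_two_mul_self (hp : 0 < p) (z : ℂ) :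
    conj (z * (‖z‖ ^ (p - 2) : ℝ)) * z = ((‖z‖ ^ p : ℝ) : ℂ) := by
  rw [map_mul, Complex.conj_ofReal, mul_right_comm, Complex.conj_mul']
  norm_cast
  rw [← Real.rpow_two, ← Real.rpow_add' (norm_nonneg _) (by linarith), add_sub_cancel]

theorem norm_mul_rpow_sub_two (hp : 1 < p) (z : ℂ) :
    ‖z * (‖z‖ ^ (p - 2) : ℝ)‖ = ‖z‖ ^ (p - 1) := by
  rw [norm_mul, Complex.norm_of_nonneg (by positivity),
    ← Real.rpow_one_add' (norm_nonneg _) (by linarith)]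
  congr 1
  ring

theorem enorm_mul_rpow_sub_two_rpow (hpr : p.HolderConjugate r) (z : ℂ) :
    ‖z * (‖z‖ ^ (p - 2) : ℝ)‖ₑ ^ r = ‖z‖ₑ ^ p := by
  rw [← ofReal_norm, norm_mul_rpow_sub_two hpr.lt,
    ← ENNReal.ofReal_rpow_of_nonneg (norm_nonneg _) hpr.sub_one_pos.le, ofReal_norm,
    ← ENNReal.rpow_mul, hpr.sub_one_mul_conj]

theorem le_rpow_of_le_mul_rpow_one_div (hpr : p.HolderConjugate r) {X : ℝ≥0∞} (hX : X ≠ ∞)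
    (h : X ≤ K * X ^ (1 / r)) : X ≤ K ^ p := by
  rcases eq_or_ne X 0 with rfl | hX0
  · exact zero_le
  have : 0 < r := hpr.symm.pos
  rw [← ENNReal.rpow_inv_le_iff hpr.pos, ← ENNReal.mul_le_mul_iff_left
    (by simp [ENNReal.rpow_eq_zero_iff, hX0, hX] : X ^ (1 / r) ≠ 0) (by finiteness)]
  refine le_of_eq_of_le ?_ h
  rw [← ENNReal.rpow_add _ _ hX0 hX, one_div, hpr.inv_add_inv_eq_one, ENNReal.rpow_one]

theorem lintegral_enorm_rpow_le_of_pairing_le [IsFiniteMeasure μ] (hpr : p.HolderConjugate r)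
    (hG : Measurable G) {c : ℝ} (hc : ∀ᵐ x ∂μ, ‖G x‖ ≤ c)
    (H : ∀ φ : α → ℂ, Integrable φ μ → ‖∫ x, conj (φ x) * G x ∂μ‖ₑ ≤ K * eLpNorm' φ r μ) :
    ∫⁻ x, ‖G x‖ₑ ^ p ∂μ ≤ K ^ p := by
  set ψ : α → ℂ := fun x => G x * (‖G x‖ ^ (p - 2) : ℝ)
  have hbound : ∀ q : ℝ, 0 ≤ q → ∀ᵐ x ∂μ, ‖G x‖ ^ q ≤ c ^ q := fun q hq =>
    hc.mono fun x hx => Real.rpow_le_rpow (norm_nonneg _) hx hq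
  have hpow : Integrable (fun x => ‖G x‖ ^ p) μ := by
    refine Integrable.of_bound (C := c ^ p) (hG.norm.pow_const p).aestronglyMeasurable ?_
    filter_upwards [hbound p hpr.nonneg] with x hx
    rwa [Real.norm_of_nonneg (by positivity)]
  have hψ : Integrable ψ μ := by
    refine Integrable.of_bound (C := c ^ (p - 1)) (Measurable.aestronglyMeasurable (by fun_prop)) ?_
    simpa only [ψ, norm_mul_rpow_sub_two hpr.lt] using hbound (p - 1) hpr.sub_one_pos.le
  set X := ∫⁻ x, ‖G x‖ₑ ^ p ∂μ
  have hX : ENNReal.ofReal (∫ x, ‖G x‖ ^ p ∂μ) = X := by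
    rw [ofReal_integral_eq_lintegral_ofReal hpow (ae_of_all _ fun x => by positivity)]
    simp only [← ENNReal.ofReal_rpow_of_nonneg (norm_nonneg _) hpr.nonneg, ofReal_norm, X]
  have hpair : ‖∫ x, conj (ψ x) * G x ∂μ‖ₑ = X := by
    simp only [ψ, conj_mul_rpow_sub_two_mul_self hpr.pos]
    rw [integral_complex_ofReal, ← hX, ← ofReal_norm,
      Complex.norm_of_nonneg (integral_nonneg fun x => by positivity)]
  have hnorm : eLpNorm' ψ r μ = X ^ (1 / r) := by
    simp only [eLpNorm'_eq_lintegral_enorm, ψ, enorm_mul_rpow_sub_two_rpow hpr, X]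
  refine le_rpow_of_le_mul_rpow_one_div hpr (hX ▸ ENNReal.ofReal_ne_top) ?_
  rw [← hnorm, ← hpair]
  exact H ψ hψ

theorem enorm_setIntegral_conj_mul_le_of_pairing_le (hr : 0 < r)
    (H : ∀ φ : α → ℂ, Integrable φ μ → ‖∫ x, conj (φ x) * G x ∂μ‖ₑ ≤ K * eLpNorm' φ r μ)
    {s : Set α} (hs : MeasurableSet s) {φ : α → ℂ} (hφ : IntegrableOn φ s μ) :
    ‖∫ x in s, conj (φ x) * G x ∂μ‖ₑ ≤ K * eLpNorm' φ r (μ.restrict s) := by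
  have hpair : (fun x => conj (s.indicator φ x) * G x) =
      s.indicator fun x => conj (φ x) * G x := by
    ext x
    by_cases hx : x ∈ s <;> simp [hx]
  have hnorm : (fun x => ‖s.indicator φ x‖ₑ ^ r) = s.indicator fun x => ‖φ x‖ₑ ^ r := by
    ext x
    by_cases hx : x ∈ s <;> simp [hx, hr]
  have h := H _ (hφ.integrable_indicator hs)
  rwa [hpair, integral_indicator hs, eLpNorm'_eq_lintegral_enorm, hnorm, lintegral_indicator hs,
    ← eLpNorm'_eq_lintegral_enorm] at h

theorem eLpNorm'_le_of_pairing_le [SigmaFinite μ]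
    (hpr : p.HolderConjugate r) (hG : Measurable G)
    (H : ∀ φ : α → ℂ, Integrable φ μ → ‖∫ x, conj (φ x) * G x ∂μ‖ₑ ≤ K * eLpNorm' φ r μ) :
    eLpNorm' G p μ ≤ K := by
  set s : ℕ → Set α := fun n => spanningSets μ n ∩ {x | ‖G x‖ ≤ n}
  have hs : Monotone s := fun m n hmn => Set.inter_subset_inter (monotone_spanningSets μ hmn)
    fun x (hx : ‖G x‖ ≤ m) => hx.trans (by exact_mod_cast hmn)
  have hunion : ⋃ n, s n = Set.univ := by
    refine Set.eq_univ_of_forall fun x => ?_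
    obtain ⟨m, hm⟩ := Set.mem_iUnion.1 ((iUnion_spanningSets μ).symm ▸ Set.mem_univ x)
    obtain ⟨n, hn⟩ := exists_nat_ge ‖G x‖
    exact Set.mem_iUnion.2 ⟨max m n, monotone_spanningSets μ (le_max_left m n) hm,
      hn.trans (by exact_mod_cast le_max_right m n)⟩
  rw [eLpNorm'_eq_lintegral_enorm, one_div, ENNReal.rpow_inv_le_iff hpr.pos,
    ← setLIntegral_univ, ← hunion, setLIntegral_iUnion_of_directed _ hs.directed_le]
  refine iSup_le fun n => ?_
  have hsn : MeasurableSet (s n) :=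
    (measurableSet_spanningSets μ n).inter (measurableSet_le hG.norm measurable_const)
  have : IsFiniteMeasure (μ.restrict (s n)) := isFiniteMeasure_restrict.2
    (measure_ne_top_of_subset Set.inter_subset_left (measure_spanningSets_lt_top μ n).ne)
  exact lintegral_enorm_rpow_le_of_pairing_le hpr hG
    (ae_restrict_of_forall_mem hsn fun x hx => hx.2)
    fun φ hφ => enorm_setIntegral_conj_mul_le_of_pairing_le hpr.symm.pos H hsn hφ

end Duality

section Embedding

variable {d : ℕ} {k p : ℝ}

theorem two_mul_mul_half_sub_one_div_nonneg (d : ℕ) (hp : 2 ≤ p) :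
    0 ≤ 2 * d * (1 / 2 - 1 / p) :=
  mul_nonneg (by positivity) (sub_nonneg.2 (one_div_le_one_div_of_le two_pos hp))

theorem exists_eLpNorm'_besselh_one_neg_le (hd : 1 ≤ d) (hp : 2 ≤ p)
    (hk : 2 * d * (1 / 2 - 1 / p) ≤ k) :
    ∃ C : ℝ≥0, ∀ u : E d → ℂ, Continuous u → Integrable u → Integrable (FT d u) →
      eLpNorm' (besselh d 1 (-k) u) p volume ≤ C * eLpNorm' (stft d u) p volume := by
  have hk0 : 0 ≤ k := (two_mul_mul_half_sub_one_div_nonneg d hp).trans hk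
  obtain ⟨r, hpr⟩ : ∃ r, p.HolderConjugate r := ⟨_, .conjExponent (by linarith)⟩
  suffices hpair : ∃ C : ℝ≥0, ∀ φ u : E d → ℂ, Integrable φ → Continuous u → Integrable u →
      Integrable (FT d u) → ‖∫ x, conj (φ x) * besselh d 1 (-k) u x‖ₑ ≤
        C * eLpNorm' (stft d u) p volume * eLpNorm' φ r volume by
    obtain ⟨C, hC⟩ := hpair
    exact ⟨C, fun u hc hu hFT => eLpNorm'_le_of_pairing_le hpr
      (continuous_besselh_one_neg hk0 hFT).measurable fun φ hφ => hC φ u hφ hc hu hFT⟩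
  rcases hp.eq_or_lt with rfl | hp2
  · obtain rfl : r = 2 := hpr.conjugate_eq.trans (by norm_num)
    obtain ⟨C, hC⟩ := exists_enorm_integral_conj_mul_besselh_one_neg_le_two d hk0
    refine ⟨C, fun φ u hφ hc hu hFT => hC φ u hφ hu ?_ hFT⟩
    simpa using memLp_of_integrable_FT hc hu hFT one_le_two
  · have hinv : 1 / r = 1 - 1 / p := by
      have := hpr.inv_add_inv_eq_one
      rw [one_div, one_div]
      linarith
    have hr2 : r < 2 := by
      refine lt_of_one_div_lt_one_div two_pos ?_
      linarith [one_div_lt_one_div_of_lt two_pos hp2]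
    obtain ⟨C, hC⟩ := exists_enorm_integral_conj_mul_besselh_one_neg_le hd hpr hr2
      (k := k) (hk.trans_eq' (by linear_combination -2 * d * hinv))
    exact ⟨C, fun φ u hφ _ hu hFT => hC φ u hφ hu hFT⟩

theorem integral_norm_rpow_rpow_eq_toReal {α F : Type*} [MeasurableSpace α] {μ : Measure α}
    [NormedAddCommGroup F] {f : α → F} (hf : AEStronglyMeasurable f μ) (hp : 0 ≤ p) :
    (∫ x, ‖f x‖ ^ p ∂μ) ^ (1 / p) = (eLpNorm' f p μ).toReal := by
  rw [eLpNorm'_eq_lintegral_enorm, ← ENNReal.toReal_rpow,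
    integral_eq_lintegral_of_nonneg_ae (ae_of_all _ fun x => by positivity)
      (hf.norm.aemeasurable.pow_const p).aestronglyMeasurable]
  simp only [← ENNReal.ofReal_rpow_of_nonneg (norm_nonneg _) hp, ofReal_norm]

theorem exists_integral_norm_stft_besselh_one_neg_rpow_le (hd : 1 ≤ d) (hp : 2 ≤ p)
    (hk : 2 * d * (1 / 2 - 1 / p) ≤ k) :
    ∃ C > (0 : ℝ), ∀ u : E d → ℂ, Continuous u → Integrable u → Integrable (FT d u) →
      (∫ z : P d, ‖stft d u z‖ ^ p) ^ (1 / p) ≤ C * (∫ x, ‖u x‖ ^ p) ^ (1 / p) ∧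
      (∫ x, ‖besselh d 1 (-k) u x‖ ^ p) ^ (1 / p) ≤
        C * (∫ z : P d, ‖stft d u z‖ ^ p) ^ (1 / p) := by
  have hp0 : 0 < p := by linarith
  have hk0 : 0 ≤ k := (two_mul_mul_half_sub_one_div_nonneg d hp).trans hk
  obtain ⟨C₁, h₁⟩ := exists_eLpNorm'_gaussSTFT_le (d := d) one_half_pos hp
  obtain ⟨C₂, h₂⟩ := exists_eLpNorm'_besselh_one_neg_le hd hp hk
  refine ⟨C₁ + C₂ + 1, by positivity, fun u hc hu hFT => ?_⟩
  have hfin : eLpNorm' u p volume ≠ ∞ := by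
    have hmem := (memLp_of_integrable_FT hc hu hFT (one_le_two.trans hp)).eLpNorm_ne_top
    rwa [eLpNorm_eq_eLpNorm' (by simpa using hp0) ENNReal.ofReal_ne_top,
      ENNReal.toReal_ofReal hp0.le] at hmem
  have hstft := h₁ u hu
  rw [← stft_eq_gaussSTFT] at hstft
  have hstft_fin : eLpNorm' (stft d u) p volume ≠ ∞ := ne_top_of_le_ne_top (by finiteness) hstft
  have hstft_cont : Continuous (stft d u) :=
    stft_eq_gaussSTFT u ▸ continuous_gaussSTFT one_half_pos.le hu
  rw [integral_norm_rpow_rpow_eq_toReal hc.aestronglyMeasurable hp0.le,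
    integral_norm_rpow_rpow_eq_toReal hstft_cont.aestronglyMeasurable hp0.le,
    integral_norm_rpow_rpow_eq_toReal (continuous_besselh_one_neg hk0 hFT).aestronglyMeasurable
      hp0.le]
  constructor
  · calc (eLpNorm' (stft d u) p volume).toReal
        ≤ C₁ * (eLpNorm' u p volume).toReal := by
          simpa using ENNReal.toReal_mono (by finiteness) hstft
      _ ≤ (C₁ + C₂ + 1) * (eLpNorm' u p volume).toReal := by
          gcongr
          linarith [C₂.coe_nonneg]
  · calc (eLpNorm' (besselh d 1 (-k) u) p volume).toReal
        ≤ C₂ * (eLpNorm' (stft d u) p volume).toReal := by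
          simpa using ENNReal.toReal_mono (by finiteness) (h₂ u hc hu hFT)
      _ ≤ (C₁ + C₂ + 1) * (eLpNorm' (stft d u) p volume).toReal := by
          gcongr
          linarith [C₁.coe_nonneg]

end Embedding

section Scaling

variable {d : ℕ} {h p R : ℝ} {u : E d → ℂ}

theorem integral_comp_smul_of_pos {F : Type*} [NormedAddCommGroup F] [NormedSpace ℝ F]
    (hR : 0 < R) (f : E d → F) : ∫ x, f (R • x) = (R ^ d)⁻¹ • ∫ x, f x := by
  rw [Measure.integral_comp_smul, finrank_euclideanSpace_fin, abs_of_pos (by positivity)]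

theorem FT_const_mul_comp_smul (c : ℂ) (hR : 0 < R) (u : E d → ℂ) (ξ : E d) :
    FT d (fun x => c * u (R • x)) ξ = c * (((R ^ d)⁻¹ : ℝ) : ℂ) * FT d u (R⁻¹ • ξ) := by
  have hsubst := integral_comp_smul_of_pos hR
    fun y : E d => Complex.exp (-Complex.I * (⟪y, R⁻¹ • ξ⟫ : ℂ)) * u y
  simp only [real_inner_smul_left, real_inner_smul_right, inv_mul_cancel_left₀ hR.ne',
    Complex.real_smul] at hsubst
  simp only [FT, real_inner_smul_right]
  rw [mul_assoc, ← hsubst, ← integral_const_mul]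
  simp only [mul_left_comm]

theorem besselh_one_const_mul_comp_smul (k : ℝ) (c : ℂ) (hR : 0 < R) (u : E d → ℂ) (x : E d) :
    besselh d 1 k (fun x => c * u (R • x)) x = c * besselh d (R ^ 2) k u (R • x) := by
  have hsubst := integral_comp_smul_of_pos (inv_pos.2 hR) fun η : E d =>
    Complex.exp (Complex.I * (⟪R • x, η⟫ : ℂ)) *
      (((1 + R ^ 2 * ‖η‖ ^ 2) ^ (k / 2) : ℝ) : ℂ) * FT d u η
  simp only [real_inner_smul_left, real_inner_smul_right, inv_mul_cancel_left₀ hR.ne',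
    norm_smul, norm_inv, Real.norm_of_nonneg hR.le, mul_pow, inv_pow,
    mul_inv_cancel_left₀ (pow_pos hR 2).ne', inv_inv, Complex.real_smul] at hsubst
  have hRd : ((R ^ d : ℝ) : ℂ) ≠ 0 := by exact_mod_cast (pow_pos hR d).ne'
  simp only [besselh, real_inner_smul_left, one_mul, FT_const_mul_comp_smul c hR,
    mul_left_comm _ (c * (((R ^ d)⁻¹ : ℝ) : ℂ)), integral_const_mul, hsubst]
  rw [Complex.ofReal_inv]
  field_simp

theorem FT_dil (hh : 0 < h) (u : E d → ℂ) :
    FT d (dil d h u) = fun ξ => (h ^ ((d : ℝ) / 4) : ℝ) *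
      ((((h ^ (1 / 2 : ℝ)) ^ d)⁻¹ : ℝ) : ℂ) * FT d u ((h ^ (1 / 2 : ℝ))⁻¹ • ξ) :=
  funext fun ξ => FT_const_mul_comp_smul _ (by positivity) u ξ

theorem besselh_one_dil (hh : 0 < h) (k : ℝ) (u : E d → ℂ) :
    besselh d 1 k (dil d h u) = dil d h (besselh d h k u) := by
  ext x
  refine (besselh_one_const_mul_comp_smul k _ (by positivity) u x).trans ?_
  rw [dil, ← Real.rpow_mul_natCast hh.le]
  norm_num

theorem continuous_dil (h : ℝ) (hc : Continuous u) : Continuous (dil d h u) :=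
  continuous_const.mul (hc.comp (continuous_const_smul _))

theorem integrable_dil (hh : 0 < h) (hu : Integrable u) : Integrable (dil d h u) :=
  (hu.comp_smul (by positivity)).const_mul _

theorem integrable_FT_dil (hh : 0 < h) (hFT : Integrable (FT d u)) :
    Integrable (FT d (dil d h u)) := by
  rw [FT_dil hh]
  exact (hFT.comp_smul (by positivity)).const_mul _

theorem integral_norm_dil_rpow (hh : 0 < h) (hp : 0 < p) (u : E d → ℂ) :
    (∫ x, ‖dil d h u x‖ ^ p) ^ (1 / p) =
      h ^ ((d : ℝ) * (1 / 2 - 1 / p) / 2) * (∫ x, ‖u x‖ ^ p) ^ (1 / p) := by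
  have hnorm : ∀ x, ‖dil d h u x‖ ^ p =
      (h ^ ((d : ℝ) / 4)) ^ p * ‖u ((h ^ (1 / 2 : ℝ)) • x)‖ ^ p := fun x => by
    rw [dil, norm_mul, Complex.norm_of_nonneg (by positivity),
      Real.mul_rpow (by positivity) (norm_nonneg _)]
  simp only [hnorm]
  rw [integral_const_mul, integral_comp_smul_of_pos (by positivity) fun x => ‖u x‖ ^ p,
    smul_eq_mul, ← mul_assoc, Real.mul_rpow (by positivity) (by positivity)]
  congr 1
  rw [← Real.rpow_mul hh.le, ← Real.rpow_mul_natCast hh.le, ← Real.rpow_neg hh.le,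
    ← Real.rpow_add hh, ← Real.rpow_mul hh.le]
  congr 1
  field_simp
  ring

theorem integrable_FT_schwartz (f : SchwartzMap (E d) ℂ) : Integrable (FT d f) := by
  simp only [funext (FT_eq_fourier (f : E d → ℂ)), ← SchwartzMap.fourier_coe]
  exact (𝓕 f).integrable.comp_smul (by positivity)

end Scaling

theorem stmt10_general (d : ℕ) (hd : 1 ≤ d) (p : ℝ) (hp : 2 ≤ p)
    (k : ℝ) (hk : 2 * d * (1 / 2 - 1 / p) ≤ k) :
    ∃ C > (0 : ℝ), ∀ h : ℝ, 0 < h → ∀ f : E d → ℂ, Continuous f → Integrable f →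
      Integrable (FT d f) →
      (∫ z : P d, ‖stft d (dil d h f) z‖ ^ p) ^ (1 / p) ≤
          C * h ^ ((d : ℝ) * (1 / 2 - 1 / p) / 2) *
            (∫ x : E d, ‖f x‖ ^ p) ^ (1 / p) ∧
      (∫ x : E d, ‖besselh d h (-k) f x‖ ^ p) ^ (1 / p) ≤
          C * h ^ ((d : ℝ) * (1 / p - 1 / 2) / 2) *
            (∫ z : P d, ‖stft d (dil d h f) z‖ ^ p) ^ (1 / p) := by
  obtain ⟨C, hC0, hC⟩ := exists_integral_norm_stft_besselh_one_neg_rpow_le hd hp hk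
  refine ⟨C, hC0, fun h hh f hc hf hFT => ?_⟩
  obtain ⟨hstft, hbessel⟩ :=
    hC (dil d h f) (continuous_dil h hc) (integrable_dil hh hf) (integrable_FT_dil hh hFT)
  rw [integral_norm_dil_rpow hh (by linarith)] at hstft
  rw [besselh_one_dil hh, integral_norm_dil_rpow hh (by linarith)] at hbessel
  have hinv : h ^ ((d : ℝ) * (1 / p - 1 / 2) / 2) = (h ^ ((d : ℝ) * (1 / 2 - 1 / p) / 2))⁻¹ := by
    rw [← Real.rpow_neg hh.le]
    ring_nf
  refine ⟨by rwa [mul_assoc], ?_⟩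
  rw [hinv, mul_right_comm, ← div_eq_mul_inv, le_div_iff₀' (by positivity)]
  exact hbessel

/-- the semiclassical embeddings `L^p ↪ M^p_ℏ ↪ L^p_{-k} (scaled)` for
`2 ≤ p < ∞`, `k = 2d(1/2 - 1/p)`, with constants uniform in `0 < ℏ ≤ 1`:
`‖V_g(D_{ℏ^{-1/2}}f)‖_{L^p(ℝ^{2d})} ≤ C·ℏ^{d(1/2-1/p)/2}·‖f‖_{L^p}` and
`‖(1-ℏΔ)^{-k/2}f‖_{L^p} ≤ C·ℏ^{d(1/p-1/2)/2}·‖V_g(D_{ℏ^{-1/2}}f)‖_{L^p(ℝ^{2d})}`. -/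
theorem stmt10 (d : ℕ) (hd : 1 ≤ d) (p : ℝ) (hp : 2 ≤ p)
    (k : ℝ) (hk : k = 2 * d * (1 / 2 - 1 / p)) :
    ∃ C > (0 : ℝ), ∀ h : ℝ, 0 < h → h ≤ 1 → ∀ f : SchwartzMap (E d) ℂ,
      (∫ z : P d, ‖stft d (dil d h (⇑f)) z‖ ^ p) ^ (1 / p) ≤
          C * h ^ ((d : ℝ) * (1 / 2 - 1 / p) / 2) *
            (∫ x : E d, ‖f x‖ ^ p) ^ (1 / p) ∧
      (∫ x : E d, ‖besselh d h (-k) (⇑f) x‖ ^ p) ^ (1 / p) ≤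
          C * h ^ ((d : ℝ) * (1 / p - 1 / 2) / 2) *
            (∫ z : P d, ‖stft d (dil d h (⇑f)) z‖ ^ p) ^ (1 / p) := by
  obtain ⟨C, hC0, hC⟩ := stmt10_general d hd p hp k hk.ge
  exact ⟨C, hC0, fun h hh _ f => hC h hh f f.continuous f.integrable (integrable_FT_schwartz f)⟩
end
end

section
/- Let d ≥ 1 and m > 2d a real number. Let T₁ : 𝒮(ℝ^d) → 𝒮′(ℝ^d) and T₂ : 𝒮(ℝ^d) → 𝒮(ℝ^d) be continuous linear operators and 0 < ℏ ≤ 1. Let χ₁ : ℝ^{2d} → ℝ^{2d} be a Lipschitz bijection with Lipschitz constant L > 0 which preserves Lebesgue measure, and χ₂ : ℝ^{2d} → ℝ^{2d} any map. Suppose that the rescaled operators T_{i,ℏ} = D_{ℏ^{−1/2}} ∘ T_i ∘ D_{ℏ^{1/2}} satisfy |⟨T_{1,ℏ}(π(z)g), π(w)g⟩| ≤ A₁·(1+|w−χ₁(z)|²)^{−m/2} and |⟨T_{2,ℏ}(π(z)g), π(w)g⟩| ≤ A₂·(1+|w−χ₂(z)|²)^{−m/2} for all z, w ∈ ℝ^{2d},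 with A₁, A₂ ≥ 0. Then there exists a constant C > 0, depending only on m, d and L (not on ℏ), such that the rescaling of the composition satisfies |⟨D_{ℏ^{−1/2}}(T₁(T₂(D_{ℏ^{1/2}}(π(z)g)))), π(w)g⟩| ≤ C·A₁·A₂·(1+|w−χ₁(χ₂(z))|²)^{−m/2} for all z, w ∈ ℝ^{2d}. -/
open MeasureTheory Complex Real
open scoped ENNReal RealInnerProductSpace

noncomputable section

/-- The Schwartz space `𝒮(ℝ^d)` of complex valued functions. -/
abbrev SCH (d : ℕ) : Type := SchwartzMap (E d) ℂ

/-- Square of the Euclidean norm on the phase space `ℝ^{2d}`. -/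
def ensq {d : ℕ} (z : P d) : ℝ := ‖z.1‖ ^ 2 + ‖z.2‖ ^ 2

/-! Pairing against the wave packets `π(z)g` turns a Schwartz function `u` into its short-time
Fourier transform, and Fourier inversion in the frequency variable reconstructs `u`, up to the
factor `(2π)^n ∫ γ g`, as the superposition of the packets `π(z)g` weighted by that transform. The
integral converges in the Schwartz topology, so `T₁` may be applied under it: the wave packet matrix
of a composition is the product of the two matrices, an integral over phase space.

Convolving `⟨z⟩ ^ (-m)` with itself reproduces it up to a constant, because `m` exceeds the
dimension `2n` of phase space. The Lipschitz bound replaces `⟨z - b⟩ ^ (-m)` by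
`⟨χ₁ z - χ₁ b⟩ ^ (-m)`, after which `χ₁` is removed from the integral since it preserves the
measure. The dilations are unitary, so dilating the intermediate function back leaves its pairings
unchanged, and the constant does not see `ℏ`. -/

open scoped SchwartzMap BoundedContinuousFunction

section JapaneseDecay

variable {W : Type*} [NormedAddCommGroup W] {m L : ℝ}

/-- The weight `⟨x⟩ ^ (-m)`, where `⟨x⟩ = (1 + ‖x‖ ^ 2) ^ (1 / 2)` is the Japanese bracket. It
measures the off-diagonal decay of wave packet matrices. -/
def japaneseDecay (m : ℝ) (x : W) : ℝ := (1 + ‖x‖ ^ 2) ^ (-(m / 2))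

lemma japaneseDecay_pos (m : ℝ) (x : W) : 0 < japaneseDecay m x :=
  rpow_pos_of_pos (by positivity) _

lemma japaneseDecay_le_one (hm : 0 ≤ m) (x : W) : japaneseDecay m x ≤ 1 :=
  rpow_le_one_of_one_le_of_nonpos (by nlinarith [sq_nonneg ‖x‖]) (by linarith)

lemma japaneseDecay_sub_comm (m : ℝ) (x y : W) :
    japaneseDecay m (x - y) = japaneseDecay m (y - x) := by
  rw [japaneseDecay, norm_sub_rev, japaneseDecay]

lemma continuous_japaneseDecay (m : ℝ) : Continuous (japaneseDecay m : W → ℝ) :=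
  (continuous_const.add (continuous_norm.pow 2)).rpow_const fun x =>
    .inl (by positivity : 0 < 1 + ‖x‖ ^ 2).ne'

lemma nonneg_of_norm_le_mul_japaneseDecay {F : Type*} [SeminormedAddCommGroup F] {a : F} {A : ℝ}
    {x : W} (h : ‖a‖ ≤ A * japaneseDecay m x) : 0 ≤ A :=
  nonneg_of_mul_nonneg_left ((norm_nonneg a).trans h) (japaneseDecay_pos m x)

lemma japaneseDecay_le_of_norm_le {W' : Type*} [NormedAddCommGroup W'] (hm : 0 ≤ m) {x : W}
    {y : W'} (h : ‖y‖ ≤ L * ‖x‖) :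
    japaneseDecay m x ≤ (1 + L ^ 2) ^ (m / 2) * japaneseDecay m y := by
  have hsq : ‖y‖ ^ 2 ≤ L ^ 2 * ‖x‖ ^ 2 := by
    simpa [mul_pow] using pow_le_pow_left₀ (norm_nonneg y) h 2
  have hle : 1 + ‖y‖ ^ 2 ≤ (1 + L ^ 2) * (1 + ‖x‖ ^ 2) := by
    nlinarith [sq_nonneg L, sq_nonneg ‖x‖]
  rw [japaneseDecay, japaneseDecay, rpow_neg (by positivity), rpow_neg (by positivity),
    ← div_eq_mul_inv, inv_le_comm₀ (by positivity) (by positivity), inv_div,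
    div_le_iff₀' (by positivity), ← mul_rpow (by positivity) (by positivity)]
  gcongr

-- Whichever of `x`, `y` is longer has norm at least `‖x + y‖ / 2`.
lemma japaneseDecay_mul_le (hm : 0 ≤ m) (x y : W) :
    japaneseDecay m x * japaneseDecay m y ≤
      (1 + 2 ^ 2) ^ (m / 2) * japaneseDecay m (x + y) *
        (japaneseDecay m x + japaneseDecay m y) := by
  have hadd := norm_add_le x y
  have hx := japaneseDecay_pos m x
  have hy := japaneseDecay_pos m y
  have hxy := japaneseDecay_pos m (x + y)
  rcases le_total ‖x‖ ‖y‖ with h | h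
  · rw [mul_comm]
    gcongr
    · exact japaneseDecay_le_of_norm_le hm (by linarith)
    · exact le_add_of_nonneg_right hy.le
  · gcongr
    · exact japaneseDecay_le_of_norm_le hm (by linarith)
    · exact le_add_of_nonneg_left hx.le

variable [NormedSpace ℝ W] [FiniteDimensional ℝ W] [MeasurableSpace W] [BorelSpace W]
  {μ : Measure W} [μ.IsAddHaarMeasure]

lemma integrable_japaneseDecay (hm : (Module.finrank ℝ W : ℝ) < m) :
    Integrable (japaneseDecay m : W → ℝ) μ := by
  have h := integrable_rpow_neg_one_add_norm_sq (μ := μ) hm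
  rwa [neg_div] at h

lemma integrable_japaneseDecay_sub_mul_japaneseDecay_sub (hm : (Module.finrank ℝ W : ℝ) < m)
    (a b : W) :
    Integrable (fun x => japaneseDecay m (x - b) * japaneseDecay m (a - x)) μ := by
  have hm₀ : 0 ≤ m := (Nat.cast_nonneg _).trans hm.le
  refine ((integrable_japaneseDecay hm).comp_sub_right b).mul_bdd (c := 1)
    (((continuous_japaneseDecay m).comp (continuous_const.sub continuous_id)).aestronglyMeasurable)
    (.of_forall fun x => ?_)
  rw [Real.norm_of_nonneg (japaneseDecay_pos m _).le]
  exact japaneseDecay_le_one hm₀ _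

lemma integral_japaneseDecay_sub_mul_japaneseDecay_sub_le (hm : (Module.finrank ℝ W : ℝ) < m)
    (a b : W) :
    ∫ x, japaneseDecay m (x - b) * japaneseDecay m (a - x) ∂μ ≤
      2 * (1 + 2 ^ 2) ^ (m / 2) * (∫ x : W, japaneseDecay m x ∂μ) * japaneseDecay m (a - b) := by
  have hm₀ : 0 ≤ m := (Nat.cast_nonneg _).trans hm.le
  have hb : Integrable (fun x => japaneseDecay m (x - b)) μ :=
    (integrable_japaneseDecay hm).comp_sub_right b
  have ha : Integrable (fun x => japaneseDecay m (x - a)) μ :=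
    (integrable_japaneseDecay hm).comp_sub_right a
  calc ∫ x, japaneseDecay m (x - b) * japaneseDecay m (a - x) ∂μ
      ≤ ∫ x, (1 + 2 ^ 2) ^ (m / 2) * japaneseDecay m (a - b) *
          (japaneseDecay m (x - b) + japaneseDecay m (x - a)) ∂μ := by
        refine integral_mono (integrable_japaneseDecay_sub_mul_japaneseDecay_sub hm a b)
          ((hb.add ha).const_mul _) fun x => ?_
        simpa [japaneseDecay_sub_comm m a x] using japaneseDecay_mul_le hm₀ (x - b) (a - x)
    _ = 2 * (1 + 2 ^ 2) ^ (m / 2) * (∫ x : W, japaneseDecay m x ∂μ) * japaneseDecay m (a - b) := by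
        rw [integral_const_mul, integral_add hb ha, integral_sub_right_eq_self (japaneseDecay m),
          integral_sub_right_eq_self (japaneseDecay m)]
        ring

section MeasurePreserving

variable {X W' : Type*} [MeasurableSpace X] [NormedAddCommGroup W'] [MeasurableSpace W']
  [BorelSpace W'] {ν : Measure X} {χ : X → W} {τ : X → W'} {b : W'} {c : W}

lemma integrable_and_integral_japaneseDecay_mul_comp_le (hm : (Module.finrank ℝ W : ℝ) < m)
    (hτ : Measurable τ) (hχ : MeasurePreserving χ ν μ)
    (hlip : ∀ x, ‖χ x - c‖ ≤ L * ‖τ x - b‖) (a : W) :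
    Integrable (fun x => japaneseDecay m (τ x - b) * japaneseDecay m (a - χ x)) ν ∧
    ∫ x, japaneseDecay m (τ x - b) * japaneseDecay m (a - χ x) ∂ν ≤
      (1 + L ^ 2) ^ (m / 2) * (2 * (1 + 2 ^ 2) ^ (m / 2) * (∫ y : W, japaneseDecay m y ∂μ)) *
        japaneseDecay m (a - c) := by
  have hm₀ : 0 ≤ m := (Nat.cast_nonneg _).trans hm.le
  let k : W → ℝ := fun y => japaneseDecay m (y - c) * japaneseDecay m (a - y)
  have hk : Integrable k μ := integrable_japaneseDecay_sub_mul_japaneseDecay_sub hm a c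
  have hkχ : Integrable (fun x => (1 + L ^ 2) ^ (m / 2) * k (χ x)) ν :=
    (hχ.integrable_comp_of_integrable hk).const_mul _
  have hle (x : X) : japaneseDecay m (τ x - b) * japaneseDecay m (a - χ x) ≤
      (1 + L ^ 2) ^ (m / 2) * k (χ x) := by
    rw [← mul_assoc]
    exact mul_le_mul_of_nonneg_right (japaneseDecay_le_of_norm_le hm₀ (hlip x))
      (japaneseDecay_pos m _).le
  have hmeas : Measurable fun x => japaneseDecay m (τ x - b) * japaneseDecay m (a - χ x) :=
    ((continuous_japaneseDecay m).measurable.comp (hτ.sub_const b)).mul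
      ((continuous_japaneseDecay m).measurable.comp (hχ.measurable.const_sub a))
  have hint : Integrable (fun x => japaneseDecay m (τ x - b) * japaneseDecay m (a - χ x)) ν := by
    refine hkχ.mono' hmeas.aestronglyMeasurable (.of_forall fun x => ?_)
    rw [Real.norm_of_nonneg (mul_pos (japaneseDecay_pos m _) (japaneseDecay_pos m _)).le]
    exact hle x
  refine ⟨hint, ?_⟩
  calc ∫ x, japaneseDecay m (τ x - b) * japaneseDecay m (a - χ x) ∂ν
      ≤ ∫ x, (1 + L ^ 2) ^ (m / 2) * k (χ x) ∂ν := integral_mono hint hkχ hle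
    _ = (1 + L ^ 2) ^ (m / 2) * ∫ y, k y ∂μ := by
        rw [integral_const_mul, ← hχ.map_eq, integral_map hχ.aemeasurable]
        rw [hχ.map_eq]
        exact hk.aestronglyMeasurable
    _ ≤ _ := by
        rw [mul_assoc]
        gcongr
        exact integral_japaneseDecay_sub_mul_japaneseDecay_sub_le hm a c

end MeasurePreserving

end JapaneseDecay

section WeakIntegral

set_option maxSynthPendingDepth 3

lemma exists_clm_comp_eq_of_norm_le {𝕜 S B : Type*} [RCLike 𝕜] [AddCommGroup S] [Module 𝕜 S]
    [NormedAddCommGroup B] [NormedSpace 𝕜 B] {K : S →ₗ[𝕜] B} {ℓ : S →ₗ[𝕜] 𝕜} {C : ℝ}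
    (h : ∀ f, ‖ℓ f‖ ≤ C * ‖K f‖) : ∃ Λ : B →L[𝕜] 𝕜, ∀ f, Λ (K f) = ℓ f := by
  have hker : LinearMap.ker K ≤ LinearMap.ker ℓ := fun f hf => by
    simpa [LinearMap.mem_ker.1 hf] using h f
  let Λ₀ : LinearMap.range K →ₗ[𝕜] 𝕜 :=
    ((LinearMap.ker K).liftQ ℓ hker) ∘ₗ K.quotKerEquivRange.symm.toLinearMap
  have hΛ₀ (f : S) : Λ₀ (K.rangeRestrict f) = ℓ f := by
    have : K.quotKerEquivRange.symm (K.rangeRestrict f) = (LinearMap.ker K).mkQ f :=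
      (LinearEquiv.symm_apply_eq _).2 rfl
    simp [Λ₀, this]
  obtain ⟨Λ, hΛ, -⟩ := exists_extension_norm_eq (LinearMap.range K)
    (Λ₀.mkContinuous C (by rintro ⟨_, f, rfl⟩; exact (hΛ₀ f).symm ▸ h f))
  exact ⟨Λ, fun f => (hΛ (K.rangeRestrict f)).trans (hΛ₀ f)⟩

variable {V : Type*} [NormedAddCommGroup V] [NormedSpace ℝ V]

/-- The bounded continuous function `x ↦ ‖x‖ ^ k • D^n f x` attached to a Schwartz function `f`;
its supremum norm is the Schwartz seminorm of index `(k, n)`. -/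
def weightedDeriv (k n : ℕ) : 𝓢(V, ℂ) →ₗ[ℂ] V →ᵇ (V [×n]→L[ℝ] ℂ) where
  toFun f := BoundedContinuousFunction.ofNormedAddCommGroup
    (fun x => ‖x‖ ^ k • iteratedFDeriv ℝ n f x)
    ((continuous_norm.pow k).smul ((f.smooth n).continuous_iteratedFDeriv le_rfl))
    (SchwartzMap.seminorm ℂ k n f) fun x => by
      simpa [norm_smul] using f.le_seminorm ℂ k n x
  map_add' f g := by
    ext1 x
    have h : iteratedFDeriv ℝ n (⇑f + ⇑g) x = _ :=
      iteratedFDeriv_add_apply (f.contDiffAt n) (g.contDiffAt n)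
    simp [h, smul_add]
  map_smul' a f := by
    ext1 x
    have h : iteratedFDeriv ℝ n (a • ⇑f) x = _ :=
      iteratedFDeriv_const_smul_apply (f.contDiffAt n)
    simp [h, smul_comm a]

lemma weightedDeriv_apply (k n : ℕ) (f : 𝓢(V, ℂ)) (x : V) :
    weightedDeriv k n f x = ‖x‖ ^ k • iteratedFDeriv ℝ n f x := rfl

lemma norm_weightedDeriv (k n : ℕ) (f : 𝓢(V, ℂ)) :
    ‖weightedDeriv k n f‖ = SchwartzMap.seminorm ℂ k n f := by
  apply le_antisymm
  · refine (BoundedContinuousFunction.norm_le (apply_nonneg _ _)).2 fun x => ?_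
    simpa [weightedDeriv_apply, norm_smul] using f.le_seminorm ℂ k n x
  · refine f.seminorm_le_bound ℂ k n (norm_nonneg _) fun x => ?_
    simpa [weightedDeriv_apply, norm_smul] using (weightedDeriv k n f).norm_coe_le_norm x

lemma continuous_schwartzSeminorm (k n : ℕ) :
    Continuous fun f : 𝓢(V, ℂ) => SchwartzMap.seminorm ℂ k n f :=
  (schwartz_withSeminorms ℂ V ℂ).continuous_seminorm (k, n)

lemma continuous_weightedDeriv (k n : ℕ) :
    Continuous (weightedDeriv k n : 𝓢(V, ℂ) → V →ᵇ (V [×n]→L[ℝ] ℂ)) := by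
  refine continuous_of_continuousAt_zero (weightedDeriv k n) ?_
  rw [ContinuousAt, map_zero, tendsto_zero_iff_norm_tendsto_zero]
  simpa only [norm_weightedDeriv, map_zero] using
    (continuous_schwartzSeminorm k n).tendsto (0 : 𝓢(V, ℂ))

lemma exists_clm_weightedDeriv_eq (ℓ : 𝓢(V, ℂ) →L[ℂ] ℂ) :
    ∃ (s : Finset (ℕ × ℕ)) (Λ : ((i : s) → V →ᵇ (V [×i.1.2]→L[ℝ] ℂ)) →L[ℂ] ℂ),
      ∀ f, Λ (fun i => weightedDeriv i.1.1 i.1.2 f) = ℓ f := by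
  obtain ⟨s, C, -, hC⟩ := Seminorm.bound_of_continuous (schwartz_withSeminorms ℂ V ℂ)
    ((normSeminorm ℂ ℂ).comp ℓ.toLinearMap) (by exact ℓ.continuous.norm)
  refine ⟨s, exists_clm_comp_eq_of_norm_le
    (K := LinearMap.pi fun i : s => weightedDeriv i.1.1 i.1.2)
    (ℓ := ℓ.toLinearMap) (C := C) fun f => (hC f).trans ?_⟩
  refine mul_le_mul_of_nonneg_left (Seminorm.finset_sup_apply_le (norm_nonneg _) fun i hi => ?_) C.2
  exact (norm_weightedDeriv i.1 i.2 f).symm.trans_le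
    (norm_le_pi_norm (fun i : s => weightedDeriv i.1.1 i.1.2 f) ⟨i, hi⟩)

variable {X : Type*} [MeasurableSpace X] {μ : Measure X} {F : X → 𝓢(V, ℂ)}

lemma integrable_weightedDeriv (hF : AEStronglyMeasurable F μ) {k n : ℕ}
    (hint : Integrable (fun x => SchwartzMap.seminorm ℂ k n (F x)) μ) :
    Integrable (fun x => weightedDeriv k n (F x)) μ :=
  hint.mono' ((continuous_weightedDeriv k n).comp_aestronglyMeasurable hF)
    (.of_forall fun x => (norm_weightedDeriv k n (F x)).le)

lemma integrable_iteratedFDeriv_apply (hF : AEStronglyMeasurable F μ) {n : ℕ}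
    (hint : Integrable (fun x => SchwartzMap.seminorm ℂ 0 n (F x)) μ) (y : V) :
    Integrable (fun x => iteratedFDeriv ℝ n (F x) y) μ := by
  simpa [weightedDeriv_apply] using
    (BoundedContinuousFunction.evalCLM ℝ y).integrable_comp (integrable_weightedDeriv hF hint)

lemma integrable_fderiv_iteratedFDeriv (hF : AEStronglyMeasurable F μ) {n : ℕ}
    (hint : Integrable (fun x => SchwartzMap.seminorm ℂ 0 (n + 1) (F x)) μ) (y : V) :
    Integrable (fun x => fderiv ℝ (iteratedFDeriv ℝ n (F x)) y) μ := by
  simpa [fderiv_iteratedFDeriv] using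
    (continuousMultilinearCurryLeftEquiv ℝ (fun _ : Fin (n + 1) => V) ℂ
      ).toContinuousLinearEquiv.toContinuousLinearMap.integrable_comp
      (integrable_iteratedFDeriv_apply hF hint y)

lemma hasFDerivAt_integral_iteratedFDeriv (hF : AEStronglyMeasurable F μ)
    (hint : ∀ k n, Integrable (fun x => SchwartzMap.seminorm ℂ k n (F x)) μ) (n : ℕ) (y : V) :
    HasFDerivAt (fun y => ∫ x, iteratedFDeriv ℝ n (F x) y ∂μ)
      (∫ x, fderiv ℝ (iteratedFDeriv ℝ n (F x)) y ∂μ) y :=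
  hasFDerivAt_integral_of_dominated_of_fderiv_le
    (F' := fun y x => fderiv ℝ (iteratedFDeriv ℝ n (F x)) y) Filter.univ_mem
    (.of_forall fun y => (integrable_iteratedFDeriv_apply hF (hint 0 n) y).aestronglyMeasurable)
    (integrable_iteratedFDeriv_apply hF (hint 0 n) y)
    (integrable_fderiv_iteratedFDeriv hF (hint 0 (n + 1)) y).aestronglyMeasurable
    (.of_forall fun x y _ => norm_fderiv_iteratedFDeriv.trans_le
      ((F x).norm_iteratedFDeriv_le_seminorm ℂ (n + 1) y))
    (hint 0 (n + 1))
    (.of_forall fun x y _ => ((F x).smooth ⊤).differentiable_iteratedFDeriv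
      (by exact_mod_cast ENat.natCast_lt_top n) y |>.hasFDerivAt)

lemma iteratedFDeriv_eq_integral (hF : AEStronglyMeasurable F μ)
    (hint : ∀ k n, Integrable (fun x => SchwartzMap.seminorm ℂ k n (F x)) μ)
    {u : V → ℂ} (hu : ∀ y, u y = ∫ x, F x y ∂μ) (n : ℕ) (y : V) :
    iteratedFDeriv ℝ n u y = ∫ x, iteratedFDeriv ℝ n (F x) y ∂μ := by
  induction n generalizing y with
  | zero =>
    simp only [iteratedFDeriv_zero_eq_comp, Function.comp_apply, hu]
    exact ((continuousMultilinearCurryFin0 ℝ V ℂ).symm.toContinuousLinearEquiv.integral_comp_comm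
      _).symm
  | succ n ih =>
    simp only [iteratedFDeriv_succ_eq_comp_left, Function.comp_apply, funext ih,
      (hasFDerivAt_integral_iteratedFDeriv hF hint n y).fderiv]
    exact ((continuousMultilinearCurryLeftEquiv ℝ (fun _ : Fin (n + 1) => V) ℂ
      ).symm.toContinuousLinearEquiv.integral_comp_comm _).symm

lemma weightedDeriv_eq_integral (hF : AEStronglyMeasurable F μ)
    (hint : ∀ k n, Integrable (fun x => SchwartzMap.seminorm ℂ k n (F x)) μ)
    {u : 𝓢(V, ℂ)} (hu : ∀ y, u y = ∫ x, F x y ∂μ) (k n : ℕ) :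
    weightedDeriv k n u = ∫ x, weightedDeriv k n (F x) ∂μ := by
  ext1 y
  have h := (BoundedContinuousFunction.evalCLM ℝ y).integral_comp_comm
    (integrable_weightedDeriv hF (hint k n))
  simp only [BoundedContinuousFunction.evalCLM_apply, weightedDeriv_apply, integral_smul] at h
  rw [← h, weightedDeriv_apply, iteratedFDeriv_eq_integral hF hint hu]

-- By Hahn-Banach `ℓ` factors through the Banach spaces in which the `weightedDeriv k n` take
-- values, and there Bochner integrals commute with continuous functionals.
theorem schwartz_clm_apply_eq_integral (hF : AEStronglyMeasurable F μ)
    (hint : ∀ k n, Integrable (fun x => SchwartzMap.seminorm ℂ k n (F x)) μ)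
    {u : 𝓢(V, ℂ)} (hu : ∀ y, u y = ∫ x, F x y ∂μ) (ℓ : 𝓢(V, ℂ) →L[ℂ] ℂ) :
    ℓ u = ∫ x, ℓ (F x) ∂μ := by
  obtain ⟨s, Λ, hΛ⟩ := exists_clm_weightedDeriv_eq ℓ
  have hI : ∀ i : s, Integrable (fun x => weightedDeriv i.1.1 i.1.2 (F x)) μ := fun i =>
    integrable_weightedDeriv hF (hint _ _)
  simp only [← hΛ]
  rw [Λ.integral_comp_comm (Integrable.of_eval hI)]
  congr 1
  ext1 i
  rw [eval_integral hI, weightedDeriv_eq_integral hF hint hu]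

end WeakIntegral

section Translation

open Filter Topology

lemma one_add_norm_le_mul_one_add_norm_sub {V : Type*} [SeminormedAddCommGroup V] (x y : V) :
    1 + ‖x‖ ≤ (1 + ‖y‖) * (1 + ‖x - y‖) := by
  have h : ‖x‖ ≤ ‖y‖ + ‖x - y‖ := by simpa using norm_add_le y (x - y)
  nlinarith [mul_nonneg (norm_nonneg y) (norm_nonneg (x - y))]

variable {V : Type*} [NormedAddCommGroup V] [NormedSpace ℝ V]

/-- Translation `f ↦ f (· - x)` on the Schwartz space. -/
abbrev translation (x : V) : 𝓢(V, ℂ) →L[ℂ] 𝓢(V, ℂ) := SchwartzMap.compSubConstCLM ℂ x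

/-- The seminorm `2 ^ k * sup_{i ≤ k, j ≤ n} p_{i,j}` on the Schwartz space, where `p_{i,j}` are the
standard seminorms. It dominates `(1 + ‖y‖) ^ k * ‖D^n f y‖`. -/
def weightedSeminorm (k n : ℕ) : Seminorm ℂ 𝓢(V, ℂ) :=
  (2 : NNReal) ^ k • (Finset.Iic (k, n)).sup (schwartzSeminormFamily ℂ V ℂ)

lemma continuous_weightedSeminorm (k n : ℕ) :
    Continuous (weightedSeminorm k n : Seminorm ℂ 𝓢(V, ℂ)) :=
  (Seminorm.continuous_finsetSup fun i _ =>
    (schwartz_withSeminorms ℂ V ℂ).continuous_seminorm i).const_smul _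

lemma one_add_norm_pow_mul_norm_iteratedFDeriv_le (k n : ℕ) (f : 𝓢(V, ℂ)) (y : V) :
    (1 + ‖y‖) ^ k * ‖iteratedFDeriv ℝ n f y‖ ≤ weightedSeminorm k n f :=
  SchwartzMap.one_add_le_sup_seminorm_apply (𝕜 := ℂ) (m := (k, n)) le_rfl le_rfl f y

lemma norm_pow_mul_norm_iteratedFDeriv_sub_le (k n : ℕ) (f : 𝓢(V, ℂ)) (x y : V) :
    ‖y‖ ^ k * ‖iteratedFDeriv ℝ n f (y - x)‖ ≤ (1 + ‖x‖) ^ k * weightedSeminorm k n f := by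
  have hy : ‖y‖ ≤ (1 + ‖x‖) * (1 + ‖y - x‖) := by
    linarith [one_add_norm_le_mul_one_add_norm_sub y x]
  calc ‖y‖ ^ k * ‖iteratedFDeriv ℝ n f (y - x)‖
      ≤ ((1 + ‖x‖) * (1 + ‖y - x‖)) ^ k * ‖iteratedFDeriv ℝ n f (y - x)‖ := by gcongr
    _ = (1 + ‖x‖) ^ k * ((1 + ‖y - x‖) ^ k * ‖iteratedFDeriv ℝ n f (y - x)‖) := by
      rw [mul_pow, mul_assoc]
    _ ≤ (1 + ‖x‖) ^ k * weightedSeminorm k n f := by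
      gcongr
      exact one_add_norm_pow_mul_norm_iteratedFDeriv_le k n f _

lemma iteratedFDeriv_translation (n : ℕ) (f : 𝓢(V, ℂ)) (x y : V) :
    iteratedFDeriv ℝ n (translation x f) y = iteratedFDeriv ℝ n f (y - x) :=
  iteratedFDeriv_comp_sub n x y

lemma seminorm_translation_le (k n : ℕ) (f : 𝓢(V, ℂ)) (x : V) :
    SchwartzMap.seminorm ℂ k n (translation x f) ≤ (1 + ‖x‖) ^ k * weightedSeminorm k n f := by
  refine SchwartzMap.seminorm_le_bound ℂ k n _ (by positivity) fun y => ?_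
  rw [iteratedFDeriv_translation]
  exact norm_pow_mul_norm_iteratedFDeriv_sub_le k n f x y

lemma exists_seminorm_translation_le {p : Seminorm ℂ 𝓢(V, ℂ)} (hp : Continuous p) :
    ∃ (N : ℕ) (q : Seminorm ℂ 𝓢(V, ℂ)), Continuous q ∧
      ∀ x f, p (translation x f) ≤ (1 + ‖x‖) ^ N * q f := by
  obtain ⟨s, C, -, hC⟩ := Seminorm.bound_of_continuous (schwartz_withSeminorms ℂ V ℂ) p hp
  refine ⟨s.sup Prod.fst, C • s.sup fun i => weightedSeminorm i.1 i.2,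
    (Seminorm.continuous_finsetSup fun i _ =>
      continuous_weightedSeminorm i.1 i.2).const_smul _, fun x f => (hC _).trans ?_⟩
  simp only [smul_apply, NNReal.smul_def, smul_eq_mul]
  rw [mul_left_comm]
  refine mul_le_mul_of_nonneg_left (Seminorm.finset_sup_apply_le (by positivity) fun i hi => ?_) C.2
  refine (seminorm_translation_le i.1 i.2 f x).trans ?_
  gcongr
  · linarith [norm_nonneg x]
  · exact Finset.le_sup (f := Prod.fst) hi
  · exact Seminorm.le_finset_sup_apply (p := fun i : ℕ × ℕ => weightedSeminorm i.1 i.2) hi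

set_option maxSynthPendingDepth 3 in
lemma seminorm_translation_sub_le (k n : ℕ) (f : 𝓢(V, ℂ)) (x : V) :
    SchwartzMap.seminorm ℂ k n (translation x f - f) ≤
      (1 + ‖x‖) ^ k * weightedSeminorm k (n + 1) f * ‖x‖ := by
  refine SchwartzMap.seminorm_le_bound ℂ k n _ (by positivity) fun y => ?_
  have hsub : iteratedFDeriv ℝ n (translation x f - f) y =
      iteratedFDeriv ℝ n f (y - x) - iteratedFDeriv ℝ n f y := by
    rw [← iteratedFDeriv_translation]
    exact iteratedFDeriv_sub_apply ((translation x f).contDiffAt n) (f.contDiffAt n)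
  have hD : Differentiable ℝ (iteratedFDeriv ℝ n f) :=
    (f.smooth ⊤).differentiable_iteratedFDeriv (by exact_mod_cast ENat.natCast_lt_top n)
  have hderiv : ∀ v ∈ Metric.closedBall y ‖x‖,
      ‖fderiv ℝ (fun v => ‖y‖ ^ k • iteratedFDeriv ℝ n f v) v‖ ≤
        (1 + ‖x‖) ^ k * weightedSeminorm k (n + 1) f := fun v hv => by
    have hv' : ‖y - v‖ ≤ ‖x‖ := by rwa [← mem_closedBall_iff_norm']
    rw [fderiv_fun_const_smul (hD v), norm_smul, norm_pow, norm_norm, norm_fderiv_iteratedFDeriv]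
    refine (by simpa using norm_pow_mul_norm_iteratedFDeriv_sub_le k (n + 1) f (y - v) y :
      ‖y‖ ^ k * ‖iteratedFDeriv ℝ (n + 1) f v‖ ≤ _).trans ?_
    gcongr
  have hmean := (convex_closedBall y ‖x‖).norm_image_sub_le_of_norm_fderiv_le
    (fun v _ => (hD v).fun_const_smul _) hderiv (Metric.mem_closedBall_self (norm_nonneg x))
    (y := y - x) (by simp)
  rw [hsub]
  simpa [← smul_sub, norm_smul] using hmean

lemma continuous_translation :
    Continuous fun p : V × 𝓢(V, ℂ) => translation p.1 p.2 := by
  rw [continuous_iff_continuousAt]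
  rintro ⟨x₀, f₀⟩
  refine ((schwartz_withSeminorms ℂ V ℂ).tendsto_nhds _ _).2 fun ⟨k, n⟩ ε hε => ?_
  obtain ⟨N, q, hq, hle⟩ := exists_seminorm_translation_le
    ((schwartz_withSeminorms ℂ V ℂ).continuous_seminorm (k, n))
  let f₁ := translation x₀ f₀
  let B : V × 𝓢(V, ℂ) → ℝ := fun p => (1 + ‖p.1‖) ^ N * q (p.2 - f₀) +
    (1 + ‖p.1 - x₀‖) ^ k * weightedSeminorm k (n + 1) f₁ * ‖p.1 - x₀‖
  have hB : Continuous B := by fun_prop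
  have hB₀ : B (x₀, f₀) < ε := by simpa [B] using hε
  filter_upwards [hB.continuousAt.eventually (gt_mem_nhds hB₀)] with ⟨x, f⟩ hlt
  have hsplit : translation x f - f₁ =
      translation x (f - f₀) + (translation (x - x₀) f₁ - f₁) := by
    ext y
    simp [f₁]
  rw [hsplit]
  exact ((map_add_le_add _ _ _).trans
    (add_le_add (hle x _) (seminorm_translation_sub_le k n f₁ (x - x₀)))).trans_lt hlt

end Translation

section WavePacket

open scoped FourierTransform

variable {V : Type*} [NormedAddCommGroup V] [InnerProductSpace ℝ V] [FiniteDimensional ℝ V]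
  [MeasurableSpace V] [BorelSpace V]

/-- Modulation `f ↦ e^{i ⟨·, ξ⟩} f` on the Schwartz space, encoded as translation by `ξ / 2π` on the
Fourier side so that it inherits the estimates for translations. -/
def modulation (ξ : V) : 𝓢(V, ℂ) →L[ℂ] 𝓢(V, ℂ) :=
  FourierTransform.fourierInvCLM ℂ 𝓢(V, ℂ) ∘L translation ((2 * π)⁻¹ • ξ) ∘L
    FourierTransform.fourierCLM ℂ 𝓢(V, ℂ)

lemma fourier_modulation (ξ : V) (f : 𝓢(V, ℂ)) :
    𝓕 (modulation ξ f) = translation ((2 * π)⁻¹ • ξ) (𝓕 f) :=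
  FourierTransform.fourier_fourierInv_eq _

lemma modulation_apply (ξ : V) (f : 𝓢(V, ℂ)) (y : V) :
    modulation ξ f y = cexp (I * ⟪y, ξ⟫) * f y := by
  have h := congrFun (VectorFourier.fourierIntegral_comp_add_right fourierChar volume (-innerₗ V)
    (𝓕 f : 𝓢(V, ℂ)) (-((2 * π)⁻¹ • ξ))) y
  have hinv (F : 𝓢(V, ℂ)) : 𝓕⁻ F y =
      VectorFourier.fourierIntegral fourierChar volume (-innerₗ V) F y := by
    rw [SchwartzMap.fourierInv_coe]; rfl
  have htrans : ⇑(translation ((2 * π)⁻¹ • ξ) (𝓕 f)) =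
      ⇑(𝓕 f : 𝓢(V, ℂ)) ∘ fun v => v + -((2 * π)⁻¹ • ξ) := by
    ext v
    simp [sub_eq_add_neg]
  have hphase : 2 * π * ((2 * π)⁻¹ * ⟪y, ξ⟫) = ⟪y, ξ⟫ := by field_simp
  calc modulation ξ f y = 𝓕⁻ (translation ((2 * π)⁻¹ • ξ) (𝓕 f)) y := rfl
    _ = fourierChar ((2 * π)⁻¹ * ⟪y, ξ⟫) • 𝓕⁻ (𝓕 f) y := by
      rw [hinv, hinv, htrans]
      simpa [real_inner_smul_left, real_inner_comm] using h
    _ = cexp (I * ⟪y, ξ⟫) * f y := by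
      rw [FourierTransform.fourierInv_fourier_eq, Circle.smul_def, Real.fourierChar_apply,
        smul_eq_mul, hphase, mul_comm I]

/-- The wave packet `π(z)g = e^{i ⟨·, ξ⟩} g (· - x)` at the point `z = (x, ξ)` of phase space. -/
def wavePacket (g : 𝓢(V, ℂ)) (z : V × V) : 𝓢(V, ℂ) := modulation z.2 (translation z.1 g)

lemma wavePacket_apply (g : 𝓢(V, ℂ)) (z : V × V) (y : V) :
    wavePacket g z y = cexp (I * ⟪y, z.2⟫) * g (y - z.1) :=
  modulation_apply z.2 _ y

lemma continuous_modulation :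
    Continuous fun p : V × 𝓢(V, ℂ) => modulation p.1 p.2 := by
  let F := FourierTransform.fourierCLM ℂ 𝓢(V, ℂ)
  have h : Continuous fun p : V × 𝓢(V, ℂ) => ((2 * π)⁻¹ • p.1, F p.2) := by fun_prop
  exact (FourierTransform.fourierInvCLM ℂ 𝓢(V, ℂ)).continuous.comp
    (continuous_translation.comp h)

lemma continuous_wavePacket (g : 𝓢(V, ℂ)) : Continuous (wavePacket g) := by
  have h : Continuous fun z : V × V => (z.2, translation z.1 g) :=
    continuous_snd.prodMk (Continuous.comp (f := fun z : V × V => (z.1, g)) continuous_translation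
      (continuous_fst.prodMk continuous_const))
  change Continuous fun z : V × V => modulation z.2 (translation z.1 g)
  simpa only [Function.comp_def] using continuous_modulation.comp h

lemma exists_seminorm_modulation_le {p : Seminorm ℂ 𝓢(V, ℂ)} (hp : Continuous p) :
    ∃ (N : ℕ) (q : Seminorm ℂ 𝓢(V, ℂ)), Continuous q ∧
      ∀ ξ f, p (modulation ξ f) ≤ (1 + ‖ξ‖) ^ N * q f := by
  obtain ⟨N, q, hq, hle⟩ := exists_seminorm_translation_le
    (p := p.comp (FourierTransform.fourierInvCLM ℂ 𝓢(V, ℂ)).toLinearMap)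
    (hp.comp (ContinuousLinearMap.continuous _))
  refine ⟨N, q.comp (FourierTransform.fourierCLM ℂ 𝓢(V, ℂ)).toLinearMap,
    hq.comp (ContinuousLinearMap.continuous _), fun ξ f => (hle _ _).trans ?_⟩
  have hξ : ‖(2 * π)⁻¹ • ξ‖ ≤ ‖ξ‖ := by
    rw [norm_smul]
    refine mul_le_of_le_one_left (norm_nonneg ξ) ?_
    rw [Real.norm_of_nonneg (by positivity)]
    exact inv_le_one_of_one_le₀ (by linarith [Real.pi_gt_three])
  gcongr
  rfl

lemma exists_seminorm_wavePacket_le {p : Seminorm ℂ 𝓢(V, ℂ)} (hp : Continuous p) (g : 𝓢(V, ℂ)) :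
    ∃ (N : ℕ) (C : ℝ), 0 ≤ C ∧ ∀ z, p (wavePacket g z) ≤ C * (1 + ‖z‖) ^ N := by
  obtain ⟨M, q, hq, hpq⟩ := exists_seminorm_modulation_le hp
  obtain ⟨N, r, -, hqr⟩ := exists_seminorm_translation_le hq
  refine ⟨M + N, r g, apply_nonneg r g, fun z => ?_⟩
  calc p (wavePacket g z) ≤ (1 + ‖z.2‖) ^ M * ((1 + ‖z.1‖) ^ N * r g) :=
        (hpq _ _).trans (by gcongr; exact hqr _ _)
    _ ≤ (1 + ‖z‖) ^ M * ((1 + ‖z‖) ^ N * r g) := by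
        gcongr
        exacts [norm_snd_le z, norm_fst_le z]
    _ = r g * (1 + ‖z‖) ^ (M + N) := by ring

end WavePacket

section ShortTimeFourier

open scoped FourierTransform

variable {V : Type*} [NormedAddCommGroup V] [InnerProductSpace ℝ V] [FiniteDimensional ℝ V]
  [MeasurableSpace V] [BorelSpace V] (g γ u f : 𝓢(V, ℂ))

/-- The short-time Fourier transform `(x, ξ) ↦ ∫ y, e^{-i ⟨y, ξ⟩} u y * γ (y - x)` of `u`. The
window `γ` is not conjugated, so that the transform is bilinear in `(γ, u)`. -/
def shortTimeFourier (z : V × V) : ℂ := ∫ y, u y * wavePacket γ (z.1, -z.2) y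

lemma continuous_shortTimeFourier : Continuous (shortTimeFourier γ u) :=
  (SchwartzMap.integralCLM ℂ volume).continuous.comp
    ((SchwartzMap.pairing (ContinuousLinearMap.mul ℂ ℂ) u).continuous.comp
      ((continuous_wavePacket γ).comp (continuous_fst.prodMk continuous_snd.neg)))

lemma exists_one_add_norm_pow_mul_integral_norm_mul_norm_sub_le (N : ℕ) :
    ∃ C, ∀ x, (1 + ‖x‖) ^ N * ∫ y, ‖u y‖ * ‖f (y - x)‖ ≤ C := by
  let r : ℕ := Module.finrank ℝ V + 1
  let B : ℝ := weightedSeminorm (N + r) 0 u * weightedSeminorm N 0 f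
  have hr : Integrable fun y : V => (1 + ‖y‖) ^ (-(r : ℝ)) :=
    integrable_one_add_norm (by simp [r])
  have hpoint (x y : V) : (1 + ‖x‖) ^ N * (‖u y‖ * ‖f (y - x)‖) ≤ B * (1 + ‖y‖) ^ (-(r : ℝ)) := by
    have hu := one_add_norm_pow_mul_norm_iteratedFDeriv_le (N + r) 0 u y
    have hf := one_add_norm_pow_mul_norm_iteratedFDeriv_le N 0 f (y - x)
    rw [norm_iteratedFDeriv_zero] at hu hf
    have hx := one_add_norm_le_mul_one_add_norm_sub x y
    rw [norm_sub_rev] at hx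
    rw [rpow_neg (by positivity), rpow_natCast, ← div_eq_mul_inv, le_div_iff₀ (by positivity)]
    calc (1 + ‖x‖) ^ N * (‖u y‖ * ‖f (y - x)‖) * (1 + ‖y‖) ^ r
        ≤ ((1 + ‖y‖) * (1 + ‖y - x‖)) ^ N * (‖u y‖ * ‖f (y - x)‖) * (1 + ‖y‖) ^ r := by gcongr
      _ = ((1 + ‖y‖) ^ (N + r) * ‖u y‖) * ((1 + ‖y - x‖) ^ N * ‖f (y - x)‖) := by
        rw [mul_pow, pow_add]; ring
      _ ≤ B := mul_le_mul hu hf (by positivity) (apply_nonneg _ _)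
  refine ⟨∫ y : V, B * (1 + ‖y‖) ^ (-(r : ℝ)), fun x => ?_⟩
  rw [← integral_const_mul]
  exact integral_mono_of_nonneg (.of_forall fun y => by positivity) (hr.const_mul B)
    (.of_forall (hpoint x))

lemma norm_shortTimeFourier_le (z : V × V) :
    ‖shortTimeFourier γ u z‖ ≤ ∫ y, ‖u y‖ * ‖γ (y - z.1)‖ := by
  refine (norm_integral_le_integral_norm _).trans_eq (integral_congr_ae (.of_forall fun y => ?_))
  simp [wavePacket_apply, mul_comm I, norm_exp_ofReal_mul_I, -ofReal_neg, -inner_neg_right]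

lemma norm_fourier_translation (x η : V) : ‖𝓕 (translation x f) η‖ = ‖𝓕 f η‖ := by
  have h := congrFun (VectorFourier.fourierIntegral_comp_add_right fourierChar volume (innerₗ V)
    f (-x)) η
  have htrans : ⇑(translation x f) = ⇑f ∘ fun v => v + -x := by
    ext v
    simp [sub_eq_add_neg]
  rw [SchwartzMap.fourier_coe, SchwartzMap.fourier_coe, htrans]
  exact (congrArg norm h).trans (Circle.norm_smul _ _)

-- By Parseval's formula the Fourier transform exchanges the roles of position and frequency.
lemma norm_shortTimeFourier_le_fourier (z : V × V) :
    ‖shortTimeFourier γ u z‖ ≤ ∫ η, ‖𝓕⁻ u η‖ * ‖𝓕 γ (η - (2 * π)⁻¹ • -z.2)‖ := by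
  have h : shortTimeFourier γ u z = ∫ η, 𝓕⁻ u η * 𝓕 (wavePacket γ (z.1, -z.2)) η := by
    rw [← SchwartzMap.integral_fourier_mul_eq, FourierTransform.fourier_fourierInv_eq,
      shortTimeFourier]
  rw [h]
  refine (norm_integral_le_integral_norm _).trans_eq (integral_congr_ae (.of_forall fun η => ?_))
  simp only [wavePacket, fourier_modulation, norm_mul, SchwartzMap.compSubConstCLM_apply,
    norm_fourier_translation]

lemma exists_one_add_norm_pow_mul_norm_shortTimeFourier_le (N : ℕ) :
    ∃ C, ∀ z, (1 + ‖z‖) ^ N * ‖shortTimeFourier γ u z‖ ≤ C := by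
  obtain ⟨C₁, hC₁⟩ := exists_one_add_norm_pow_mul_integral_norm_mul_norm_sub_le u γ N
  obtain ⟨C₂, hC₂⟩ := exists_one_add_norm_pow_mul_integral_norm_mul_norm_sub_le (𝓕⁻ u) (𝓕 γ) N
  refine ⟨max C₁ ((2 * π) ^ N * C₂), fun z => ?_⟩
  rcases max_choice ‖z.1‖ ‖z.2‖ with h | h
  · refine le_max_of_le_left (le_trans ?_ (hC₁ z.1))
    rw [Prod.norm_def, h]
    gcongr
    exact norm_shortTimeFourier_le γ u z
  · refine le_max_of_le_right (le_trans ?_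
      (mul_le_mul_of_nonneg_left (hC₂ ((2 * π)⁻¹ • -z.2)) (by positivity)))
    have hz : 1 + ‖z.2‖ ≤ 2 * π * (1 + ‖(2 * π)⁻¹ • -z.2‖) := by
      rw [norm_smul, norm_neg, norm_inv, Real.norm_of_nonneg (by positivity : 0 ≤ 2 * π), mul_add,
        mul_inv_cancel_left₀ (by positivity)]
      linarith [Real.pi_gt_three]
    rw [Prod.norm_def, h, ← mul_assoc, ← mul_pow]
    gcongr
    exact norm_shortTimeFourier_le_fourier γ u z

lemma integrable_norm_shortTimeFourier_mul_seminorm {p : Seminorm ℂ 𝓢(V, ℂ)} (hp : Continuous p) :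
    Integrable fun z => ‖shortTimeFourier γ u z‖ * p (wavePacket g z) := by
  let r : ℕ := Module.finrank ℝ (V × V) + 1
  obtain ⟨M, B, hB₀, hB⟩ := exists_seminorm_wavePacket_le hp g
  obtain ⟨C, hC⟩ := exists_one_add_norm_pow_mul_norm_shortTimeFourier_le γ u (M + r)
  have : (volume : Measure (V × V)).IsAddHaarMeasure :=
    Measure.prod.instIsAddHaarMeasure volume volume
  have hr : Integrable fun z : V × V => B * C * (1 + ‖z‖) ^ (-(r : ℝ)) :=
    (integrable_one_add_norm (by simp [r])).const_mul _
  refine hr.mono' ((continuous_shortTimeFourier γ u).norm.mul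
    (hp.comp (continuous_wavePacket g))).aestronglyMeasurable (.of_forall fun z => ?_)
  rw [Real.norm_of_nonneg (by positivity), rpow_neg (by positivity), rpow_natCast,
    ← div_eq_mul_inv, le_div_iff₀ (by positivity)]
  calc ‖shortTimeFourier γ u z‖ * p (wavePacket g z) * (1 + ‖z‖) ^ r
      ≤ ‖shortTimeFourier γ u z‖ * (B * (1 + ‖z‖) ^ M) * (1 + ‖z‖) ^ r := by gcongr; exact hB z
    _ = B * ((1 + ‖z‖) ^ (M + r) * ‖shortTimeFourier γ u z‖) := by ring
    _ ≤ B * C := by gcongr; exact hC z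

lemma integral_exp_mul_fourier_inv_two_pi_smul (y : V) :
    ∫ ξ, cexp (I * ⟪y, ξ⟫) * 𝓕 f ((2 * π)⁻¹ • ξ) = (2 * π) ^ Module.finrank ℝ V * f y := by
  let φ : V → ℂ := fun η => cexp ((2 * π * ⟪η, y⟫ : ℝ) * I) • 𝓕 f η
  have hφ (ξ : V) : cexp (I * ⟪y, ξ⟫) * 𝓕 f ((2 * π)⁻¹ • ξ) = φ ((2 * π)⁻¹ • ξ) := by
    have hphase : 2 * π * ((2 * π)⁻¹ * ⟪ξ, y⟫) = ⟪y, ξ⟫ := by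
      rw [real_inner_comm]; field_simp
    simp only [φ, real_inner_smul_left, hphase, smul_eq_mul, mul_comm I]
  have hinv : ∫ η, φ η = f y := by
    rw [← Real.fourierInv_eq', ← SchwartzMap.fourierInv_coe,
      FourierTransform.fourierInv_fourier_eq]
  simp_rw [hφ]
  rw [Measure.integral_comp_smul, hinv, inv_pow, inv_inv, abs_of_pos (by positivity),
    Complex.real_smul]
  push_cast
  rfl

lemma shortTimeFourier_eq_fourier (z : V × V) :
    shortTimeFourier γ u z = 𝓕 (SchwartzMap.pairing (ContinuousLinearMap.mul ℂ ℂ) u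
      (translation z.1 γ)) ((2 * π)⁻¹ • z.2) := by
  rw [SchwartzMap.fourier_coe, Real.fourier_eq', shortTimeFourier]
  refine integral_congr_ae (.of_forall fun y => ?_)
  have hphase : -2 * π * ((2 * π)⁻¹ * ⟪y, z.2⟫) = ⟪y, -z.2⟫ := by
    rw [inner_neg_right]; field_simp
  simp only [wavePacket_apply, real_inner_smul_right, hphase, SchwartzMap.pairing_apply_apply,
    ContinuousLinearMap.mul_apply', SchwartzMap.compSubConstCLM_apply, smul_eq_mul, mul_comm I]
  ring

theorem integral_shortTimeFourier_mul_wavePacket (y : V) :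
    ∫ z, shortTimeFourier γ u z * wavePacket g z y =
      (2 * π) ^ Module.finrank ℝ V * (∫ t, γ t * g t) * u y := by
  have hint : Integrable fun z => shortTimeFourier γ u z * wavePacket g z y := by
    refine (integrable_norm_shortTimeFourier_mul_seminorm g γ u
      (continuous_schwartzSeminorm 0 0)).mono'
      ((continuous_shortTimeFourier γ u).mul ?_).aestronglyMeasurable (.of_forall fun z => ?_)
    · simp only [wavePacket_apply]
      fun_prop
    · rw [norm_mul]
      gcongr
      exact SchwartzMap.norm_le_seminorm ℂ _ _
  have hinner (x : V) : ∫ ξ, shortTimeFourier γ u (x, ξ) * wavePacket g (x, ξ) y =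
      (2 * π) ^ Module.finrank ℝ V * u y * (γ (y - x) * g (y - x)) := by
    let φ := SchwartzMap.pairing (ContinuousLinearMap.mul ℂ ℂ) u (translation x γ)
    calc ∫ ξ, shortTimeFourier γ u (x, ξ) * wavePacket g (x, ξ) y
        = ∫ ξ, g (y - x) * (cexp (I * ⟪y, ξ⟫) * 𝓕 φ ((2 * π)⁻¹ • ξ)) := by
          congr! 2 with ξ
          rw [shortTimeFourier_eq_fourier, wavePacket_apply]
          ring
      _ = g (y - x) * ((2 * π) ^ Module.finrank ℝ V * (u y * γ (y - x))) := by
          rw [integral_const_mul, integral_exp_mul_fourier_inv_two_pi_smul]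
          rfl
      _ = _ := by ring
  rw [Measure.volume_eq_prod] at hint ⊢
  rw [integral_prod _ hint]
  simp_rw [hinner]
  rw [integral_const_mul, integral_sub_left_eq_self fun t => γ t * g t]
  ring

theorem schwartz_clm_apply_eq_integral_shortTimeFourier (ℓ : 𝓢(V, ℂ) →L[ℂ] ℂ) :
    (2 * π) ^ Module.finrank ℝ V * (∫ t, γ t * g t) * ℓ u =
      ∫ z, shortTimeFourier γ u z * ℓ (wavePacket g z) := by
  have : (uniformity 𝓢(V, ℂ)).IsCountablyGenerated :=
    IsUniformAddGroup.uniformity_countably_generated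
  have h := schwartz_clm_apply_eq_integral (μ := volume)
    (F := fun z => shortTimeFourier γ u z • wavePacket g z)
    (u := ((2 * π) ^ Module.finrank ℝ V * ∫ t, γ t * g t : ℂ) • u)
    ((continuous_shortTimeFourier γ u).smul (continuous_wavePacket g)).aestronglyMeasurable
    (fun k n => ?_) (fun y => ?_) ℓ
  · simpa using h
  · simpa only [map_smul_eq_mul] using
      integrable_norm_shortTimeFourier_mul_seminorm g γ u (continuous_schwartzSeminorm k n)
  · simpa using (integral_shortTimeFourier_mul_wavePacket g γ u y).symm

end ShortTimeFourier

section Dilation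

variable {V : Type*} [NormedAddCommGroup V]

/-- The dilation `φ ↦ |a| ^ (n / 2) * φ (a • ·)` of Schwartz functions on a real vector space of
dimension `n`, normalised to be unitary on `L²`. -/
def dilation [NormedSpace ℝ V] (a : ℝˣ) : 𝓢(V, ℂ) →L[ℂ] 𝓢(V, ℂ) :=
  ((|(a : ℝ)| ^ ((Module.finrank ℝ V : ℝ) / 2) : ℝ) : ℂ) •
    SchwartzMap.compCLMOfContinuousLinearEquiv ℂ (ContinuousLinearEquiv.smulLeft a)

lemma dilation_apply [NormedSpace ℝ V] (a : ℝˣ) (φ : 𝓢(V, ℂ)) (x : V) :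
    dilation a φ x = (|(a : ℝ)| ^ ((Module.finrank ℝ V : ℝ) / 2) : ℝ) * φ ((a : ℝ) • x) := rfl

lemma dilation_dilation_inv [NormedSpace ℝ V] (a : ℝˣ) (φ : 𝓢(V, ℂ)) :
    dilation a (dilation a⁻¹ φ) = φ := by
  ext x
  have ha : 0 < |(a : ℝ)| := abs_pos.2 a.ne_zero
  rw [dilation_apply, dilation_apply, ← mul_assoc, ← ofReal_mul, Units.val_inv_eq_inv_val, abs_inv,
    inv_rpow ha.le, mul_inv_cancel₀ (by positivity), inv_smul_smul₀ a.ne_zero, ofReal_one, one_mul]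

lemma integral_dilation_mul_dilation [InnerProductSpace ℝ V] [FiniteDimensional ℝ V]
    [MeasurableSpace V] [BorelSpace V] (a : ℝˣ) (φ ψ : 𝓢(V, ℂ)) :
    ∫ x, dilation a φ x * dilation a ψ x = ∫ x, φ x * ψ x := by
  have ha : 0 < |(a : ℝ)| := abs_pos.2 a.ne_zero
  have hpow : |(a : ℝ)| ^ ((Module.finrank ℝ V : ℝ) / 2) *
      |(a : ℝ)| ^ ((Module.finrank ℝ V : ℝ) / 2) = |(a : ℝ)| ^ Module.finrank ℝ V := by
    rw [← rpow_add ha, add_halves, rpow_natCast]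
  simp only [dilation_apply, mul_mul_mul_comm, ← ofReal_mul, hpow]
  rw [integral_const_mul, Measure.integral_comp_smul volume fun y => φ y * ψ y, abs_inv, abs_pow,
    Complex.real_smul, ← mul_assoc, ← ofReal_mul, mul_inv_cancel₀ (by positivity), ofReal_one,
    one_mul]

end Dilation

lemma integral_gaussian_mul_self_ne_zero (V : Type*) [NormedAddCommGroup V]
    [InnerProductSpace ℝ V] [FiniteDimensional ℝ V] [MeasurableSpace V] [BorelSpace V] :
    ∫ t : V, ((rexp (-‖t‖ ^ 2 / 2) : ℂ) * rexp (-‖t‖ ^ 2 / 2)) ≠ 0 := by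
  have h (t : V) : rexp (-‖t‖ ^ 2 / 2) * rexp (-‖t‖ ^ 2 / 2) = rexp (-1 * ‖t‖ ^ 2) := by
    rw [← Real.exp_add]
    congr 1
    ring
  simp only [← ofReal_mul, h]
  rw [integral_complex_ofReal, GaussianFourier.integral_rexp_neg_mul_sq_norm one_pos,
    ofReal_ne_zero]
  positivity

lemma abs_rpow_neg_one_half_rpow_half {h : ℝ} (hh : 0 < h) (r : ℝ) :
    |h ^ (-(1 : ℝ) / 2)| ^ (r / 2) = h ^ (-r / 4) := by
  rw [abs_of_pos (by positivity), ← rpow_mul hh.le]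
  congr 1
  ring

section Composition

open WithLp (toLp)

lemma one_add_norm_sq_add_norm_sq_rpow {U V : Type*} [NormedAddCommGroup U]
    [NormedAddCommGroup V] (m : ℝ) (z : U × V) :
    (1 + (‖z.1‖ ^ 2 + ‖z.2‖ ^ 2)) ^ (-(m / 2)) = japaneseDecay m (toLp 2 z) := by
  rw [japaneseDecay, WithLp.prod_norm_sq_eq_of_L2, WithLp.toLp_fst, WithLp.toLp_snd]

variable {V : Type*} [NormedAddCommGroup V] [InnerProductSpace ℝ V] [FiniteDimensional ℝ V]
  [MeasurableSpace V] [BorelSpace V] {m : ℝ}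

lemma exists_norm_clm_apply_le_of_wavePacket (hm : 2 * (Module.finrank ℝ V : ℝ) < m) (L : ℝ)
    {κ : ℂ} (hκ : κ ≠ 0) :
    ∃ C > 0, ∀ {g γ u : 𝓢(V, ℂ)} {ℓ : 𝓢(V, ℂ) →L[ℂ] ℂ} {χ : V × V → V × V} {b w : V × V}
      {A₁ A₂ : ℝ}, ∫ t, γ t * g t = κ → MeasurePreserving χ volume volume →
      (∀ z, ‖toLp 2 (χ z - χ b)‖ ≤ L * ‖toLp 2 (z - b)‖) →
      (∀ z, ‖ℓ (wavePacket g z)‖ ≤ A₁ * japaneseDecay m (toLp 2 (w - χ z))) →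
      (∀ z, ‖shortTimeFourier γ u z‖ ≤ A₂ * japaneseDecay m (toLp 2 (z - b))) →
      ‖ℓ u‖ ≤ C * A₁ * A₂ * japaneseDecay m (toLp 2 (w - χ b)) := by
  have hfin : (Module.finrank ℝ (WithLp 2 (V × V)) : ℝ) < m := by
    rwa [(WithLp.linearEquiv 2 ℝ (V × V)).finrank_eq, Module.finrank_prod, ← two_mul, Nat.cast_mul,
      Nat.cast_two]
  let K : ℝ := (1 + L ^ 2) ^ (m / 2) *
    (2 * (1 + 2 ^ 2) ^ (m / 2) * ∫ z : WithLp 2 (V × V), japaneseDecay m z)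
  have hK : 0 ≤ K := by
    have : 0 ≤ ∫ z : WithLp 2 (V × V), japaneseDecay m z :=
      integral_nonneg fun z => (japaneseDecay_pos m z).le
    positivity
  let κ' : ℂ := (2 * π) ^ Module.finrank ℝ V * κ
  have hκ' : 0 < ‖κ'‖ := norm_pos_iff.2 (mul_ne_zero (by simp [pi_ne_zero]) hκ)
  refine ⟨K / ‖κ'‖ + 1, by positivity, fun {g γ u ℓ χ b w A₁ A₂} hgγ hχ hlip hℓ hu => ?_⟩
  have hA₁ : 0 ≤ A₁ := nonneg_of_norm_le_mul_japaneseDecay (hℓ 0)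
  have hA₂ : 0 ≤ A₂ := nonneg_of_norm_le_mul_japaneseDecay (hu 0)
  have htoLp := WithLp.volume_preserving_toLp V V
  obtain ⟨hint, hle⟩ := integrable_and_integral_japaneseDecay_mul_comp_le hfin htoLp.measurable
    (htoLp.comp hχ) hlip (toLp 2 w)
  have hw := (japaneseDecay_pos m (toLp 2 (w - χ b))).le
  have hmain : ‖κ'‖ * ‖ℓ u‖ ≤ A₁ * A₂ * (K * japaneseDecay m (toLp 2 (w - χ b))) := by
    have hinv : κ' * ℓ u = ∫ z, shortTimeFourier γ u z * ℓ (wavePacket g z) := by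
      rw [← schwartz_clm_apply_eq_integral_shortTimeFourier, hgγ]
    rw [← norm_mul, hinv]
    refine (norm_integral_le_of_norm_le (hint.const_mul (A₁ * A₂))
      (.of_forall fun z => ?_)).trans ?_
    · rw [norm_mul, mul_comm A₁, mul_mul_mul_comm]
      exact mul_le_mul (hu z) (hℓ z) (norm_nonneg _) ((norm_nonneg _).trans (hu z))
    · rw [integral_const_mul]
      exact mul_le_mul_of_nonneg_left hle (mul_nonneg hA₁ hA₂)
  calc ‖ℓ u‖ ≤ A₁ * A₂ * (K * japaneseDecay m (toLp 2 (w - χ b))) / ‖κ'‖ :=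
        (le_div_iff₀' hκ').2 hmain
    _ = K / ‖κ'‖ * A₁ * A₂ * japaneseDecay m (toLp 2 (w - χ b)) := by ring
    _ ≤ _ := by gcongr; exact le_add_of_nonneg_right zero_le_one

theorem stmt13_general (hm : 2 * (Module.finrank ℝ V : ℝ) < m) (L : ℝ) {g γ : V → ℂ}
    (hgγ : ∫ t, γ t * g t ≠ 0) :
    ∃ C > (0 : ℝ), ∀ G Gbar : V × V → 𝓢(V, ℂ),
      (∀ z y, G z y = cexp (I * ⟪y, z.2⟫) * g (y - z.1)) →
      (∀ z y, Gbar z y = cexp (-I * ⟪y, z.2⟫) * γ (y - z.1)) →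
      ∀ χ₁ : V × V → V × V,
        (∀ a b, √(‖(χ₁ a - χ₁ b).1‖ ^ 2 + ‖(χ₁ a - χ₁ b).2‖ ^ 2) ≤
          L * √(‖(a - b).1‖ ^ 2 + ‖(a - b).2‖ ^ 2)) →
        MeasurePreserving χ₁ volume volume →
      ∀ (χ₂ : V × V → V × V) (a : ℝ), a ≠ 0 →
      ∀ D : 𝓢(V, ℂ) → 𝓢(V, ℂ),
        (∀ φ x, D φ x = (|a| ^ ((Module.finrank ℝ V : ℝ) / 2) : ℝ) * φ (a • x)) →
      ∀ (T₁ : 𝓢(V, ℂ) →L[ℂ] 𝓢(V, ℂ) →L[ℂ] ℂ) (T₂ : 𝓢(V, ℂ) → 𝓢(V, ℂ)) (A₁ A₂ : ℝ),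
      (∀ z w, ‖T₁ (D (G z)) (D (Gbar w))‖ ≤
        A₁ * (1 + (‖(w - χ₁ z).1‖ ^ 2 + ‖(w - χ₁ z).2‖ ^ 2)) ^ (-(m / 2))) →
      (∀ z w, ‖∫ y, T₂ (D (G z)) y * D (Gbar w) y‖ ≤
        A₂ * (1 + (‖(w - χ₂ z).1‖ ^ 2 + ‖(w - χ₂ z).2‖ ^ 2)) ^ (-(m / 2))) →
      ∀ z w, ‖T₁ (T₂ (D (G z))) (D (Gbar w))‖ ≤ C * A₁ * A₂ *
        (1 + (‖(w - χ₁ (χ₂ z)).1‖ ^ 2 + ‖(w - χ₁ (χ₂ z)).2‖ ^ 2)) ^ (-(m / 2)) := by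
  obtain ⟨C, hC, hbound⟩ := exists_norm_clm_apply_le_of_wavePacket hm L hgγ
  refine ⟨C, hC, fun G Gbar hG hGbar χ₁ hlip hχ₁ χ₂ a ha D hD T₁ T₂ A₁ A₂ hT₁ hT₂ z w => ?_⟩
  simp only [one_add_norm_sq_add_norm_sq_rpow] at hT₁ hT₂ ⊢
  have hG₀ : ∀ y, G 0 y = g y := by simp [hG]
  have hGbar₀ : ∀ y, Gbar 0 y = γ y := by simp [hGbar]
  have hGw (z : V × V) : G z = wavePacket (G 0) z := by
    ext y
    rw [wavePacket_apply, hG₀, hG]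
  have hGbarw (z : V × V) : Gbar z = wavePacket (Gbar 0) (z.1, -z.2) := by
    ext y
    simp [wavePacket_apply, hGbar₀, hGbar]
  obtain rfl : D = dilation (Units.mk0 a ha) := by
    ext φ x
    rw [hD, dilation_apply, Units.val_mk0]
  let ℓ : 𝓢(V, ℂ) →L[ℂ] ℂ :=
    { toFun φ := T₁ (dilation (Units.mk0 a ha) φ) (dilation (Units.mk0 a ha) (Gbar w))
      map_add' φ ψ := by simp
      map_smul' c φ := by simp
      cont := (continuous_eval_const _).comp (T₁.continuous.comp (dilation _).continuous) }
  let u : 𝓢(V, ℂ) := dilation (Units.mk0 a ha)⁻¹ (T₂ (dilation (Units.mk0 a ha) (G z)))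
  have hu : dilation (Units.mk0 a ha) u = T₂ (dilation (Units.mk0 a ha) (G z)) :=
    dilation_dilation_inv _ _
  rw [← hu]
  refine hbound (g := G 0) (γ := Gbar 0) (ℓ := ℓ) (by simp only [hG₀, hGbar₀]) hχ₁
    (fun z' => ?_) (fun z' => hGw z' ▸ hT₁ z' w) (fun z' => ?_)
  · simpa only [WithLp.prod_norm_eq_of_L2, WithLp.toLp_fst, WithLp.toLp_snd] using hlip z' (χ₂ z)
  · rw [shortTimeFourier, ← hGbarw, ← integral_dilation_mul_dilation (Units.mk0 a ha), hu]
    exact hT₂ z z'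

end Composition

/-- the semiclassical composition theorem: if `T₁ ∈ FIO_ℏ(χ₁)` and
`T₂ ∈ FIO_ℏ(χ₂)` (wave-packet matrices of the rescaled operators
`T_{i,ℏ} = D_{ℏ^{-1/2}} T_i D_{ℏ^{1/2}}` dominated by `A_i·⟨w - χ_i z⟩^{-m}`, `m > 2d`),
with `χ₁` a Lipschitz (constant `L`) measure preserving bijection and `χ₂` any map, then
the rescaling of `T₁ T₂` has wave-packet matrix dominated by
`C·A₁·A₂·⟨w - χ₁(χ₂ z)⟩^{-m}` with `C = C(m,d,L)` independent of `ℏ ∈ (0,1]`.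
Here `G z = π(z)g`, `Gbar z = conj (π(z)g)` (Gaussian window), `Dh` is the dilation
`D_{ℏ^{1/2}}` on Schwartz functions, so that
`⟨D_{ℏ^{-1/2}}(T₁(T₂(D_{ℏ^{1/2}} π(z)g))), π(w)g⟩ = T₁ (T₂ (Dh (G z))) (Dh (Gbar w))`. -/
theorem stmt13 (d : ℕ) (hd : 1 ≤ d) (m : ℝ) (hm : 2 * (d : ℝ) < m) (L : ℝ) (hL : 0 < L) :
    ∃ C > (0 : ℝ), ∀ (G Gbar : P d → SCH d),
      (∀ (z : P d) (y : E d), G z y =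
        Complex.exp (Complex.I * (⟪y, z.2⟫ : ℂ)) * Real.exp (-‖y - z.1‖ ^ 2 / 2)) →
      (∀ (z : P d) (y : E d), Gbar z y =
        Complex.exp (-Complex.I * (⟪y, z.2⟫ : ℂ)) * Real.exp (-‖y - z.1‖ ^ 2 / 2)) →
      ∀ (χ₁ : P d → P d), Function.Bijective χ₁ →
        (∀ a b : P d, Real.sqrt (ensq (χ₁ a - χ₁ b)) ≤ L * Real.sqrt (ensq (a - b))) →
        MeasurePreserving χ₁ volume volume →
      ∀ (χ₂ : P d → P d),
      ∀ h : ℝ, 0 < h → h ≤ 1 →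
      ∀ Dh : SCH d → SCH d,
        (∀ (φ : SCH d) (x : E d), Dh φ x =
          (h ^ (-(d : ℝ) / 4) : ℝ) * φ ((h ^ (-(1 : ℝ) / 2) : ℝ) • x)) →
      ∀ (T₁ : SCH d →L[ℂ] (SCH d →L[ℂ] ℂ)) (T₂ : SCH d →L[ℂ] SCH d) (A₁ A₂ : ℝ),
        0 ≤ A₁ → 0 ≤ A₂ →
      (∀ z w : P d, ‖T₁ (Dh (G z)) (Dh (Gbar w))‖ ≤
          A₁ * (1 + ensq (w - χ₁ z)) ^ (-(m / 2))) →
      (∀ z w : P d, ‖∫ y, T₂ (Dh (G z)) y * Dh (Gbar w) y‖ ≤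
          A₂ * (1 + ensq (w - χ₂ z)) ^ (-(m / 2))) →
      ∀ z w : P d, ‖T₁ (T₂ (Dh (G z))) (Dh (Gbar w))‖ ≤
          C * A₁ * A₂ * (1 + ensq (w - χ₁ (χ₂ z))) ^ (-(m / 2)) := by
  obtain ⟨C, hC, hbound⟩ := stmt13_general (by rwa [finrank_euclideanSpace_fin]) L
    (integral_gaussian_mul_self_ne_zero (E d))
  exact ⟨C, hC, fun G Gbar hG hGbar χ₁ _ hlip hχ₁ χ₂ h hh _ Dh hDh T₁ T₂ A₁ A₂ _ _ =>
    hbound G Gbar hG hGbar χ₁ hlip hχ₁ χ₂ (h ^ (-(1 : ℝ) / 2)) (by positivity) Dh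
      (by simpa only [abs_rpow_neg_one_half_rpow_half hh, finrank_euclideanSpace_fin] using hDh)
      T₁ T₂ A₁ A₂⟩
end
end
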